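/- arXiv:1611.02838 — 2 statements merged into one kernel-verified Lean document; each statement's English description precedes it below -/
import Mathlib

section
/- For integers n, m ≥ 3, the probability p_{n,m} that a random positive map Φ : 𝕊_n → 𝕊_m is completely positive satisfies (3√3/(2^{10}·7²·√(min(n,m))))^{D_𝓜} < p_{n,m} < (2^{12}·5²·6^{1/2}·10^{2/9}/(3³·√(min(n,m)+1)))^{D_𝓜}, where D_𝓜 = C(n+1,2)·C(m+1,2) − 1. In particular, if min(n,m) ≥ 2^{25}·5⁴·10^{4/9}/3⁵, then p_{n,m} → 0 as max(n,m) → ∞ (for every ε > 0 there is N such that p_{n,m} < ε whenever n, m ≥ 3, min(n,m) ≥ 2^{25}·5⁴·10^{4/9}/3⁵ and max(n,m) ≥ N). -/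
open MeasureTheory MvPolynomial

noncomputable section

namespace BiformPaper

/-- The weight function on the variables: the `x`-variables get weight `(1,0)` and the
`y`-variables get weight `(0,1)`. -/
def bw (n m : ℕ) : Fin n ⊕ Fin m → ℕ × ℕ := Sum.elim (fun _ => (1, 0)) (fun _ => (0, 1))

/-- The set of biforms of bidegree `(k₁, k₂)`: real polynomials in
`x = (x₁, …, xₙ)` and `y = (y₁, …, y_m)`, homogeneous of degree `k₁` in `x` and of degree
`k₂` in `y`. -/
def Biform (n m k₁ k₂ : ℕ) : Set (MvPolynomial (Fin n ⊕ Fin m) ℝ) :=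
  {f | MvPolynomial.IsWeightedHomogeneous (bw n m) f (k₁, k₂)}

/-- Evaluation of a polynomial at a point `(x, y) ∈ ℝⁿ × ℝᵐ`. -/
def beval {n m : ℕ} (f : MvPolynomial (Fin n ⊕ Fin m) ℝ) (x : Fin n → ℝ) (y : Fin m → ℝ) : ℝ :=
  eval (Sum.elim x y) f

/-- The Euclidean unit sphere `S^{n-1}` in `ℝⁿ`. -/
def unitSphere (n : ℕ) : Set (Fin n → ℝ) := {x | ∑ i, x i ^ 2 = 1}

/-- `σ` is the normalized uniform measure on the unit sphere `S^{n-1} ⊆ ℝⁿ`, i.e., the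
unique rotation-invariant Borel probability measure concentrated on the sphere. -/
structure IsSphereMeasure (n : ℕ) (σ : Measure (Fin n → ℝ)) : Prop where
  prob : IsProbabilityMeasure σ
  onSphere : σ (unitSphere n)ᶜ = 0
  invariant : ∀ Q : Matrix (Fin n) (Fin n) ℝ, Q * Q.transpose = 1 → σ.map Q.mulVec = σ

/-- The average `∫_T f dσ` of `f` over `T = S^{n-1} × S^{m-1}` (with `σ` the product of the
normalized sphere measures `σ₁`, `σ₂`). -/
def bavg {n m : ℕ} (σ₁ : Measure (Fin n → ℝ)) (σ₂ : Measure (Fin m → ℝ))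
    (f : MvPolynomial (Fin n ⊕ Fin m) ℝ) : ℝ :=
  ∫ x, ∫ y, beval f x y ∂σ₂ ∂σ₁

/-- The `L²(σ)` inner product `⟨f, g⟩ = ∫_T f·g dσ` on biforms. -/
def bip {n m : ℕ} (σ₁ : Measure (Fin n → ℝ)) (σ₂ : Measure (Fin m → ℝ))
    (f g : MvPolynomial (Fin n ⊕ Fin m) ℝ) : ℝ :=
  ∫ x, ∫ y, beval f x y * beval g x y ∂σ₂ ∂σ₁

/-- The cone `Pos^{(n,m)}_{(2k₁,2k₂)}` of nonnegative biforms of bidegree `(2k₁, 2k₂)`. -/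
def PosSet (n m k₁ k₂ : ℕ) : Set (MvPolynomial (Fin n ⊕ Fin m) ℝ) :=
  {f | f ∈ Biform n m (2 * k₁) (2 * k₂) ∧ ∀ x y, 0 ≤ beval f x y}

/-- The cone `Sq^{(n,m)}_{(2k₁,2k₂)}` of finite sums of squares of biforms of bidegree
`(k₁, k₂)`. -/
def SqSet (n m k₁ k₂ : ℕ) : Set (MvPolynomial (Fin n ⊕ Fin m) ℝ) :=
  {f | ∃ (N : ℕ) (g : Fin N → MvPolynomial (Fin n ⊕ Fin m) ℝ),
      (∀ i, g i ∈ Biform n m k₁ k₂) ∧ f = ∑ i, g i ^ 2}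

/-- The cone `Lf^{(n,m)}_{(2k₁,2k₂)}` of finite sums of products
`ℓᵢ(x)^{2k₁} · ℓ′ᵢ(y)^{2k₂}` of even powers of linear forms. -/
def LfSet (n m k₁ k₂ : ℕ) : Set (MvPolynomial (Fin n ⊕ Fin m) ℝ) :=
  {f | ∃ (N : ℕ) (a : Fin N → Fin n → ℝ) (b : Fin N → Fin m → ℝ),
      f = ∑ r, (∑ i, C (a r i) * X (Sum.inl i)) ^ (2 * k₁) *
               (∑ j, C (b r j) * X (Sum.inr j)) ^ (2 * k₂)}

/-- The biform `q = (x₁² + ⋯ + xₙ²)^{k₁} · (y₁² + ⋯ + y_m²)^{k₂}`. -/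
def qpoly (n m k₁ k₂ : ℕ) : MvPolynomial (Fin n ⊕ Fin m) ℝ :=
  (∑ i : Fin n, X (Sum.inl i) ^ 2) ^ k₁ * (∑ j : Fin m, X (Sum.inr j) ^ 2) ^ k₂

/-- The hyperplane `𝓜` of biforms of bidegree `(2k₁, 2k₂)` with average `0` on `T`. -/
def MSet (n m k₁ k₂ : ℕ) (σ₁ : Measure (Fin n → ℝ)) (σ₂ : Measure (Fin m → ℝ)) :
    Set (MvPolynomial (Fin n ⊕ Fin m) ℝ) :=
  {f | f ∈ Biform n m (2 * k₁) (2 * k₂) ∧ bavg σ₁ σ₂ f = 0}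

/-- The translated section `K̃ = {f ∈ 𝓜 : f + q ∈ K}` of a cone `K`. -/
def tilde (n m k₁ k₂ : ℕ) (σ₁ : Measure (Fin n → ℝ)) (σ₂ : Measure (Fin m → ℝ))
    (K : Set (MvPolynomial (Fin n ⊕ Fin m) ℝ)) : Set (MvPolynomial (Fin n ⊕ Fin m) ℝ) :=
  {f | f ∈ MSet n m k₁ k₂ σ₁ σ₂ ∧ f + qpoly n m k₁ k₂ ∈ K}

/-- The unit ball `B_𝓜` of `𝓜` in the `L²(σ)` norm. -/
def bball (n m k₁ k₂ : ℕ) (σ₁ : Measure (Fin n → ℝ)) (σ₂ : Measure (Fin m → ℝ)) :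
    Set (MvPolynomial (Fin n ⊕ Fin m) ℝ) :=
  {f | f ∈ MSet n m k₁ k₂ σ₁ σ₂ ∧ bip σ₁ σ₂ f f ≤ 1}

/-- `ψ : ℝ^D → Mset` is a unitary isomorphism: an injective linear map with range `Mset`
carrying the standard inner product of `ℝ^D` to the `L²(σ)` inner product.  Volumes of
Borel subsets `E` of `Mset` are computed as the Lebesgue measure of `ψ ⁻¹' E`
(by Lemma 1.1 of the paper this does not depend on the choice of `ψ`). -/
structure IsUnitaryParam (n m D : ℕ) (σ₁ : Measure (Fin n → ℝ)) (σ₂ : Measure (Fin m → ℝ))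
    (Mset : Set (MvPolynomial (Fin n ⊕ Fin m) ℝ))
    (ψ : (Fin D → ℝ) →ₗ[ℝ] MvPolynomial (Fin n ⊕ Fin m) ℝ) : Prop where
  inj : Function.Injective ψ
  range : Set.range ψ = Mset
  ip : ∀ a b : Fin D → ℝ, bip σ₁ σ₂ (ψ a) (ψ b) = ∑ i, a i * b i

/-- The apolar inner product `⟨r, s⟩_d = D_r(s)` on biforms, where `D_r` is the
differential operator obtained from `r` by replacing each variable by the corresponding
partial derivative; its value on a pair of forms of the same bidegree is
`∑_α r_α · s_α · α!`. -/
def apolar {n m : ℕ} (r s : MvPolynomial (Fin n ⊕ Fin m) ℝ) : ℝ :=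
  ∑ α ∈ r.support, coeff α r * coeff α s * α.prod fun _ k => (k.factorial : ℝ)

end BiformPaper

open Metric Set in
/-- Maximal packings: finitely many translates of `U` indexed by points of `S` exhaust `S`. -/
theorem exists_maximal_packing {α E : Type*} [NormedAddCommGroup E] [MeasurableSpace E]
    [BorelSpace E] (μ : Measure E) [μ.IsAddHaarMeasure]
    (S : Set α) (b : α → E) (U W : Set E) (hU : MeasurableSet U) (hU0 : μ U ≠ 0) (hW : μ W ≠ ⊤)
    (hbU : ∀ s ∈ S, ∀ u ∈ U, b s + u ∈ W) :
    ∃ T : Finset α, (∀ t ∈ T, t ∈ S) ∧ (T.card : ENNReal) * μ U ≤ μ W ∧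
      ∀ s ∈ S, ∃ t ∈ T, ∃ u ∈ U, ∃ u' ∈ U, b s + u = b t + u' := by
  classical
  have hcard : ∀ T : Finset α, (∀ t ∈ T, t ∈ S) →
      (T : Set α).PairwiseDisjoint (fun t => (fun v => b t + v) '' U) →
      (T.card : ENNReal) * μ U ≤ μ W := by
    intro T hT hd
    have hmeas : ∀ t ∈ T, MeasurableSet ((fun v => b t + v) '' U) := fun t _ =>
      (MeasurableEquiv.addLeft (b t)).measurableSet_image.2 hU
    have h1 : μ (⋃ t ∈ T, (fun v => b t + v) '' U) = (T.card : ENNReal) * μ U := by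
      rw [measure_biUnion_finset hd hmeas]
      simp [Finset.sum_const]
    rw [← h1]
    refine measure_mono ?_
    intro x hx
    simp only [mem_iUnion, mem_image] at hx
    obtain ⟨t, ht, u, hu, rfl⟩ := hx
    exact hbU t (hT t ht) u hu
  by_contra hcon
  push Not at hcon
  have hex : ∀ k : ℕ, ∃ T : Finset α, T.card = k ∧ (∀ t ∈ T, t ∈ S) ∧
      (T : Set α).PairwiseDisjoint (fun t => (fun v => b t + v) '' U) := by
    intro k
    induction k with
    | zero => exact ⟨∅, by simp⟩
    | succ k ih =>
      obtain ⟨T, hTk, hTS, hTd⟩ := ih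
      obtain ⟨s, hs, hst⟩ := hcon T hTS (hcard T hTS hTd)
      have hUne : U.Nonempty := by
        by_contra h
        rw [not_nonempty_iff_eq_empty] at h
        exact hU0 (by simp [h])
      obtain ⟨u₀, hu₀⟩ := hUne
      have hsT : s ∉ T := fun h => hst s h u₀ hu₀ u₀ hu₀ rfl
      refine ⟨insert s T, by simp [hsT, hTk], ?_, ?_⟩
      · intro t ht
        rcases Finset.mem_insert.1 ht with rfl | h
        · exact hs
        · exact hTS t h
      · rw [Finset.coe_insert]
        refine hTd.insert fun t ht _ => ?_
        rw [Set.disjoint_left]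
        rintro _ ⟨u, hu, rfl⟩ ⟨u', hu', h⟩
        exact hst t ht u hu u' hu' h.symm
  obtain ⟨k, hk⟩ := ENNReal.exists_nat_mul_gt hU0 hW
  obtain ⟨T, hTk, hTS, hTd⟩ := hex k
  have := hcard T hTS hTd
  rw [hTk] at this
  exact absurd this (not_le.2 hk)

open Metric in
/-- A `1/4`-net of the unit ball with at most `9 ^ d` elements. -/
theorem exists_quarter_net (E : Type*) [NormedAddCommGroup E] [NormedSpace ℝ E]
    [FiniteDimensional ℝ E] :
    ∃ N : Finset E, (∀ p ∈ N, ‖p‖ ≤ 1) ∧ N.card ≤ 9 ^ Module.finrank ℝ E ∧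
      ∀ x : E, ‖x‖ ≤ 1 → ∃ p ∈ N, ‖x - p‖ ≤ 1 / 4 := by
  let _ : MeasurableSpace E := borel E
  have : BorelSpace E := ⟨rfl⟩
  let μ : Measure E := Measure.addHaar
  obtain ⟨N, hN, hcard, hcov⟩ := exists_maximal_packing μ {x : E | ‖x‖ ≤ 1} id
    (closedBall 0 (1 / 8)) (closedBall 0 (9 / 8)) measurableSet_closedBall
    (measure_closedBall_pos μ 0 (by norm_num)).ne' measure_closedBall_lt_top.ne (by
      intro s hs u hu
      simp only [mem_closedBall, dist_zero_right, Set.mem_ofPred_eq, id] at *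
      linarith [norm_add_le s u])
  refine ⟨N, hN, ?_, ?_⟩
  · rw [Measure.addHaar_closedBall μ 0 (by norm_num : (0 : ℝ) ≤ 1 / 8),
      Measure.addHaar_closedBall μ 0 (by norm_num : (0 : ℝ) ≤ 9 / 8), ← mul_assoc] at hcard
    have hb := (measure_ball_pos μ (0 : E) one_pos).ne'
    rw [ENNReal.mul_le_mul_iff_left hb measure_ball_lt_top.ne] at hcard
    set d := Module.finrank ℝ E
    have h9 : ENNReal.ofReal ((9 / 8 : ℝ) ^ d) = 9 ^ d * ENNReal.ofReal ((1 / 8 : ℝ) ^ d) := by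
      rw [show (9 : ENNReal) = ENNReal.ofReal 9 by norm_num, ← ENNReal.ofReal_pow (by norm_num),
        ← ENNReal.ofReal_mul (by positivity), ← mul_pow]
      norm_num
    rw [h9, ENNReal.mul_le_mul_iff_left (by simp) ENNReal.ofReal_ne_top] at hcard
    exact_mod_cast hcard
  · intro x hx
    obtain ⟨p, hp, u, hu, u', hu', h⟩ := hcov x hx
    refine ⟨p, hp, ?_⟩
    simp only [mem_closedBall, dist_zero_right, id] at *
    have : x - p = u' - u := by rw [sub_eq_sub_iff_add_eq_add, h, add_comm]
    rw [this]
    linarith [norm_sub_le u' u]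

/-- A linear functional is controlled by its values on a `1/4`-net. -/
theorem abs_le_of_quarter_net {E : Type*} [NormedAddCommGroup E] [NormedSpace ℝ E]
    [FiniteDimensional ℝ E] {N : Finset E}
    (hN : ∀ x : E, ‖x‖ ≤ 1 → ∃ p ∈ N, ‖x - p‖ ≤ 1 / 4) (φ : E →ₗ[ℝ] ℝ) {c : ℝ}
    (hc : ∀ p ∈ N, |φ p| ≤ c) (x : E) : |φ x| ≤ 4 / 3 * c * ‖x‖ := by
  set f : E →L[ℝ] ℝ := LinearMap.toContinuousLinearMap φ with hf
  have hfφ : ∀ x, f x = φ x := fun _ => rfl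
  obtain ⟨p₀, hp₀, -⟩ := hN 0 (by simp)
  have hc0 : 0 ≤ c := (abs_nonneg _).trans (hc p₀ hp₀)
  have h1 : ‖f‖ ≤ c + ‖f‖ * (1 / 4) := by
    refine ContinuousLinearMap.opNorm_le_of_unit_norm (by positivity) ?_
    intro x hx
    obtain ⟨p, hp, hxp⟩ := hN x hx.le
    have : f x = φ p + f (x - p) := by rw [map_sub, hfφ p]; ring
    rw [this, Real.norm_eq_abs]
    refine (abs_add_le _ _).trans (add_le_add (hc p hp) ?_)
    exact (f.le_opNorm _).trans (mul_le_mul_of_nonneg_left hxp (norm_nonneg _))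
  have h2 : ‖f‖ ≤ 4 / 3 * c := by linarith
  exact (f.le_opNorm x).trans (mul_le_mul_of_nonneg_right h2 (norm_nonneg _))

open Metric in
/-- Most of the unit ball lies in the slabs `|φ_i| ≤ t`. -/
theorem measure_ball_slabs {E : Type*} [NormedAddCommGroup E] [InnerProductSpace ℝ E]
    [FiniteDimensional ℝ E] [MeasurableSpace E] [BorelSpace E] (μ : Measure E)
    [μ.IsAddHaarMeasure] {Λ : Type*} [Fintype Λ] (φ : Λ → E →ₗ[ℝ] ℝ)
    (hφ : ∀ i z, |φ i z| ≤ ‖z‖) {t : ℝ} (ht : 0 ≤ t)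
    (hcard : 4 * (Fintype.card Λ : ℝ) ≤ Real.exp (Module.finrank ℝ E * t ^ 2 / 2)) :
    μ (closedBall 0 1) ≤ 2 * μ {z : E | ‖z‖ ≤ 1 ∧ ∀ i, |φ i z| ≤ t} := by
  set d := Module.finrank ℝ E
  have hcap : ∀ ψ : E →ₗ[ℝ] ℝ, (∀ z, |ψ z| ≤ ‖z‖) →
      μ {z : E | ‖z‖ ≤ 1 ∧ t ≤ ψ z} ≤
        ENNReal.ofReal (Real.exp (-(d * t ^ 2 / 2))) * μ (closedBall 0 1) := by
    intro ψ hψ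
    set f : E →L[ℝ] ℝ := LinearMap.toContinuousLinearMap ψ with hf
    set u := (InnerProductSpace.toDual ℝ E).symm f with hu
    have hfu : ∀ z, inner ℝ u z = ψ z := fun z => by
      rw [hu, InnerProductSpace.toDual_symm_apply]; rfl
    have hu1 : ‖u‖ ≤ 1 := by
      rw [hu, LinearIsometryEquiv.norm_map]
      exact ContinuousLinearMap.opNorm_le_bound _ zero_le_one fun z => by
        rw [one_mul]; exact hψ z
    have hsub : {z : E | ‖z‖ ≤ 1 ∧ t ≤ ψ z} ⊆ closedBall (t • u) (Real.exp (-(t ^ 2 / 2))) := by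
      rintro z ⟨hz, htz⟩
      rw [mem_closedBall, dist_eq_norm]
      refine abs_le_of_sq_le_sq' ?_ (Real.exp_pos _).le |>.2
      have h1 : ‖z - t • u‖ ^ 2 = ‖z‖ ^ 2 - 2 * (t * ψ z) + t ^ 2 * ‖u‖ ^ 2 := by
        rw [norm_sub_sq_real, inner_smul_right, real_inner_comm, hfu, norm_smul, mul_pow]
        simp
      have h2 : Real.exp (-(t ^ 2 / 2)) ^ 2 = Real.exp (-t ^ 2) := by
        rw [← Real.exp_nat_mul]; congr 1; push_cast; ring
      have h3 : ‖u‖ ^ 2 ≤ 1 := by nlinarith [norm_nonneg u]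
      have h4 : ‖z‖ ^ 2 ≤ 1 := by nlinarith [norm_nonneg z]
      have h5 := Real.add_one_le_exp (-t ^ 2)
      rw [h1, h2]
      nlinarith [mul_le_mul_of_nonneg_left htz ht, mul_le_mul_of_nonneg_left h3 (sq_nonneg t)]
    refine (measure_mono hsub).trans ?_
    rw [Measure.addHaar_closedBall' μ _ (Real.exp_pos _).le, ← Real.exp_nat_mul]
    refine le_of_eq ?_
    congr 3
    ring
  have hcover : closedBall (0 : E) 1 ⊆ {z : E | ‖z‖ ≤ 1 ∧ ∀ i, |φ i z| ≤ t} ∪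
      ⋃ i : Λ, ({z : E | ‖z‖ ≤ 1 ∧ t ≤ φ i z} ∪ {z : E | ‖z‖ ≤ 1 ∧ t ≤ (-φ i) z}) := by
    intro z hz
    rw [mem_closedBall, dist_zero_right] at hz
    by_cases h : ∀ i, |φ i z| ≤ t
    · exact Or.inl ⟨hz, h⟩
    · push Not at h
      obtain ⟨i, hi⟩ := h
      refine Or.inr (Set.mem_iUnion.2 ⟨i, ?_⟩)
      rcases lt_abs.1 hi with h | h
      · exact Or.inl ⟨hz, h.le⟩
      · exact Or.inr ⟨hz, by simpa using h.le⟩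
  set e := ENNReal.ofReal (Real.exp (-(d * t ^ 2 / 2)))
  have hB : μ (closedBall (0 : E) 1) ≠ ⊤ := measure_closedBall_lt_top.ne
  have h1 : μ (closedBall (0 : E) 1) ≤ μ {z : E | ‖z‖ ≤ 1 ∧ ∀ i, |φ i z| ≤ t} +
      (Fintype.card Λ : ENNReal) * (2 * e) * μ (closedBall (0 : E) 1) := by
    refine (measure_mono hcover).trans ((measure_union_le _ _).trans ?_)
    gcongr
    refine (measure_iUnion_fintype_le _ _).trans ?_
    refine (Finset.sum_le_sum (g := fun _ => 2 * e * μ (closedBall (0 : E) 1)) fun i _ => ?_).trans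
      ?_
    · refine (measure_union_le _ _).trans ?_
      rw [two_mul, add_mul]
      exact add_le_add (hcap _ (hφ i)) (hcap _ fun z => by simpa using hφ i z)
    · simp [Finset.sum_const, mul_assoc]
  have h2 : (Fintype.card Λ : ENNReal) * (2 * e) ≤ ENNReal.ofReal (1 / 2) := by
    rw [show (2 : ENNReal) = ENNReal.ofReal 2 by norm_num, ← ENNReal.ofReal_mul (by norm_num),
      ← ENNReal.ofReal_natCast, ← ENNReal.ofReal_mul (by positivity)]
    refine ENNReal.ofReal_le_ofReal ?_
    rw [Real.exp_neg, ← div_eq_mul_inv, mul_div_assoc', div_le_iff₀ (Real.exp_pos _)]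
    linarith
  have h3 := h1.trans (add_le_add_right (mul_le_mul_left h2 _) _)
  have hfin : μ {z : E | ‖z‖ ≤ 1 ∧ ∀ i, |φ i z| ≤ t} ≠ ⊤ :=
    ne_top_of_le_ne_top hB (measure_mono fun z hz => by simpa using hz.1)
  generalize μ {z : E | ‖z‖ ≤ 1 ∧ ∀ i, |φ i z| ≤ t} = b at *
  generalize μ (closedBall (0 : E) 1) = a at *
  lift a to NNReal using hB
  lift b to NNReal using hfin
  have h4 : (a : ℝ) ≤ b + 1 / 2 * a := by
    have := ENNReal.toReal_mono (by finiteness) h3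
    rw [ENNReal.toReal_add (by finiteness) (by finiteness), ENNReal.toReal_mul] at this
    rw [ENNReal.toReal_ofReal (by norm_num)] at this
    simpa using this
  have h5 : (a : ℝ) ≤ 2 * b := by linarith
  exact_mod_cast h5

/-- A `1/4`-net of the Euclidean unit ball of `κ → ℝ` controls linear functionals. -/
theorem exists_linear_net (κ : Type*) [Fintype κ] :
    ∃ N : Finset (κ → ℝ), (∀ p ∈ N, ∑ k, p k ^ 2 ≤ 1) ∧ N.card ≤ 9 ^ Fintype.card κ ∧
      ∀ (a : κ → ℝ) (c : ℝ), (∀ p ∈ N, |∑ k, a k * p k| ≤ c) →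
        ∀ x : κ → ℝ, |∑ k, a k * x k| ≤ 4 / 3 * c * √(∑ k, x k ^ 2) := by
  classical
  obtain ⟨N, hN, hcard, hnet⟩ := exists_quarter_net (EuclideanSpace ℝ κ)
  refine ⟨N.image (fun p : EuclideanSpace ℝ κ => WithLp.ofLp p), ?_, ?_, ?_⟩
  · intro p hp
    obtain ⟨p', hp', rfl⟩ := Finset.mem_image.1 hp
    rw [← EuclideanSpace.real_norm_sq_eq]
    have := hN p' hp'
    nlinarith [norm_nonneg p']
  · refine Finset.card_image_le.trans (hcard.trans ?_)
    rw [finrank_euclideanSpace]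
  · intro a c hc x
    let φ : EuclideanSpace ℝ κ →ₗ[ℝ] ℝ :=
      { toFun := fun z => ∑ k, a k * z k
        map_add' := fun z w => by simp [mul_add, Finset.sum_add_distrib]
        map_smul' := fun r z => by simp [Finset.mul_sum, mul_left_comm] }
    have := abs_le_of_quarter_net hnet φ (c := c)
      (fun p hp => hc p (Finset.mem_image_of_mem _ hp)) (WithLp.toLp 2 x)
    rw [EuclideanSpace.norm_eq] at this
    simpa [φ] using this

/-- Nets control bilinear forms. -/
theorem bilin_le_of_net {κ κ' : Type*} [Fintype κ] [Fintype κ']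
    {N : Finset (κ → ℝ)} {N' : Finset (κ' → ℝ)}
    (hN : ∀ (a : κ → ℝ) (c : ℝ), (∀ p ∈ N, |∑ k, a k * p k| ≤ c) →
        ∀ x : κ → ℝ, |∑ k, a k * x k| ≤ 4 / 3 * c * √(∑ k, x k ^ 2))
    (hN' : ∀ (a : κ' → ℝ) (c : ℝ), (∀ p ∈ N', |∑ k, a k * p k| ≤ c) →
        ∀ x : κ' → ℝ, |∑ k, a k * x k| ≤ 4 / 3 * c * √(∑ k, x k ^ 2))
    (B : κ → κ' → ℝ) {c : ℝ}
    (hc : ∀ p ∈ N, ∀ q ∈ N', |∑ k, ∑ l, B k l * p k * q l| ≤ c) (x : κ → ℝ) (y : κ' → ℝ) :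
    |∑ k, ∑ l, B k l * x k * y l| ≤ 16 / 9 * c * (√(∑ k, x k ^ 2) * √(∑ l, y l ^ 2)) := by
  have h1 : ∀ p ∈ N, |∑ k, (∑ l, B k l * y l) * p k| ≤ 4 / 3 * c * √(∑ l, y l ^ 2) := by
    intro p hp
    have h := hN' (fun l => ∑ k, B k l * p k) c (fun q hq => by
      refine le_of_eq_of_le ?_ (hc p hp q hq)
      rw [Finset.sum_comm]; simp only [Finset.sum_mul]) y
    refine le_of_eq_of_le ?_ h
    simp only [Finset.sum_mul]
    rw [Finset.sum_comm]
    congr 1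
    refine Finset.sum_congr rfl fun _ _ => Finset.sum_congr rfl fun _ _ => by ring
  have h2 := hN (fun k => ∑ l, B k l * y l) _ h1 x
  refine le_of_eq_of_le ?_ (h2.trans_eq (by ring))
  simp only [Finset.sum_mul]
  congr 1
  refine Finset.sum_congr rfl fun _ _ => Finset.sum_congr rfl fun _ _ => by ring

/-- The Frobenius norm of a product is at most operator norm times Frobenius norm. -/
theorem frobenius_mul_le {κ : Type*} [Fintype κ] (Δ M : Matrix κ κ ℝ) {c : ℝ}
    (hΔ : ∀ x y : κ → ℝ, |∑ k, ∑ l, Δ k l * x k * y l| ≤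
      c * (√(∑ k, x k ^ 2) * √(∑ l, y l ^ 2))) :
    ∑ k, ∑ l, (Δ * M) k l ^ 2 ≤ c ^ 2 * ∑ k, ∑ l, M k l ^ 2 := by
  rw [Finset.sum_comm, Finset.sum_comm (f := fun k l => M k l ^ 2), Finset.mul_sum]
  refine Finset.sum_le_sum fun j _ => ?_
  have h := hΔ (fun k => (Δ * M) k j) (fun l => M l j)
  have h1 : ∑ k, ∑ l, Δ k l * (Δ * M) k j * M l j = ∑ k, (Δ * M) k j ^ 2 := by
    refine Finset.sum_congr rfl fun k _ => ?_
    conv_rhs => rw [sq, Matrix.mul_apply, Finset.sum_mul]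
    refine Finset.sum_congr rfl fun l _ => ?_
    rw [Matrix.mul_apply]; ring
  rw [h1] at h
  have ha : 0 ≤ ∑ k, (Δ * M) k j ^ 2 := by positivity
  have hb : 0 ≤ ∑ k, M k j ^ 2 := by positivity
  rw [abs_of_nonneg ha] at h
  have hsa := Real.sq_sqrt ha
  have hsb := Real.sq_sqrt hb
  set u := √(∑ k, (Δ * M) k j ^ 2)
  set v := √(∑ k, M k j ^ 2)
  have hu : 0 ≤ u := Real.sqrt_nonneg _
  rw [← hsa, ← hsb]
  rw [← hsa] at h
  rcases hu.eq_or_lt with h0 | h0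
  · rw [← h0, sq, zero_mul]; positivity
  · have : u ≤ c * v := le_of_mul_le_mul_left (by nlinarith) h0
    rw [← mul_pow]
    gcongr

theorem gram_sub_gram_le {κ : Type*} [Fintype κ] (B C : Matrix κ κ ℝ) {c : ℝ}
    (hΔ : ∀ x y : κ → ℝ, |∑ k, ∑ l, (B - C) k l * x k * y l| ≤
      c * (√(∑ k, x k ^ 2) * √(∑ l, y l ^ 2))) :
    ∑ k, ∑ l, (B * B.transpose - C * C.transpose) k l ^ 2 ≤
      2 * c ^ 2 * (∑ k, ∑ l, B k l ^ 2 + ∑ k, ∑ l, C k l ^ 2) := by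
  have h1 := frobenius_mul_le (B - C) B.transpose hΔ
  have h2 := frobenius_mul_le (B - C) C.transpose hΔ
  rw [Finset.sum_comm (f := fun k l => B.transpose k l ^ 2)] at h1
  rw [Finset.sum_comm (f := fun k l => C.transpose k l ^ 2),
    Finset.sum_comm (f := fun k l => ((B - C) * C.transpose) k l ^ 2)] at h2
  simp only [Matrix.transpose_apply] at h1 h2
  have h3 : B * B.transpose - C * C.transpose =
      (B - C) * B.transpose + ((B - C) * C.transpose).transpose := by
    rw [Matrix.transpose_mul, Matrix.transpose_sub, Matrix.transpose_transpose, Matrix.sub_mul,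
      Matrix.mul_sub]
    abel
  rw [h3]
  have h4 : ∑ k, ∑ l, ((B - C) * B.transpose + ((B - C) * C.transpose).transpose) k l ^ 2 ≤
      ∑ k, ∑ l, (2 * ((B - C) * B.transpose) k l ^ 2 + 2 * ((B - C) * C.transpose) l k ^ 2) := by
    refine Finset.sum_le_sum fun k _ => Finset.sum_le_sum fun l _ => ?_
    rw [Matrix.add_apply, Matrix.transpose_apply]
    nlinarith [sq_nonneg (((B - C) * B.transpose) k l - ((B - C) * C.transpose) l k)]
  simp only [Finset.sum_add_distrib, ← Finset.mul_sum] at h4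
  nlinarith

open Metric in
/-- Volume bound for sets parametrized by Gram matrices of block matrices. -/
theorem measure_le_of_gram {G : Type*} [NormedAddCommGroup G] [InnerProductSpace ℝ G]
    [FiniteDimensional ℝ G] [MeasurableSpace G] [BorelSpace G] (ν : Measure G)
    [ν.IsAddHaarMeasure] (S : Set G) {β κ : Type*} [Fintype β] [Fintype κ]
    (B : G → β → Matrix κ κ ℝ) (hB : ∀ s ∈ S, ∑ b, ∑ k, ∑ l, B s b k l ^ 2 ≤ 1) {Q : ℝ}
    (hQ : 0 ≤ Q)
    (hS : ∀ s ∈ S, ∀ s' ∈ S, ‖s - s'‖ ^ 2 ≤ Q ^ 2 * ∑ b, ∑ k, ∑ l,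
      (B s b * (B s b).transpose - B s' b * (B s' b).transpose) k l ^ 2)
    {t : ℝ} (ht : 0 ≤ t)
    (hcard : 4 * (Fintype.card β * 81 ^ Fintype.card κ : ℝ) ≤
      Real.exp (Fintype.card β * Fintype.card κ ^ 2 * t ^ 2 / 2)) :
    ν S ≤ 2 * 2 ^ (Fintype.card β * Fintype.card κ ^ 2) *
      (ENNReal.ofReal (64 / 9 * Q * t) ^ Module.finrank ℝ G * ν (closedBall 0 1)) := by
  classical
  obtain ⟨N, hN1, hNc, hN⟩ := exists_linear_net κ
  let φ : β × N × N → EuclideanSpace ℝ (β × κ × κ) →ₗ[ℝ] ℝ := fun i =>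
      { toFun := fun z => ∑ k, ∑ l, z (i.1, k, l) * i.2.1.1 k * i.2.2.1 l
        map_add' := fun z w => by simp [add_mul, Finset.sum_add_distrib]
        map_smul' := fun r z => by simp [Finset.mul_sum, mul_assoc] }
  have hφ : ∀ i z, |φ i z| ≤ ‖z‖ := by
    intro i z
    refine abs_le_of_sq_le_sq ?_ (norm_nonneg _)
    have h1 : (φ i z) = ∑ x : κ × κ, z (i.1, x) * (i.2.1.1 x.1 * i.2.2.1 x.2) := by
      rw [Fintype.sum_prod_type]; simp [φ, mul_assoc]
    have h2 : ∑ x : κ × κ, (i.2.1.1 x.1 * i.2.2.1 x.2) ^ 2 ≤ 1 := by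
      have : ∑ x : κ × κ, (i.2.1.1 x.1 * i.2.2.1 x.2) ^ 2 =
          (∑ k, i.2.1.1 k ^ 2) * ∑ l, i.2.2.1 l ^ 2 := by
        rw [Finset.sum_mul_sum, Fintype.sum_prod_type]; simp [mul_pow]
      rw [this]
      exact mul_le_one₀ (hN1 _ i.2.1.2) (by positivity) (hN1 _ i.2.2.2)
    have h3 : ∑ x : κ × κ, z (i.1, x) ^ 2 ≤ ‖z‖ ^ 2 := by
      rw [EuclideanSpace.real_norm_sq_eq, Fintype.sum_prod_type (f := fun x : β × κ × κ => z x ^ 2)]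
      exact Finset.single_le_sum (f := fun b => ∑ x : κ × κ, z (b, x) ^ 2)
        (fun b _ => by positivity) (Finset.mem_univ i.1)
    rw [h1]
    refine (Finset.sum_mul_sq_le_sq_mul_sq _ _ _).trans ?_
    exact (mul_le_of_le_one_right (by positivity) h2).trans h3
  have hd : Module.finrank ℝ (EuclideanSpace ℝ (β × κ × κ)) =
      Fintype.card β * Fintype.card κ ^ 2 := by
    simp [sq]
  set d := Fintype.card β * Fintype.card κ ^ 2 with hd'
  let μ : Measure (EuclideanSpace ℝ (β × κ × κ)) := Measure.addHaar
  let U : Set (EuclideanSpace ℝ (β × κ × κ)) :=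
    {z : EuclideanSpace ℝ (β × κ × κ) | ‖z‖ ≤ 1 ∧ ∀ i, |φ i z| ≤ t}
  have hU2 : μ (closedBall 0 1) ≤ 2 * μ U := by
    refine measure_ball_slabs μ φ hφ ht ?_
    rw [hd, hd']
    push_cast
    refine le_trans ?_ hcard
    have : (N.card : ℝ) ≤ 9 ^ Fintype.card κ := by exact_mod_cast hNc
    have h81 : (81 : ℝ) ^ Fintype.card κ = 9 ^ Fintype.card κ * 9 ^ Fintype.card κ := by
      rw [← mul_pow]; norm_num
    simp only [Fintype.card_prod, Fintype.card_coe]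
    push_cast
    rw [h81]
    gcongr
  have hUm : MeasurableSet U := by
    refine IsClosed.measurableSet ?_
    have h1 : IsClosed {z : EuclideanSpace ℝ (β × κ × κ) | ‖z‖ ≤ 1} :=
      isClosed_le continuous_norm continuous_const
    have h2 : IsClosed {z : EuclideanSpace ℝ (β × κ × κ) | ∀ i, |φ i z| ≤ t} := by
      rw [Set.ofPred_forall]
      exact isClosed_iInter fun i => isClosed_le
        ((LinearMap.continuous_of_finiteDimensional (φ i)).abs) continuous_const
    exact h1.inter h2
  have hball : μ (closedBall 0 1) ≠ 0 := (measure_closedBall_pos μ 0 one_pos).ne'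
  have hU0 : μ U ≠ 0 := fun h => hball (by rw [h, mul_zero] at hU2; exact le_antisymm hU2 bot_le)
  let bf : G → EuclideanSpace ℝ (β × κ × κ) := fun s => WithLp.toLp 2 fun x => B s x.1 x.2.1 x.2.2
  have hbf : ∀ s ∈ S, ‖bf s‖ ≤ 1 := by
    intro s hs
    have h1 : ‖bf s‖ ^ 2 ≤ 1 ^ 2 := by
      rw [EuclideanSpace.real_norm_sq_eq, one_pow]
      simpa [Fintype.sum_prod_type, bf] using hB s hs
    exact le_of_sq_le_sq h1 zero_le_one
  obtain ⟨T, hTS, hTc, hT⟩ := exists_maximal_packing μ S bf U (closedBall 0 2) hUm hU0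
    measure_closedBall_lt_top.ne (by
      intro s hs u hu
      rw [mem_closedBall, dist_zero_right]
      linarith [norm_add_le (bf s) u, hbf s hs, hu.1])
  have hcardT : (T.card : ENNReal) ≤ 2 * 2 ^ d := by
    have h1 : (T.card : ENNReal) * μ (closedBall 0 1) ≤ 2 * 2 ^ d * μ (closedBall 0 1) := by
      calc (T.card : ENNReal) * μ (closedBall 0 1) ≤ T.card * (2 * μ U) := by gcongr
        _ = 2 * (T.card * μ U) := by ring
        _ ≤ 2 * μ (closedBall 0 2) := by gcongr
        _ = 2 * 2 ^ d * μ (closedBall 0 1) := by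
          rw [Measure.addHaar_closedBall' μ 0 zero_le_two, hd, ENNReal.ofReal_pow zero_le_two]
          simp [mul_assoc]
    rwa [ENNReal.mul_le_mul_iff_left hball measure_closedBall_lt_top.ne] at h1
  have hcov : S ⊆ ⋃ s ∈ T, closedBall s (64 / 9 * Q * t) := by
    intro s hs
    obtain ⟨s', hs', u, hu, u', hu', h⟩ := hT s hs
    simp only [Set.mem_iUnion]
    refine ⟨s', hs', ?_⟩
    rw [mem_closedBall, dist_eq_norm]
    refine le_of_sq_le_sq ?_ (by positivity)
    have hdiff : ∀ b k l, (B s b - B s' b) k l = u' (b, k, l) - u (b, k, l) := by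
      intro b k l
      have := congrArg (fun z : EuclideanSpace ℝ (β × κ × κ) => z (b, k, l)) h
      simp only [bf, PiLp.add_apply] at this
      rw [Matrix.sub_apply]; linarith
    have hop : ∀ b (x y : κ → ℝ), |∑ k, ∑ l, (B s b - B s' b) k l * x k * y l| ≤
        16 / 9 * (2 * t) * (√(∑ k, x k ^ 2) * √(∑ l, y l ^ 2)) := by
      intro b
      refine bilin_le_of_net hN hN _ ?_
      intro p hp q hq
      have h1 := hu.2 (b, ⟨p, hp⟩, ⟨q, hq⟩)
      have h2 := hu'.2 (b, ⟨p, hp⟩, ⟨q, hq⟩)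
      have h3 : ∑ k, ∑ l, (B s b - B s' b) k l * p k * q l =
          φ (b, ⟨p, hp⟩, ⟨q, hq⟩) u' - φ (b, ⟨p, hp⟩, ⟨q, hq⟩) u := by
        simp only [hdiff, φ, LinearMap.coe_mk, AddHom.coe_mk, sub_mul, Finset.sum_sub_distrib]
      rw [h3]
      linarith [abs_sub (φ (b, ⟨p, hp⟩, ⟨q, hq⟩) u') (φ (b, ⟨p, hp⟩, ⟨q, hq⟩) u)]
    have h5 : ∑ b, ∑ k, ∑ l,
        (B s b * (B s b).transpose - B s' b * (B s' b).transpose) k l ^ 2 ≤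
        4 * (16 / 9 * (2 * t)) ^ 2 := by
      refine (Finset.sum_le_sum fun b _ => gram_sub_gram_le _ _ (hop b)).trans ?_
      rw [← Finset.mul_sum, Finset.sum_add_distrib]
      nlinarith [hB s hs, hB s' (hTS s' hs'), sq_nonneg (16 / 9 * (2 * t))]
    refine (hS s hs s' (hTS s' hs')).trans
      ((mul_le_mul_of_nonneg_left h5 (sq_nonneg Q)).trans_eq ?_)
    ring
  refine (measure_mono hcov).trans ((measure_biUnion_finset_le _ _).trans ?_)
  simp only [Measure.addHaar_closedBall' ν _ (show 0 ≤ 64 / 9 * Q * t by positivity),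
    Finset.sum_const, nsmul_eq_mul]
  rw [ENNReal.ofReal_pow (by positivity)]
  gcongr

section
open scoped MatrixOrder ComplexOrder Matrix.Norms.L2Operator

theorem exists_eq_mul_transpose {κ : Type*} [Fintype κ] (M : Matrix κ κ ℝ)
    (hsymm : ∀ p q, M p q = M q p) (hpos : ∀ x : κ → ℝ, 0 ≤ ∑ p, ∑ q, M p q * (x p * x q)) :
    ∃ B : Matrix κ κ ℝ, M = B * B.transpose := by
  classical
  have hM : M.PosSemidef := by
    refine Matrix.PosSemidef.of_dotProduct_mulVec_nonneg ?_ ?_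
    · ext p q; simpa using hsymm q p
    · intro x
      have := hpos x
      simp only [dotProduct, Matrix.mulVec, Pi.star_apply, star_trivial, Finset.mul_sum]
      refine this.trans_eq (Finset.sum_congr rfl fun p _ => Finset.sum_congr rfl fun q _ => ?_)
      ring
  obtain ⟨B, hB⟩ := CStarAlgebra.nonneg_iff_eq_star_mul_self.mp hM.nonneg
  refine ⟨B.transpose, ?_⟩
  rw [hB, Matrix.transpose_transpose, Matrix.star_eq_conjTranspose]
  simp

end

/-- The biquadratic form of a four-index tensor. -/
def biquad {ι κ : Type*} [Fintype ι] [Fintype κ] (A : ι → ι → κ → κ → ℝ) (x : ι → ℝ)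
    (y : κ → ℝ) : ℝ :=
  ∑ i, ∑ j, ∑ k, ∑ l, A i j k l * (x i * x j * (y k * y l))

/-- The tensor of the biquadratic form `(∑ xᵢ²) (∑ yₖ²)`. -/
def idTensor (ι κ : Type*) [DecidableEq ι] [DecidableEq κ] (i j : ι) (k l : κ) : ℝ :=
  (if i = j then 1 else 0) * (if k = l then 1 else 0)

theorem biquad_add {ι κ : Type*} [Fintype ι] [Fintype κ] (A B : ι → ι → κ → κ → ℝ) (x : ι → ℝ)
    (y : κ → ℝ) : biquad (A + B) x y = biquad A x y + biquad B x y := by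
  simp [biquad, add_mul, Finset.sum_add_distrib]

theorem biquad_swap {ι κ : Type*} [Fintype ι] [Fintype κ] (A : ι → ι → κ → κ → ℝ) (x : ι → ℝ)
    (y : κ → ℝ) : biquad (fun k l i j => A i j k l) y x = biquad A x y := by
  have h : ∀ f : ι → ι → κ → κ → ℝ, ∑ k, ∑ l, ∑ i, ∑ j, f i j k l =
      ∑ i, ∑ j, ∑ k, ∑ l, f i j k l := by
    intro f
    have := Finset.sum_comm (s := Finset.univ) (t := Finset.univ)
      (f := fun (a : κ × κ) (b : ι × ι) => f b.1 b.2 a.1 a.2)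
    simpa only [Fintype.sum_prod_type] using this
  unfold biquad
  rw [h fun i j k l => A i j k l * (y k * y l * (x i * x j))]
  refine Finset.sum_congr rfl fun _ _ => Finset.sum_congr rfl fun _ _ =>
    Finset.sum_congr rfl fun _ _ => Finset.sum_congr rfl fun _ _ => by ring

theorem biquad_idTensor {ι κ : Type*} [Fintype ι] [Fintype κ] [DecidableEq ι] [DecidableEq κ]
    (x : ι → ℝ) (y : κ → ℝ) :
    biquad (idTensor ι κ) x y = (∑ i, x i ^ 2) * ∑ k, y k ^ 2 := by
  have : ∀ i j, ∑ k, ∑ l, idTensor ι κ i j k l * (x i * x j * (y k * y l)) =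
      if i = j then x i ^ 2 * ∑ k, y k ^ 2 else 0 := by
    intro i j
    split_ifs with h
    · subst h
      simp only [idTensor, if_true, one_mul, ite_mul, zero_mul, Finset.sum_ite_eq,
        Finset.mem_univ, Finset.mul_sum]
      exact Finset.sum_congr rfl fun _ _ => by ring
    · simp [idTensor, h]
  simp only [biquad, this, Finset.sum_ite_eq, Finset.mem_univ, if_true, Finset.sum_mul]

/-- A symmetric bilinear form with vanishing quadratic form vanishes. -/
theorem eq_zero_of_quad_eq_zero {ι : Type*} [Fintype ι] [DecidableEq ι] (Q : ι → ι → ℝ)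
    (hs : ∀ i j, Q i j = Q j i) (h : ∀ x : ι → ℝ, ∑ i, ∑ j, Q i j * (x i * x j) = 0) (i j : ι) :
    Q i j = 0 := by
  have h1 : ∀ i, Q i i = 0 := by
    intro i
    have := h (Pi.single i 1)
    simpa [Pi.single_apply] using this
  have h2 := h (fun a => (if a = i then 1 else 0) + (if a = j then 1 else 0))
  simp only [mul_add, Finset.sum_add_distrib, mul_ite, mul_one, mul_zero, Finset.sum_ite_eq',
    Finset.mem_univ, if_true, h1, hs j i] at h2
  linarith

theorem eq_zero_of_biquad_eq_zero {ι κ : Type*} [Fintype ι] [Fintype κ] [DecidableEq ι]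
    [DecidableEq κ] (A : ι → ι → κ → κ → ℝ) (h1 : ∀ i j k l, A i j k l = A j i k l)
    (h2 : ∀ i j k l, A i j k l = A i j l k) (h : ∀ x y, biquad A x y = 0) : A = 0 := by
  have h3 : ∀ (y : κ → ℝ) i j, ∑ k, ∑ l, A i j k l * (y k * y l) = 0 := by
    intro y
    refine eq_zero_of_quad_eq_zero _ (fun i j => by simp only [h1 i j]) fun x => ?_
    rw [← h x y, biquad]
    simp only [Finset.sum_mul]
    refine Finset.sum_congr rfl fun _ _ => Finset.sum_congr rfl fun _ _ =>
      Finset.sum_congr rfl fun _ _ => Finset.sum_congr rfl fun _ _ => by ring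
  ext i j k l
  exact eq_zero_of_quad_eq_zero (A i j) (h2 i j) (fun y => h3 y i j) k l

/-- Tensors that are symmetric in the first and in the last two indices and are trace free. -/
def symTensor (ι κ : Type*) [Fintype ι] [Fintype κ] :
    Submodule ℝ (EuclideanSpace ℝ (ι × ι × κ × κ)) where
  carrier := {A | (∀ i j k l, A (i, j, k, l) = A (j, i, k, l)) ∧
    (∀ i j k l, A (i, j, k, l) = A (i, j, l, k)) ∧ ∑ i, ∑ k, A (i, i, k, k) = 0}
  add_mem' := by
    rintro A B ⟨h1, h2, h3⟩ ⟨h1', h2', h3'⟩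
    refine ⟨fun i j k l => ?_, fun i j k l => ?_, ?_⟩
    · simp [h1 i j, h1' i j]
    · simp [h2 i j k l, h2' i j k l]
    · simp [Finset.sum_add_distrib, h3, h3']
  zero_mem' := by simp
  smul_mem' := by
    rintro c A ⟨h1, h2, h3⟩
    refine ⟨fun i j k l => ?_, fun i j k l => ?_, ?_⟩
    · simp [h1 i j]
    · simp [h2 i j k l]
    · simp [← Finset.mul_sum, h3]

section

variable {ι κ : Type*} [Fintype ι] [Fintype κ]

/-- The entries of a tensor. -/
def symEntry (A : symTensor ι κ) (i j : ι) (k l : κ) : ℝ := A.1 (i, j, k, l)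

theorem symEntry_symm_left (A : symTensor ι κ) (i j : ι) (k l : κ) :
    symEntry A i j k l = symEntry A j i k l := A.2.1 i j k l

theorem symEntry_symm_right (A : symTensor ι κ) (i j : ι) (k l : κ) :
    symEntry A i j k l = symEntry A i j l k := A.2.2.1 i j k l

theorem symEntry_trace (A : symTensor ι κ) : ∑ i, ∑ k, symEntry A i i k k = 0 := A.2.2.2

theorem norm_sq_symTensor (A : symTensor ι κ) :
    ‖A‖ ^ 2 = ∑ i, ∑ j, ∑ k, ∑ l, symEntry A i j k l ^ 2 := by
  rw [Submodule.coe_norm, EuclideanSpace.real_norm_sq_eq]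
  simp [Fintype.sum_prod_type, symEntry]

theorem symEntry_sub (A B : symTensor ι κ) : symEntry (A - B) = symEntry A - symEntry B := rfl

theorem symEntry_smul (c : ℝ) (A : symTensor ι κ) : symEntry (c • A) = c • symEntry A := rfl

theorem symEntry_add (A B : symTensor ι κ) : symEntry (A + B) = symEntry A + symEntry B := rfl

end

/-- Tensors `A` such that the biquadratic form of `id + A` is nonnegative. -/
def posTensor (ι κ : Type*) [Fintype ι] [Fintype κ] [DecidableEq ι] [DecidableEq κ] :
    Set (symTensor ι κ) :=
  {A | ∀ x y, 0 ≤ biquad (idTensor ι κ + symEntry A) x y}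

/-- Tensors `A` such that the biquadratic form of `id + A` is a sum of squares, expressed by the
existence of a positive semidefinite Gram matrix. -/
def sqTensor (ι κ : Type*) [Fintype ι] [Fintype κ] [DecidableEq ι] [DecidableEq κ] :
    Set (symTensor ι κ) :=
  {A | ∃ M : Matrix (ι × κ) (ι × κ) ℝ, (∀ p q, M p q = M q p) ∧
    (∀ z : ι × κ → ℝ, 0 ≤ ∑ p, ∑ q, M p q * (z p * z q)) ∧
    ∀ x y, biquad (idTensor ι κ + symEntry A) x y =
      ∑ p, ∑ q, M p q * ((x p.1 * y p.2) * (x q.1 * y q.2))}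

open Metric Pointwise in
/-- A set containing a multiple of a symmetric slab has large volume. -/
theorem measure_ge_of_slabs {G : Type*} [NormedAddCommGroup G] [InnerProductSpace ℝ G]
    [FiniteDimensional ℝ G] [MeasurableSpace G] [BorelSpace G] (ν : Measure G)
    [ν.IsAddHaarMeasure] {Λ : Type*} [Fintype Λ] (φ : Λ → G →ₗ[ℝ] ℝ)
    (hφ : ∀ i z, |φ i z| ≤ ‖z‖) {t s : ℝ} (ht : 0 ≤ t) (hs : 0 ≤ s)
    (hcard : 4 * (Fintype.card Λ : ℝ) ≤ Real.exp (Module.finrank ℝ G * t ^ 2 / 2)) (S : Set G)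
    (hS : ∀ z, (∀ i, |φ i z| ≤ t) → s • z ∈ S) :
    ENNReal.ofReal s ^ Module.finrank ℝ G * ν (closedBall 0 1) ≤ 2 * ν S := by
  have h1 := measure_ball_slabs ν φ hφ ht hcard
  set U := {z : G | ‖z‖ ≤ 1 ∧ ∀ i, |φ i z| ≤ t}
  have h2 : s • U ⊆ S := by
    rintro _ ⟨z, hz, rfl⟩
    exact hS z hz.2
  have h3 := measure_mono (μ := ν) h2
  rw [Measure.addHaar_smul, abs_of_nonneg (by positivity), ENNReal.ofReal_pow hs] at h3
  calc _ ≤ ENNReal.ofReal s ^ Module.finrank ℝ G * (2 * ν U) := by gcongr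
    _ = 2 * (ENNReal.ofReal s ^ Module.finrank ℝ G * ν U) := by ring
    _ ≤ 2 * ν S := by gcongr

/-- The contraction of a tensor with four vectors, as a linear functional. -/
def symContract {ι κ : Type*} [Fintype ι] [Fintype κ] (w : ι → ι → κ → κ → ℝ) :
    symTensor ι κ →ₗ[ℝ] ℝ where
  toFun A := ∑ i, ∑ j, ∑ k, ∑ l, symEntry A i j k l * w i j k l
  map_add' A B := by simp [symEntry_add, add_mul, Finset.sum_add_distrib]
  map_smul' c A := by simp [symEntry_smul, Finset.mul_sum, mul_assoc]

theorem symContract_apply {ι κ : Type*} [Fintype ι] [Fintype κ] (w : ι → ι → κ → κ → ℝ)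
    (A : symTensor ι κ) :
    symContract w A = ∑ i, ∑ j, ∑ k, ∑ l, symEntry A i j k l * w i j k l := rfl

theorem abs_symContract_le {ι κ : Type*} [Fintype ι] [Fintype κ] (w : ι → ι → κ → κ → ℝ)
    (hw : ∑ i, ∑ j, ∑ k, ∑ l, w i j k l ^ 2 ≤ 1) (A : symTensor ι κ) :
    |symContract w A| ≤ ‖A‖ := by
  refine abs_le_of_sq_le_sq ?_ (norm_nonneg _)
  rw [norm_sq_symTensor, symContract_apply]
  have h := Finset.sum_mul_sq_le_sq_mul_sq (Finset.univ : Finset (ι × ι × κ × κ))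
    (fun p => symEntry A p.1 p.2.1 p.2.2.1 p.2.2.2) (fun p => w p.1 p.2.1 p.2.2.1 p.2.2.2)
  simp only [Fintype.sum_prod_type] at h
  exact h.trans (mul_le_of_le_one_right (by positivity) hw)

open Metric in
theorem measure_posTensor_ge {ι κ : Type*} [Fintype ι] [Fintype κ] [DecidableEq ι]
    [DecidableEq κ] [MeasurableSpace (symTensor ι κ)] [BorelSpace (symTensor ι κ)]
    (ν : Measure (symTensor ι κ)) [ν.IsAddHaarMeasure] {t : ℝ} (ht : 0 < t)
    (hcard : 4 * (81 ^ (Fintype.card ι + Fintype.card κ) : ℝ) ≤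
      Real.exp (Module.finrank ℝ (symTensor ι κ) * t ^ 2 / 2)) :
    ENNReal.ofReal (81 / (256 * t)) ^ Module.finrank ℝ (symTensor ι κ) * ν (closedBall 0 1) ≤
      2 * ν (posTensor ι κ) := by
  obtain ⟨N, hN1, hNc, hN⟩ := exists_linear_net ι
  obtain ⟨N', hN1', hNc', hN'⟩ := exists_linear_net κ
  refine measure_ge_of_slabs ν (Λ := (N × N) × (N' × N'))
    (fun a => symContract fun i j k l => a.1.1.1 i * a.1.2.1 j * (a.2.1.1 k * a.2.2.1 l)) ?_
    ht.le (by positivity) ?_ _ ?_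
  · intro a z
    refine abs_symContract_le _ ?_ z
    have : ∑ i, ∑ j, ∑ k, ∑ l, (a.1.1.1 i * a.1.2.1 j * (a.2.1.1 k * a.2.2.1 l)) ^ 2 =
        (∑ i, a.1.1.1 i ^ 2) * (∑ j, a.1.2.1 j ^ 2) *
          ((∑ k, a.2.1.1 k ^ 2) * ∑ l, a.2.2.1 l ^ 2) := by
      simp only [mul_pow, ← Finset.mul_sum, ← Finset.sum_mul]
    rw [this]
    exact mul_le_one₀ (mul_le_one₀ (hN1 _ a.1.1.2) (by positivity) (hN1 _ a.1.2.2))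
      (by positivity) (mul_le_one₀ (hN1' _ a.2.1.2) (by positivity) (hN1' _ a.2.2.2))
  · refine le_trans ?_ hcard
    have h1 : (N.card : ℝ) ≤ 9 ^ Fintype.card ι := by exact_mod_cast hNc
    have h2 : (N'.card : ℝ) ≤ 9 ^ Fintype.card κ := by exact_mod_cast hNc'
    have h81 : (81 : ℝ) ^ (Fintype.card ι + Fintype.card κ) =
        (9 ^ Fintype.card ι * 9 ^ Fintype.card ι) * (9 ^ Fintype.card κ * 9 ^ Fintype.card κ) := by
      rw [← mul_pow, ← mul_pow, pow_add]; norm_num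
    simp only [Fintype.card_prod, Fintype.card_coe]
    push_cast
    rw [h81]
    gcongr
  · intro z hz x y
    have h1 : ∀ p ∈ N', ∀ q ∈ N', |∑ k, ∑ l, (∑ i, ∑ j, symEntry z i j k l * (x i * x j)) *
        p k * q l| ≤ 16 / 9 * t * ∑ i, x i ^ 2 := by
      intro p hp q hq
      have h := bilin_le_of_net hN hN
        (fun i j => ∑ k, ∑ l, symEntry z i j k l * (p k * q l)) (c := t) (by
          intro u hu v hv
          have := hz ((⟨u, hu⟩, ⟨v, hv⟩), (⟨p, hp⟩, ⟨q, hq⟩))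
          rw [symContract_apply] at this
          refine le_of_eq_of_le (congrArg abs ?_) this
          refine Finset.sum_congr rfl fun i _ => Finset.sum_congr rfl fun j _ => ?_
          simp only [Finset.sum_mul]
          exact Finset.sum_congr rfl fun _ _ => Finset.sum_congr rfl fun _ _ => by ring) x x
      rw [Real.mul_self_sqrt (by positivity)] at h
      refine le_of_eq_of_le (congrArg abs ?_) h
      have hsw := Finset.sum_comm (s := Finset.univ) (t := Finset.univ)
        (f := fun (a : κ × κ) (b : ι × ι) =>
          symEntry z b.1 b.2 a.1 a.2 * (x b.1 * x b.2) * p a.1 * q a.2)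
      simp only [Fintype.sum_prod_type] at hsw
      simp only [Finset.sum_mul]
      rw [hsw]
      exact Finset.sum_congr rfl fun _ _ => Finset.sum_congr rfl fun _ _ =>
        Finset.sum_congr rfl fun _ _ => Finset.sum_congr rfl fun _ _ => by ring
    have h2 := bilin_le_of_net hN' hN' _ h1 y y
    rw [Real.mul_self_sqrt (by positivity)] at h2
    have h3 : ∑ k, ∑ l, (∑ i, ∑ j, symEntry z i j k l * (x i * x j)) * y k * y l =
        biquad (symEntry z) x y := by
      rw [← biquad_swap, biquad]
      simp only [Finset.sum_mul]
      exact Finset.sum_congr rfl fun _ _ => Finset.sum_congr rfl fun _ _ =>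
        Finset.sum_congr rfl fun _ _ => Finset.sum_congr rfl fun _ _ => by ring
    rw [h3] at h2
    have h4 : biquad ((81 / (256 * t)) • symEntry z) x y =
        81 / (256 * t) * biquad (symEntry z) x y := by
      simp [biquad, Finset.mul_sum, mul_assoc]
    rw [biquad_add, biquad_idTensor, symEntry_smul, h4]
    have h5 := (abs_le.1 h2).1
    have h6 : 81 / (256 * t) * (-(16 / 9 * (16 / 9 * t * ∑ i, x i ^ 2) * ∑ l, y l ^ 2)) ≤
        81 / (256 * t) * biquad (symEntry z) x y := by gcongr
    have h7 : 81 / (256 * t) * (-(16 / 9 * (16 / 9 * t * ∑ i, x i ^ 2) * ∑ l, y l ^ 2)) =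
        -((∑ i, x i ^ 2) * ∑ l, y l ^ 2) := by
      field_simp; norm_num
    linarith

open Metric in
theorem measure_sqTensor_ge {ι κ : Type*} [Fintype ι] [Fintype κ] [DecidableEq ι]
    [DecidableEq κ] [MeasurableSpace (symTensor ι κ)] [BorelSpace (symTensor ι κ)]
    (ν : Measure (symTensor ι κ)) [ν.IsAddHaarMeasure] {t : ℝ} (ht : 0 < t)
    (hcard : 4 * (81 ^ (Fintype.card ι * Fintype.card κ) : ℝ) ≤
      Real.exp (Module.finrank ℝ (symTensor ι κ) * t ^ 2 / 2)) :
    ENNReal.ofReal (9 / (16 * t)) ^ Module.finrank ℝ (symTensor ι κ) * ν (closedBall 0 1) ≤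
      2 * ν (sqTensor ι κ) := by
  obtain ⟨N, hN1, hNc, hN⟩ := exists_linear_net (ι × κ)
  have hsw : ∀ f : ι → ι → κ → κ → ℝ, ∑ p : ι × κ, ∑ q : ι × κ, f p.1 q.1 p.2 q.2 =
      ∑ i, ∑ j, ∑ k, ∑ l, f i j k l := by
    intro f
    simp only [Fintype.sum_prod_type]
    exact Finset.sum_congr rfl fun i _ => Finset.sum_comm
  refine measure_ge_of_slabs ν (Λ := N × N)
    (fun a => symContract fun i j k l => a.1.1 (i, k) * a.2.1 (j, l)) ?_
    ht.le (by positivity) ?_ _ ?_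
  · intro a z
    refine abs_symContract_le _ ?_ z
    rw [← hsw fun i j k l => (a.1.1 (i, k) * a.2.1 (j, l)) ^ 2]
    simp only [mul_pow, ← Finset.sum_mul_sum]
    exact mul_le_one₀ (hN1 _ a.1.2) (by positivity) (hN1 _ a.2.2)
  · refine le_trans ?_ hcard
    rw [Fintype.card_prod] at hNc
    have h1 : (N.card : ℝ) ≤ 9 ^ (Fintype.card ι * Fintype.card κ) := by exact_mod_cast hNc
    have h81 : (81 : ℝ) ^ (Fintype.card ι * Fintype.card κ) =
        9 ^ (Fintype.card ι * Fintype.card κ) * 9 ^ (Fintype.card ι * Fintype.card κ) := by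
      rw [← mul_pow]; norm_num
    simp only [Fintype.card_prod, Fintype.card_coe]
    push_cast
    rw [h81]
    gcongr
  · intro z hz
    have h1 := bilin_le_of_net hN hN (fun p q : ι × κ => symEntry z p.1 q.1 p.2 q.2) (c := t) (by
      intro u hu v hv
      have := hz (⟨u, hu⟩, ⟨v, hv⟩)
      rw [symContract_apply] at this
      refine le_of_eq_of_le (congrArg abs ?_) this
      rw [← hsw fun i j k l => symEntry z i j k l * (u (i, k) * v (j, l))]
      simp only [mul_assoc])
    set s := 9 / (16 * t) with hs
    refine ⟨fun p q => idTensor ι κ p.1 q.1 p.2 q.2 + s * symEntry z p.1 q.1 p.2 q.2, ?_, ?_, ?_⟩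
    · intro p q
      change idTensor ι κ p.1 q.1 p.2 q.2 + s * symEntry z p.1 q.1 p.2 q.2 =
        idTensor ι κ q.1 p.1 q.2 p.2 + s * symEntry z q.1 p.1 q.2 p.2
      rw [symEntry_symm_left z p.1, symEntry_symm_right z q.1]
      simp only [idTensor, eq_comm (a := p.1), eq_comm (a := p.2)]
    · intro w
      have h2 := h1 w w
      rw [Real.mul_self_sqrt (by positivity)] at h2
      have h3 : ∑ p : ι × κ, ∑ q : ι × κ, idTensor ι κ p.1 q.1 p.2 q.2 * (w p * w q) =
          ∑ p, w p ^ 2 := by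
        have : ∀ p q : ι × κ, idTensor ι κ p.1 q.1 p.2 q.2 = if p = q then 1 else 0 := by
          intro p q
          simp only [idTensor, Prod.ext_iff, ite_and, mul_ite, mul_one, mul_zero]
          split_ifs <;> rfl
        simp [this, sq]
      simp only [add_mul, Finset.sum_add_distrib, h3]
      have h4 : ∑ p : ι × κ, ∑ q : ι × κ, s * symEntry z p.1 q.1 p.2 q.2 * (w p * w q) =
          s * ∑ p : ι × κ, ∑ q : ι × κ, symEntry z p.1 q.1 p.2 q.2 * w p * w q := by
        simp only [Finset.mul_sum, mul_assoc]
      rw [h4]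
      have h5 : s * (-(16 / 9 * t * ∑ p, w p ^ 2)) ≤
          s * ∑ p : ι × κ, ∑ q : ι × κ, symEntry z p.1 q.1 p.2 q.2 * w p * w q :=
        mul_le_mul_of_nonneg_left (abs_le.1 h2).1 (by positivity)
      have h6 : s * (-(16 / 9 * t * ∑ p, w p ^ 2)) = -∑ p, w p ^ 2 := by
        rw [hs]; field_simp
      linarith
    · intro x y
      rw [hsw fun i j k l => (idTensor ι κ i j k l + s * symEntry z i j k l) *
        (x i * y k * (x j * y l)), biquad, symEntry_smul]
      exact Finset.sum_congr rfl fun _ _ => Finset.sum_congr rfl fun _ _ =>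
        Finset.sum_congr rfl fun _ _ => Finset.sum_congr rfl fun _ _ => by
          simp only [Pi.add_apply, Pi.smul_apply, smul_eq_mul]; ring

theorem idTensor_trace (ι κ : Type*) [Fintype ι] [Fintype κ] [DecidableEq ι] [DecidableEq κ] :
    ∑ i, ∑ k, idTensor ι κ i i k k = Fintype.card ι * Fintype.card κ := by
  simp [idTensor]

theorem idTensor_symm_left {ι κ : Type*} [DecidableEq ι] [DecidableEq κ] (i j : ι) (k l : κ) :
    idTensor ι κ i j k l = idTensor ι κ j i k l := by
  simp only [idTensor, eq_comm (a := i)]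

theorem idTensor_symm_right {ι κ : Type*} [DecidableEq ι] [DecidableEq κ] (i j : ι) (k l : κ) :
    idTensor ι κ i j k l = idTensor ι κ i j l k := by
  simp only [idTensor, eq_comm (a := k)]

theorem exists_gram_of_mem_sqTensor {ι κ : Type*} [Fintype ι] [Fintype κ] [DecidableEq ι]
    [DecidableEq κ] (A : symTensor ι κ) (hA : A ∈ sqTensor ι κ) :
    ∃ B : Matrix (ι × κ) (ι × κ) ℝ,
      ∑ p, ∑ q, B p q ^ 2 = Fintype.card ι * Fintype.card κ ∧
      ∀ i j k l, idTensor ι κ i j k l + symEntry A i j k l =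
        1 / 2 * ((B * B.transpose) (i, k) (j, l) + (B * B.transpose) (j, k) (i, l)) := by
  obtain ⟨M, hsymm, hpos, hM⟩ := hA
  obtain ⟨B, rfl⟩ := exists_eq_mul_transpose M hsymm hpos
  set M := B * B.transpose with hMB
  have h0 : idTensor ι κ + symEntry A -
      (fun i j k l => 1 / 2 * (M (i, k) (j, l) + M (j, k) (i, l))) = 0 := by
    refine eq_zero_of_biquad_eq_zero _ ?_ ?_ ?_
    · intro i j k l
      simp only [Pi.sub_apply, Pi.add_apply]
      rw [idTensor_symm_left, symEntry_symm_left]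
      ring
    · intro i j k l
      simp only [Pi.sub_apply, Pi.add_apply]
      rw [idTensor_symm_right, symEntry_symm_right, hsymm (i, k), hsymm (j, k)]
      ring
    · intro x y
      have h1 : biquad (fun i j k l => 1 / 2 * (M (i, k) (j, l) + M (j, k) (i, l))) x y =
          ∑ p, ∑ q, M p q * ((x p.1 * y p.2) * (x q.1 * y q.2)) := by
        have h2 : ∑ p, ∑ q, M p q * ((x p.1 * y p.2) * (x q.1 * y q.2)) =
            ∑ i, ∑ j, ∑ k, ∑ l, M (i, k) (j, l) * (x i * x j * (y k * y l)) := by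
          simp only [Fintype.sum_prod_type]
          refine Finset.sum_congr rfl fun i _ => ?_
          rw [Finset.sum_comm]
          exact Finset.sum_congr rfl fun _ _ => Finset.sum_congr rfl fun _ _ =>
            Finset.sum_congr rfl fun _ _ => by ring
        have h3 : ∑ i, ∑ j, ∑ k, ∑ l, M (j, k) (i, l) * (x i * x j * (y k * y l)) =
            ∑ i, ∑ j, ∑ k, ∑ l, M (i, k) (j, l) * (x i * x j * (y k * y l)) := by
          rw [Finset.sum_comm]
          exact Finset.sum_congr rfl fun _ _ => Finset.sum_congr rfl fun _ _ =>
            Finset.sum_congr rfl fun _ _ => Finset.sum_congr rfl fun _ _ => by ring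
        rw [h2, biquad]
        simp only [mul_add, add_mul, Finset.sum_add_distrib, mul_assoc, ← Finset.mul_sum] at h3 ⊢
        rw [h3]
        ring
      have h4 := biquad_add (idTensor ι κ + symEntry A -
        (fun i j k l => 1 / 2 * (M (i, k) (j, l) + M (j, k) (i, l))))
        (fun i j k l => 1 / 2 * (M (i, k) (j, l) + M (j, k) (i, l))) x y
      rw [sub_add_cancel, hM, h1] at h4
      linarith
  have h1 : ∀ i j k l, idTensor ι κ i j k l + symEntry A i j k l =
      1 / 2 * (M (i, k) (j, l) + M (j, k) (i, l)) := by
    intro i j k l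
    have := congrFun (congrFun (congrFun (congrFun h0 i) j) k) l
    simp only [Pi.sub_apply, Pi.add_apply, Pi.zero_apply] at this
    linarith
  refine ⟨B, ?_, h1⟩
  have h2 : ∀ p, ∑ q, B p q ^ 2 = M p p := fun p => by
    rw [hMB, Matrix.mul_apply]
    exact Finset.sum_congr rfl fun _ _ => by rw [Matrix.transpose_apply, sq]
  have h3 : ∑ i, ∑ k, (idTensor ι κ i i k k + symEntry A i i k k) = ∑ i, ∑ k, M (i, k) (i, k) :=
    Finset.sum_congr rfl fun i _ => Finset.sum_congr rfl fun k _ => by rw [h1]; ring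
  simp only [Finset.sum_add_distrib, symEntry_trace, idTensor_trace] at h3
  simp only [h2, Fintype.sum_prod_type, ← h3, add_zero]

open Metric in
theorem measure_sqTensor_le {ι κ : Type*} [Fintype ι] [Fintype κ] [DecidableEq ι]
    [DecidableEq κ] [MeasurableSpace (symTensor ι κ)] [BorelSpace (symTensor ι κ)]
    (ν : Measure (symTensor ι κ)) [ν.IsAddHaarMeasure] {t : ℝ} (ht : 0 < t)
    (hN : 0 < Fintype.card ι * Fintype.card κ)
    (hcard : 4 * (81 ^ (Fintype.card ι * Fintype.card κ) : ℝ) ≤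
      Real.exp ((Fintype.card ι * Fintype.card κ) ^ 2 * t ^ 2 / 2)) :
    ν (sqTensor ι κ) ≤ 2 * 2 ^ (Fintype.card ι * Fintype.card κ) ^ 2 *
      (ENNReal.ofReal (64 / 9 * (Fintype.card ι * Fintype.card κ) * t) ^
        Module.finrank ℝ (symTensor ι κ) * ν (closedBall 0 1)) := by
  choose! B hB1 hB2 using exists_gram_of_mem_sqTensor (ι := ι) (κ := κ)
  have hN' : (0 : ℝ) < Fintype.card ι * Fintype.card κ := by exact_mod_cast hN
  set Q : ℝ := Fintype.card ι * Fintype.card κ with hQ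
  have hsc : ∀ A, ((√Q)⁻¹ • B A) * ((√Q)⁻¹ • B A).transpose = Q⁻¹ • (B A * (B A).transpose) := by
    intro A
    rw [Matrix.transpose_smul, Matrix.smul_mul, Matrix.mul_smul, smul_smul, ← mul_inv,
      Real.mul_self_sqrt hN'.le]
  have := measure_le_of_gram ν (sqTensor ι κ) (β := Unit)
    (fun A _ => (√Q)⁻¹ • B A) ?_ hN'.le ?_ ht.le ?_
  · simpa using this
  · intro A hA
    simp only [Matrix.smul_apply, smul_eq_mul, mul_pow, ← Finset.mul_sum, hB1 A hA, inv_pow,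
      Real.sq_sqrt hN'.le]
    simp [inv_mul_cancel₀ hN'.ne']
  · intro A hA A' hA'
    simp only [hsc, ← smul_sub, Finset.univ_unique, Finset.sum_singleton]
    set Δ := B A * (B A).transpose - B A' * (B A').transpose with hΔ
    have h1 : Q ^ 2 * ∑ p, ∑ q, (Q⁻¹ • Δ) p q ^ 2 = ∑ p, ∑ q, Δ p q ^ 2 := by
      simp only [Matrix.smul_apply, smul_eq_mul, mul_pow, ← Finset.mul_sum]
      field_simp
    rw [h1, norm_sq_symTensor]
    have h2 : ∀ i j k l, symEntry (A - A') i j k l =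
        1 / 2 * (Δ (i, k) (j, l) + Δ (j, k) (i, l)) := by
      intro i j k l
      have e1 := hB2 A hA i j k l
      have e2 := hB2 A' hA' i j k l
      simp only [symEntry_sub, Pi.sub_apply, hΔ, Matrix.sub_apply]
      linarith
    have h3 : ∑ i, ∑ j, ∑ k, ∑ l, symEntry (A - A') i j k l ^ 2 ≤ ∑ i, ∑ j, ∑ k, ∑ l,
        (1 / 2 * Δ (i, k) (j, l) ^ 2 + 1 / 2 * Δ (j, k) (i, l) ^ 2) := by
      refine Finset.sum_le_sum fun i _ => Finset.sum_le_sum fun j _ => Finset.sum_le_sum fun k _ =>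
        Finset.sum_le_sum fun l _ => ?_
      rw [h2]
      nlinarith [sq_nonneg (Δ (i, k) (j, l) - Δ (j, k) (i, l))]
    refine h3.trans_eq ?_
    simp only [Finset.sum_add_distrib, ← Finset.mul_sum]
    rw [Finset.sum_comm (f := fun i j => ∑ k, ∑ l, Δ (j, k) (i, l) ^ 2), ← add_mul]
    norm_num
    simp only [Fintype.sum_prod_type]
    exact Finset.sum_congr rfl fun i _ => Finset.sum_comm
  · simpa using hcard

/-- Polarization: a tensor with nonnegative biquadratic form is recovered from Gram matrices of
values of the associated positive map at rank one matrices. -/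
theorem exists_gram_of_biquad_nonneg {ι κ : Type*} [Fintype ι] [Fintype κ] [LinearOrder ι]
    (M : ι → ι → κ → κ → ℝ) (h1 : ∀ i j k l, M i j k l = M j i k l)
    (h2 : ∀ i j k l, M i j k l = M i j l k) (hpos : ∀ x y, 0 ≤ biquad M x y) :
    ∃ B : ι × ι → Matrix κ κ ℝ,
      ∑ b, ∑ k, ∑ l, B b k l ^ 2 = 2 * Fintype.card ι * ∑ i, ∑ k, M i i k k ∧
      ∀ i j k l, (B (i, j) * (B (i, j)).transpose) k l = M i i k l + M j j k l +
        (if i < j then 1 else if j < i then -1 else 0) * (2 * M i j k l) := by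
  set ε : ι → ι → ℝ := fun i j => if i < j then 1 else if j < i then -1 else 0 with hε
  have hεs : ∀ i j, ε j i = -ε i j := by
    intro i j
    rcases lt_trichotomy i j with h | h | h
    · simp [hε, h, h.not_gt]
    · simp [hε, h]
    · simp [hε, h, h.not_gt]
  have hεq : ∀ i j, i ≠ j → ε i j * ε i j = 1 := by
    intro i j hij
    rcases lt_or_gt_of_ne hij with h | h
    · simp [hε, h]
    · simp [hε, h, h.not_gt]
  let Y : ι × ι → Matrix κ κ ℝ := fun b k l =>
    M b.1 b.1 k l + M b.2 b.2 k l + ε b.1 b.2 * (2 * M b.1 b.2 k l)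
  have hq : ∀ (i j : ι) (c : ℝ) (y : κ → ℝ),
      biquad M (fun a => (if a = i then 1 else 0) + (if a = j then c else 0)) y =
      ∑ k, ∑ l, (M i i k l + c * (2 * M i j k l) + c * c * M j j k l) * (y k * y l) := by
    intro i j c y
    have e1 : ∀ x : ι → ℝ, biquad M x y =
        ∑ a, ∑ b, (∑ k, ∑ l, M a b k l * (y k * y l)) * (x a * x b) := by
      intro x
      simp only [biquad, Finset.sum_mul]
      exact Finset.sum_congr rfl fun _ _ => Finset.sum_congr rfl fun _ _ =>
        Finset.sum_congr rfl fun _ _ => Finset.sum_congr rfl fun _ _ => by ring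
    rw [e1]
    set F : ι → ι → ℝ := fun a b => ∑ k, ∑ l, M a b k l * (y k * y l) with hF
    have e2 : ∑ k, ∑ l, (M i i k l + c * (2 * M i j k l) + c * c * M j j k l) * (y k * y l) =
        F i i + c * (F i j + F j i) + c * c * F j j := by
      simp only [hF, h1 j i, Finset.mul_sum, ← Finset.sum_add_distrib]
      exact Finset.sum_congr rfl fun _ _ => Finset.sum_congr rfl fun _ _ => by ring
    rw [e2]
    simp only [mul_add, add_mul, Finset.sum_add_distrib, mul_ite, ite_mul, mul_one, one_mul,
      mul_zero, zero_mul, Finset.sum_ite_eq', Finset.mem_univ, if_true]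
    ring
  have hY : ∀ b, ∃ B : Matrix κ κ ℝ, Y b = B * B.transpose := by
    rintro ⟨i, j⟩
    refine exists_eq_mul_transpose _ (fun k l => ?_) fun y => ?_
    · simp only [Y]
      rw [h2 i i, h2 j j, h2 i j]
    · by_cases hij : i = j
      · subst hij
        have e := hq i i 0 y
        have h0 := hpos (fun a => (if a = i then 1 else 0) + (if a = i then 0 else 0)) y
        rw [e] at h0
        have e3 : ∑ k, ∑ l, Y (i, i) k l * (y k * y l) = 2 * ∑ k, ∑ l,
            (M i i k l + 0 * (2 * M i i k l) + 0 * 0 * M i i k l) * (y k * y l) := by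
          simp only [Y, hε, lt_irrefl, if_false, Finset.mul_sum]
          exact Finset.sum_congr rfl fun _ _ => Finset.sum_congr rfl fun _ _ => by ring
        rw [e3]
        positivity
      · have e := hq i j (ε i j) y
        rw [hεq i j hij] at e
        refine (hpos _ y).trans_eq (e.trans ?_)
        exact Finset.sum_congr rfl fun _ _ => Finset.sum_congr rfl fun _ _ => by
          simp only [Y]; ring
  choose B hB using hY
  refine ⟨B, ?_, ?_⟩
  · have e1 : ∀ b, ∑ k, ∑ l, B b k l ^ 2 = ∑ k, Y b k k := fun b => by
      rw [hB]
      refine Finset.sum_congr rfl fun k _ => ?_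
      rw [Matrix.mul_apply]
      exact Finset.sum_congr rfl fun _ _ => by rw [Matrix.transpose_apply, sq]
    have e2 : ∑ i, ∑ j, ∑ k, ε i j * (2 * M i j k k) = 0 := by
      have e3 : ∑ i, ∑ j, ∑ k, ε i j * (2 * M i j k k) =
          -∑ i, ∑ j, ∑ k, ε i j * (2 * M i j k k) := by
        conv_lhs => rw [Finset.sum_comm]
        simp only [← Finset.sum_neg_distrib]
        refine Finset.sum_congr rfl fun i _ => Finset.sum_congr rfl fun j _ =>
          Finset.sum_congr rfl fun k _ => ?_
        rw [hεs i j, h1 j i]; ring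
      linarith
    simp only [e1, Y, Fintype.sum_prod_type, Finset.sum_add_distrib, e2]
    simp only [Finset.sum_const, Finset.card_univ, nsmul_eq_mul, ← Finset.mul_sum]
    ring
  · intro i j k l
    rw [← hB]

theorem sum_sq_sub_le_of_polarization {ι κ : Type*} [Fintype ι] [Fintype κ] [LinearOrder ι]
    (M : ι → ι → κ → κ → ℝ) (h1 : ∀ i j k l, M i j k l = M j i k l)
    (Y : ι × ι → Matrix κ κ ℝ) (hY : ∀ i j k l, Y (i, j) k l = M i i k l + M j j k l +
        (if i < j then 1 else if j < i then -1 else 0) * (2 * M i j k l)) :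
    ∑ i, ∑ j, ∑ k, ∑ l, M i j k l ^ 2 ≤ 1 / 4 * ∑ b, ∑ k, ∑ l, Y b k l ^ 2 := by
  have h : ∀ i j k l, M i j k l ^ 2 ≤ 1 / 8 * Y (i, j) k l ^ 2 + 1 / 8 * Y (j, i) k l ^ 2 := by
    intro i j k l
    rw [hY, hY]
    rcases lt_trichotomy i j with h | h | h
    · simp only [h, h.not_gt, if_true, if_false]
      rw [h1 j i]
      nlinarith [sq_nonneg (M i i k l + M j j k l)]
    · subst h
      simp only [lt_irrefl, if_false]
      nlinarith
    · simp only [h, h.not_gt, if_true, if_false]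
      rw [h1 j i]
      nlinarith [sq_nonneg (M i i k l + M j j k l)]
  have h3 : ∑ i, ∑ j, ∑ k, ∑ l, M i j k l ^ 2 ≤ ∑ i, ∑ j, ∑ k, ∑ l,
      (1 / 8 * Y (i, j) k l ^ 2 + 1 / 8 * Y (j, i) k l ^ 2) :=
    Finset.sum_le_sum fun i _ => Finset.sum_le_sum fun j _ => Finset.sum_le_sum fun k _ =>
      Finset.sum_le_sum fun l _ => h i j k l
  refine h3.trans_eq ?_
  simp only [Finset.sum_add_distrib, ← Finset.mul_sum]
  rw [Finset.sum_comm (f := fun i j => ∑ k, ∑ l, Y (j, i) k l ^ 2), Fintype.sum_prod_type]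
  ring

open Metric in
/-- Volume bound for sets parametrized by tensors with nonnegative biquadratic form. -/
theorem measure_le_of_biquad_nonneg {ι κ : Type*} [Fintype ι] [Fintype κ] [LinearOrder ι]
    {G : Type*} [NormedAddCommGroup G] [InnerProductSpace ℝ G]
    [FiniteDimensional ℝ G] [MeasurableSpace G] [BorelSpace G] (ν : Measure G)
    [ν.IsAddHaarMeasure] (S : Set G) (M : G → ι → ι → κ → κ → ℝ)
    (h1 : ∀ s i j k l, M s i j k l = M s j i k l) (h2 : ∀ s i j k l, M s i j k l = M s i j l k)
    (htr : ∀ s, ∑ i, ∑ k, M s i i k k = Fintype.card ι * Fintype.card κ)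
    (hnorm : ∀ s s', ‖s - s'‖ ^ 2 = ∑ i, ∑ j, ∑ k, ∑ l, (M s i j k l - M s' i j k l) ^ 2)
    (hpos : ∀ s ∈ S, ∀ x y, 0 ≤ biquad (M s) x y) {t : ℝ} (ht : 0 ≤ t)
    (hι : 0 < Fintype.card ι) (hκ : 0 < Fintype.card κ)
    (hcard : 4 * ((Fintype.card ι) ^ 2 * 81 ^ Fintype.card κ : ℝ) ≤
      Real.exp ((Fintype.card ι) ^ 2 * Fintype.card κ ^ 2 * t ^ 2 / 2)) :
    ν S ≤ 2 * 2 ^ (Fintype.card ι ^ 2 * Fintype.card κ ^ 2) *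
      (ENNReal.ofReal (64 / 9 * (Fintype.card ι ^ 2 * Fintype.card κ) * t) ^ Module.finrank ℝ G *
        ν (closedBall 0 1)) := by
  have hex := fun s (hs : s ∈ S) => exists_gram_of_biquad_nonneg (M s) (h1 s) (h2 s) (hpos s hs)
  choose! B hB1 hB2 using hex
  have hι' : (0 : ℝ) < Fintype.card ι := by exact_mod_cast hι
  have hκ' : (0 : ℝ) < Fintype.card κ := by exact_mod_cast hκ
  set Q : ℝ := Fintype.card ι ^ 2 * Fintype.card κ with hQ
  have hQ0 : 0 < Q := by positivity
  have hsc : ∀ s b, ((√(2 * Q))⁻¹ • B s b) * ((√(2 * Q))⁻¹ • B s b).transpose =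
      (2 * Q)⁻¹ • (B s b * (B s b).transpose) := by
    intro s b
    rw [Matrix.transpose_smul, Matrix.smul_mul, Matrix.mul_smul, smul_smul, ← mul_inv,
      Real.mul_self_sqrt (by positivity)]
  have := measure_le_of_gram ν S (β := ι × ι) (fun s b => (√(2 * Q))⁻¹ • B s b) ?_ hQ0.le ?_ ht ?_
  · simpa only [Fintype.card_prod, ← sq] using this
  · intro s hs
    simp only [Matrix.smul_apply, smul_eq_mul, mul_pow, ← Finset.mul_sum, hB1 s hs, inv_pow,
      Real.sq_sqrt (show (0 : ℝ) ≤ 2 * Q by positivity), htr]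
    rw [inv_mul_le_one₀ (by positivity), hQ]
    apply le_of_eq; ring
  · intro s hs s' hs'
    simp only [hsc, ← smul_sub]
    have h3 := sum_sq_sub_le_of_polarization (fun i j k l => M s i j k l - M s' i j k l)
      (fun i j k l => by rw [h1 s, h1 s'])
      (fun b => B s b * (B s b).transpose - B s' b * (B s' b).transpose) (fun i j k l => by
        rw [Matrix.sub_apply, hB2 s hs, hB2 s' hs']; ring)
    rw [← hnorm] at h3
    refine h3.trans_eq ?_
    simp only [Matrix.smul_apply, smul_eq_mul, mul_pow, ← Finset.mul_sum]
    field_simp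
    ring
  · simpa only [Fintype.card_prod, ← sq, Nat.cast_pow] using hcard

open Metric in
theorem measure_posTensor_le_left {ι κ : Type*} [Fintype ι] [Fintype κ] [LinearOrder ι]
    [DecidableEq κ] [MeasurableSpace (symTensor ι κ)] [BorelSpace (symTensor ι κ)]
    (ν : Measure (symTensor ι κ)) [ν.IsAddHaarMeasure] {t : ℝ} (ht : 0 ≤ t)
    (hι : 0 < Fintype.card ι) (hκ : 0 < Fintype.card κ)
    (hcard : 4 * ((Fintype.card ι) ^ 2 * 81 ^ Fintype.card κ : ℝ) ≤
      Real.exp ((Fintype.card ι) ^ 2 * Fintype.card κ ^ 2 * t ^ 2 / 2)) :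
    ν (posTensor ι κ) ≤ 2 * 2 ^ (Fintype.card ι ^ 2 * Fintype.card κ ^ 2) *
      (ENNReal.ofReal (64 / 9 * (Fintype.card ι ^ 2 * Fintype.card κ) * t) ^
        Module.finrank ℝ (symTensor ι κ) * ν (closedBall 0 1)) := by
  refine measure_le_of_biquad_nonneg ν _ (fun A => idTensor ι κ + symEntry A) ?_ ?_ ?_ ?_
    (fun A hA => hA) ht hι hκ hcard
  · intro A i j k l
    simp only [Pi.add_apply]
    rw [idTensor_symm_left, symEntry_symm_left]
  · intro A i j k l
    simp only [Pi.add_apply]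
    rw [idTensor_symm_right, symEntry_symm_right]
  · intro A
    simp only [Pi.add_apply, Finset.sum_add_distrib, symEntry_trace, idTensor_trace, add_zero]
  · intro A A'
    simp only [norm_sq_symTensor, symEntry_sub, Pi.sub_apply, Pi.add_apply, add_sub_add_left_eq_sub]

open Metric in
theorem measure_posTensor_le_right {ι κ : Type*} [Fintype ι] [Fintype κ] [DecidableEq ι]
    [LinearOrder κ] [MeasurableSpace (symTensor ι κ)] [BorelSpace (symTensor ι κ)]
    (ν : Measure (symTensor ι κ)) [ν.IsAddHaarMeasure] {t : ℝ} (ht : 0 ≤ t)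
    (hι : 0 < Fintype.card ι) (hκ : 0 < Fintype.card κ)
    (hcard : 4 * ((Fintype.card κ) ^ 2 * 81 ^ Fintype.card ι : ℝ) ≤
      Real.exp ((Fintype.card κ) ^ 2 * Fintype.card ι ^ 2 * t ^ 2 / 2)) :
    ν (posTensor ι κ) ≤ 2 * 2 ^ (Fintype.card κ ^ 2 * Fintype.card ι ^ 2) *
      (ENNReal.ofReal (64 / 9 * (Fintype.card κ ^ 2 * Fintype.card ι) * t) ^
        Module.finrank ℝ (symTensor ι κ) * ν (closedBall 0 1)) := by
  refine measure_le_of_biquad_nonneg ν _ (fun A k l i j => (idTensor ι κ + symEntry A) i j k l)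
    ?_ ?_ ?_ ?_ (fun A hA x y => ?_) ht hκ hι hcard
  · intro A i j k l
    simp only [Pi.add_apply]
    rw [idTensor_symm_right, symEntry_symm_right]
  · intro A i j k l
    simp only [Pi.add_apply]
    rw [idTensor_symm_left, symEntry_symm_left]
  · intro A
    rw [Finset.sum_comm]
    simp only [Pi.add_apply, Finset.sum_add_distrib, symEntry_trace, idTensor_trace, add_zero]
    ring
  · intro A A'
    simp only [norm_sq_symTensor, symEntry_sub, Pi.sub_apply, Pi.add_apply, add_sub_add_left_eq_sub]
    have := Finset.sum_comm (s := Finset.univ) (t := Finset.univ)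
      (f := fun (a : κ × κ) (b : ι × ι) =>
        (symEntry A b.1 b.2 a.1 a.2 - symEntry A' b.1 b.2 a.1 a.2) ^ 2)
    simp only [Fintype.sum_prod_type] at this
    exact this.symm
  · rw [biquad_swap]
    exact hA y x

section

open BiformPaper

/-- The biform of bidegree `(2, 2)` given by a four-index tensor. -/
def tensorPoly {n m : ℕ} (A : Fin n → Fin n → Fin m → Fin m → ℝ) :
    MvPolynomial (Fin n ⊕ Fin m) ℝ :=
  ∑ i, ∑ j, ∑ k, ∑ l, C (A i j k l) * (X (Sum.inl i) * X (Sum.inl j) *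
    (X (Sum.inr k) * X (Sum.inr l)))

theorem beval_tensorPoly {n m : ℕ} (A : Fin n → Fin n → Fin m → Fin m → ℝ) (x : Fin n → ℝ)
    (y : Fin m → ℝ) : beval (tensorPoly A) x y = biquad A x y := by
  simp [beval, tensorPoly, biquad]

theorem beval_qpoly {n m : ℕ} (x : Fin n → ℝ) (y : Fin m → ℝ) :
    beval (qpoly n m 1 1) x y = biquad (idTensor (Fin n) (Fin m)) x y := by
  rw [biquad_idTensor]
  simp [beval, qpoly]

theorem eq_of_beval_eq {n m : ℕ} {f g : MvPolynomial (Fin n ⊕ Fin m) ℝ}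
    (h : ∀ x y, beval f x y = beval g x y) : f = g := by
  refine MvPolynomial.funext fun v => ?_
  have := h (fun i => v (Sum.inl i)) (fun k => v (Sum.inr k))
  have hv : Sum.elim (fun i => v (Sum.inl i)) (fun k => v (Sum.inr k)) = v := by
    ext a; cases a <;> rfl
  simpa only [beval, hv] using this

theorem beval_add {n m : ℕ} (f g : MvPolynomial (Fin n ⊕ Fin m) ℝ) (x : Fin n → ℝ)
    (y : Fin m → ℝ) : beval (f + g) x y = beval f x y + beval g x y := map_add _ _ _

theorem beval_sum {n m : ℕ} {α : Type*} (s : Finset α) (f : α → MvPolynomial (Fin n ⊕ Fin m) ℝ)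
    (x : Fin n → ℝ) (y : Fin m → ℝ) : beval (∑ a ∈ s, f a) x y = ∑ a ∈ s, beval (f a) x y :=
  map_sum _ _ _

theorem tensorPoly_mem_biform {n m : ℕ} (A : Fin n → Fin n → Fin m → Fin m → ℝ) :
    tensorPoly A ∈ Biform n m (2 * 1) (2 * 1) := by
  refine IsWeightedHomogeneous.sum _ _ _ fun i _ => IsWeightedHomogeneous.sum _ _ _ fun j _ =>
    IsWeightedHomogeneous.sum _ _ _ fun k _ => IsWeightedHomogeneous.sum _ _ _ fun l _ => ?_
  have hX := fun a => isWeightedHomogeneous_X ℝ (bw n m) a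
  have := (isWeightedHomogeneous_C (bw n m) (A i j k l)).mul
    (((hX (Sum.inl i)).mul (hX (Sum.inl j))).mul ((hX (Sum.inr k)).mul (hX (Sum.inr l))))
  simpa [bw] using this

theorem matrixPoly_mem_biform {n m : ℕ} (b : Fin n × Fin m → ℝ) :
    (∑ p, C (b p) * (X (Sum.inl p.1) * X (Sum.inr p.2)) : MvPolynomial (Fin n ⊕ Fin m) ℝ) ∈
      Biform n m 1 1 := by
  refine IsWeightedHomogeneous.sum _ _ _ fun p _ => ?_
  have hX := fun a => isWeightedHomogeneous_X ℝ (bw n m) a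
  have := (isWeightedHomogeneous_C (bw n m) (b p)).mul ((hX (Sum.inl p.1)).mul (hX (Sum.inr p.2)))
  simpa [bw] using this

theorem exists_prod_pow_eq {n d : ℕ} (s : Fin n → ℕ) (hs : ∑ i, s i = d + 1) :
    ∃ (i : Fin n) (s' : Fin n → ℕ), ∑ j, s' j = d ∧
      ∀ x : Fin n → ℝ, ∏ j, x j ^ s j = x i * ∏ j, x j ^ s' j := by
  obtain ⟨i, hi⟩ : ∃ i, s i ≠ 0 := by
    by_contra! h
    simp [h] at hs
  obtain ⟨c, hc⟩ := Nat.exists_eq_succ_of_ne_zero hi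
  have h1 : ∀ j, s j = Function.update s i c j + if j = i then 1 else 0 := by
    intro j
    by_cases hj : j = i
    · subst hj; simp [hc]
    · simp [hj]
  refine ⟨i, Function.update s i c, ?_, fun x => ?_⟩
  · have h2 : ∑ j, s j = ∑ j, (Function.update s i c j + if j = i then 1 else 0) :=
      Finset.sum_congr rfl fun j _ => h1 j
    rw [Finset.sum_add_distrib, Finset.sum_ite_eq' Finset.univ i, if_pos (Finset.mem_univ i)] at h2
    omega
  · rw [Finset.prod_congr rfl fun j _ => by rw [h1 j, pow_add], Finset.prod_mul_distrib, mul_comm]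
    congr 1
    simp [pow_ite]

theorem exists_prod_pow_eq_one {n : ℕ} (s : Fin n → ℕ) (hs : ∑ i, s i = 1) :
    ∃ i, ∀ x : Fin n → ℝ, ∏ j, x j ^ s j = x i := by
  obtain ⟨i, s', hs', h⟩ := exists_prod_pow_eq s hs
  refine ⟨i, fun x => ?_⟩
  have : ∀ j, s' j = 0 := by simpa using hs'
  simp [h, this]

theorem exists_prod_pow_eq_two {n : ℕ} (s : Fin n → ℕ) (hs : ∑ i, s i = 2) :
    ∃ i j, ∀ x : Fin n → ℝ, ∏ j, x j ^ s j = x i * x j := by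
  obtain ⟨i, s', hs', h⟩ := exists_prod_pow_eq s hs
  obtain ⟨j, h'⟩ := exists_prod_pow_eq_one s' hs'
  exact ⟨i, j, fun x => by rw [h, h']⟩

theorem biform_coeff_degrees {n m a b : ℕ} {f : MvPolynomial (Fin n ⊕ Fin m) ℝ}
    (hf : f ∈ Biform n m a b) {s : Fin n ⊕ Fin m →₀ ℕ} (hs : s ∈ f.support) :
    ∑ i, s (Sum.inl i) = a ∧ ∑ k, s (Sum.inr k) = b := by
  have h := hf (mem_support_iff.1 hs)
  rw [Finsupp.weight_apply, Finsupp.sum_fintype _ _ (by simp), Fintype.sum_sum_type] at h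
  simpa [bw, Prod.ext_iff, Prod.fst_sum, Prod.snd_sum] using h

theorem beval_eq_sum {n m : ℕ} (f : MvPolynomial (Fin n ⊕ Fin m) ℝ) (x : Fin n → ℝ)
    (y : Fin m → ℝ) : beval f x y = ∑ s ∈ f.support,
      coeff s f * ((∏ i, x i ^ s (Sum.inl i)) * ∏ k, y k ^ s (Sum.inr k)) := by
  rw [beval, eval_eq']
  simp [Fintype.prod_sum_type]

theorem exists_beval_eq_of_biform_one {n m : ℕ} {f : MvPolynomial (Fin n ⊕ Fin m) ℝ}
    (hf : f ∈ Biform n m 1 1) :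
    ∃ b : Fin n × Fin m → ℝ, ∀ x y, beval f x y = ∑ p, b p * (x p.1 * y p.2) := by
  classical
  have hi : ∀ s : f.support, ∃ p : Fin n × Fin m, ∀ (x : Fin n → ℝ) (y : Fin m → ℝ),
      (∏ i, x i ^ s.1 (Sum.inl i)) * ∏ k, y k ^ s.1 (Sum.inr k) = x p.1 * y p.2 := by
    intro s
    obtain ⟨h1, h2⟩ := biform_coeff_degrees hf s.2
    obtain ⟨i, hi⟩ := exists_prod_pow_eq_one _ h1
    obtain ⟨k, hk⟩ := exists_prod_pow_eq_one _ h2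
    exact ⟨(i, k), fun x y => by rw [hi, hk]⟩
  choose p hp using hi
  refine ⟨fun q => ∑ s : f.support, if q = p s then coeff s.1 f else 0, fun x y => ?_⟩
  rw [beval_eq_sum, ← Finset.sum_coe_sort]
  simp only [hp, Finset.sum_mul]
  rw [Finset.sum_comm]
  simp [ite_mul]

theorem exists_beval_eq_of_biform_two {n m : ℕ} {f : MvPolynomial (Fin n ⊕ Fin m) ℝ}
    (hf : f ∈ Biform n m (2 * 1) (2 * 1)) :
    ∃ A : Fin n → Fin n → Fin m → Fin m → ℝ, ∀ x y, beval f x y = biquad A x y := by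
  classical
  have hi : ∀ s : f.support, ∃ p : Fin n × Fin n × Fin m × Fin m,
      ∀ (x : Fin n → ℝ) (y : Fin m → ℝ),
      (∏ i, x i ^ s.1 (Sum.inl i)) * ∏ k, y k ^ s.1 (Sum.inr k) =
        x p.1 * x p.2.1 * (y p.2.2.1 * y p.2.2.2) := by
    intro s
    obtain ⟨h1, h2⟩ := biform_coeff_degrees hf s.2
    obtain ⟨i, j, hi⟩ := exists_prod_pow_eq_two _ h1
    obtain ⟨k, l, hk⟩ := exists_prod_pow_eq_two _ h2
    exact ⟨(i, j, k, l), fun x y => by rw [hi, hk]⟩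
  choose p hp using hi
  refine ⟨fun i j k l => ∑ s : f.support, if (i, j, k, l) = p s then coeff s.1 f else 0,
    fun x y => ?_⟩
  rw [beval_eq_sum, ← Finset.sum_coe_sort]
  have : ∀ A : Fin n → Fin n → Fin m → Fin m → ℝ, biquad A x y =
      ∑ q : Fin n × Fin n × Fin m × Fin m, A q.1 q.2.1 q.2.2.1 q.2.2.2 *
        (x q.1 * x q.2.1 * (y q.2.2.1 * y q.2.2.2)) := by
    intro A; simp only [Fintype.sum_prod_type, biquad]
  rw [this]
  simp only [hp, Finset.sum_mul]
  rw [Finset.sum_comm]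
  simp [ite_mul]

/-- Symmetrization of a tensor. -/
theorem exists_symm_biquad_eq {ι κ : Type*} [Fintype ι] [Fintype κ] (A : ι → ι → κ → κ → ℝ) :
    ∃ A' : ι → ι → κ → κ → ℝ, (∀ i j k l, A' i j k l = A' j i k l) ∧
      (∀ i j k l, A' i j k l = A' i j l k) ∧ ∀ x y, biquad A' x y = biquad A x y := by
  refine ⟨fun i j k l => 1 / 4 * (A i j k l + A j i k l + A i j l k + A j i l k),
    fun i j k l => by ring, fun i j k l => by ring, fun x y => ?_⟩
  have e1 : biquad (fun i j k l => A j i k l) x y = biquad A x y := by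
    rw [biquad, Finset.sum_comm, biquad]
    exact Finset.sum_congr rfl fun _ _ => Finset.sum_congr rfl fun _ _ =>
      Finset.sum_congr rfl fun _ _ => Finset.sum_congr rfl fun _ _ => by ring
  have e2 : ∀ B : ι → ι → κ → κ → ℝ, biquad (fun i j k l => B i j l k) x y = biquad B x y := by
    intro B
    rw [biquad, biquad]
    refine Finset.sum_congr rfl fun _ _ => Finset.sum_congr rfl fun _ _ => ?_
    rw [Finset.sum_comm]
    exact Finset.sum_congr rfl fun _ _ => Finset.sum_congr rfl fun _ _ => by ring
  have e3 := e2 A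
  have e4 := (e2 fun i j k l => A j i k l).trans e1
  have e5 : biquad (fun i j k l => 1 / 4 * (A i j k l + A j i k l + A i j l k + A j i l k)) x y =
      1 / 4 * (biquad A x y + biquad (fun i j k l => A j i k l) x y +
        biquad (fun i j k l => A i j l k) x y + biquad (fun i j k l => A j i l k) x y) := by
    simp only [biquad, add_mul, mul_assoc, Finset.sum_add_distrib, ← Finset.mul_sum]
  rw [e5, e1, e3, e4]
  ring

theorem BiformPaper.IsSphereMeasure.ae_sum_sq {n : ℕ} {σ : Measure (Fin n → ℝ)}
    (h : IsSphereMeasure n σ) :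
    ∀ᵐ x ∂σ, ∑ i, x i ^ 2 = 1 := h.onSphere

theorem BiformPaper.IsSphereMeasure.integrable_mul {n : ℕ} {σ : Measure (Fin n → ℝ)}
    (h : IsSphereMeasure n σ) (i j : Fin n) : Integrable (fun x => x i * x j) σ := by
  have := h.prob
  refine Integrable.of_bound (C := 1) (by fun_prop) ?_
  filter_upwards [h.ae_sum_sq] with x hx
  have h1 : ∀ k, x k ^ 2 ≤ 1 := fun k =>
    (Finset.single_le_sum (f := fun k => x k ^ 2) (fun _ _ => sq_nonneg _)
      (Finset.mem_univ k)).trans_eq hx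
  rw [Real.norm_eq_abs, abs_le]
  constructor <;> nlinarith [h1 i, h1 j, sq_nonneg (x i + x j), sq_nonneg (x i - x j)]

theorem BiformPaper.IsSphereMeasure.integral_mulVec {n : ℕ} {σ : Measure (Fin n → ℝ)}
    (h : IsSphereMeasure n σ) {Q : Matrix (Fin n) (Fin n) ℝ} (hQ : Q * Q.transpose = 1)
    (i j : Fin n) : ∫ x, Q.mulVec x i * Q.mulVec x j ∂σ = ∫ x, x i * x j ∂σ := by
  have hm : Continuous Q.mulVec := Q.mulVecLin.continuous_of_finiteDimensional
  conv_rhs => rw [← h.invariant Q hQ]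
  rw [integral_map hm.measurable.aemeasurable]
  exact (by fun_prop : Continuous fun x : Fin n → ℝ => x i * x j).aestronglyMeasurable

theorem BiformPaper.IsSphereMeasure.integral_mul_of_ne {n : ℕ} {σ : Measure (Fin n → ℝ)}
    (h : IsSphereMeasure n σ) {i j : Fin n} (hij : i ≠ j) : ∫ x, x i * x j ∂σ = 0 := by
  have h1 := h.integral_mulVec (Q := Matrix.diagonal fun a => if a = i then -1 else 1) (by
    rw [Matrix.diagonal_transpose, Matrix.diagonal_mul_diagonal, ← Matrix.diagonal_one]
    congr 1
    ext a
    split_ifs <;> norm_num) i j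
  simp only [Matrix.mulVec_diagonal, if_true, if_neg hij.symm, one_mul, neg_mul,
    integral_neg] at h1
  linarith

theorem BiformPaper.IsSphereMeasure.integral_mul_self_eq {n : ℕ} {σ : Measure (Fin n → ℝ)}
    (h : IsSphereMeasure n σ) (i j : Fin n) : ∫ x, x i * x i ∂σ = ∫ x, x j * x j ∂σ := by
  have h1 := h.integral_mulVec
    (Q := (1 : Matrix (Fin n) (Fin n) ℝ).submatrix (Equiv.swap i j) id) (by
    ext a b
    simp [Matrix.mul_apply, Matrix.one_apply]) i i
  rw [← h1]
  simp [Matrix.mulVec, dotProduct, Matrix.one_apply]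

theorem BiformPaper.IsSphereMeasure.integral_mul_self {n : ℕ} {σ : Measure (Fin n → ℝ)}
    (h : IsSphereMeasure n σ) (i : Fin n) : ∫ x, x i * x i ∂σ = 1 / n := by
  have := h.prob
  have h1 : ∫ x, ∑ j, x j * x j ∂σ = 1 := by
    rw [integral_congr_ae (g := fun _ => (1 : ℝ))]
    · simp
    · filter_upwards [h.ae_sum_sq] with x hx
      simpa only [sq] using (hx : ∑ j, x j ^ 2 = 1)
  rw [integral_finsetSum _ fun j _ => h.integrable_mul j j,
    Finset.sum_congr rfl fun j _ => h.integral_mul_self_eq j i] at h1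
  have hn : (n : ℝ) ≠ 0 := by
    have := i.pos
    positivity
  rw [eq_div_iff hn, mul_comm]
  simpa using h1

theorem BiformPaper.IsSphereMeasure.integral_quad {n : ℕ} {σ : Measure (Fin n → ℝ)}
    (h : IsSphereMeasure n σ) (B : Fin n → Fin n → ℝ) :
    ∫ x, ∑ i, ∑ j, B i j * (x i * x j) ∂σ = (∑ i, B i i) / n := by
  have hB : ∀ i j, Integrable (fun x : Fin n → ℝ => B i j * (x i * x j)) σ :=
    fun i j => (h.integrable_mul i j).const_mul _
  rw [integral_finsetSum _ fun i _ => integrable_finsetSum _ fun j _ => hB i j, Finset.sum_div]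
  refine Finset.sum_congr rfl fun i _ => ?_
  rw [integral_finsetSum _ fun j _ => hB i j, Finset.sum_eq_single i]
  · rw [integral_const_mul, h.integral_mul_self]; ring
  · intro j _ hj
    rw [integral_const_mul, h.integral_mul_of_ne hj.symm, mul_zero]
  · simp

theorem bavg_eq_trace {n m : ℕ} {σ₁ : Measure (Fin n → ℝ)} {σ₂ : Measure (Fin m → ℝ)}
    (h₁ : IsSphereMeasure n σ₁) (h₂ : IsSphereMeasure m σ₂)
    {f : MvPolynomial (Fin n ⊕ Fin m) ℝ} {A : Fin n → Fin n → Fin m → Fin m → ℝ}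
    (hf : ∀ x y, beval f x y = biquad A x y) :
    bavg σ₁ σ₂ f = (∑ i, ∑ k, A i i k k) / n / m := by
  have e1 : ∀ x : Fin n → ℝ, ∫ y, beval f x y ∂σ₂ =
      ∑ i, ∑ j, (∑ k, A i j k k) / m * (x i * x j) := by
    intro x
    have : ∀ y : Fin m → ℝ, beval f x y =
        ∑ k, ∑ l, (∑ i, ∑ j, A i j k l * (x i * x j)) * (y k * y l) := by
      intro y
      rw [hf, ← biquad_swap, biquad]
      simp only [Finset.sum_mul]
      refine Finset.sum_congr rfl fun _ _ => Finset.sum_congr rfl fun _ _ =>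
        Finset.sum_congr rfl fun _ _ => Finset.sum_congr rfl fun _ _ => by ring
    simp only [this]
    rw [h₂.integral_quad, Finset.sum_comm, Finset.sum_div]
    refine Finset.sum_congr rfl fun i _ => ?_
    rw [Finset.sum_comm, Finset.sum_div]
    refine Finset.sum_congr rfl fun j _ => ?_
    rw [← Finset.sum_mul]
    ring
  rw [bavg]
  simp only [e1]
  rw [h₁.integral_quad, ← Finset.sum_div]
  ring

/-- The linear parametrization of the average-free biforms by symmetric tensors. -/
def symPoly (n m : ℕ) : symTensor (Fin n) (Fin m) →ₗ[ℝ] MvPolynomial (Fin n ⊕ Fin m) ℝ where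
  toFun A := tensorPoly (symEntry A)
  map_add' A B := by
    refine eq_of_beval_eq fun x y => ?_
    rw [beval_add, beval_tensorPoly, beval_tensorPoly, beval_tensorPoly, symEntry_add, biquad_add]
  map_smul' c A := by
    simp only [tensorPoly, symEntry_smul, Finset.smul_sum, Pi.smul_apply, smul_eq_mul, map_mul,
      RingHom.id_apply, MvPolynomial.smul_eq_C_mul, mul_assoc]

theorem beval_symPoly {n m : ℕ} (A : symTensor (Fin n) (Fin m)) (x : Fin n → ℝ) (y : Fin m → ℝ) :
    beval (symPoly n m A) x y = biquad (symEntry A) x y := beval_tensorPoly _ x y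

theorem beval_symPoly_add_qpoly {n m : ℕ} (A : symTensor (Fin n) (Fin m)) (x : Fin n → ℝ)
    (y : Fin m → ℝ) : beval (symPoly n m A + qpoly n m 1 1) x y =
      biquad (idTensor (Fin n) (Fin m) + symEntry A) x y := by
  rw [beval_add, beval_symPoly, beval_qpoly, biquad_add, add_comm]

theorem symPoly_injective (n m : ℕ) : Function.Injective (symPoly n m) := by
  refine (injective_iff_map_eq_zero _).2 fun A hA => ?_
  have h := eq_zero_of_biquad_eq_zero (symEntry A) (symEntry_symm_left A) (symEntry_symm_right A)
    fun x y => by rw [← beval_symPoly, hA]; simp [beval]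
  refine Subtype.ext ?_
  ext ⟨i, j, k, l⟩
  exact congrFun (congrFun (congrFun (congrFun h i) j) k) l

theorem range_symPoly {n m : ℕ} {σ₁ : Measure (Fin n → ℝ)} {σ₂ : Measure (Fin m → ℝ)}
    (hn : n ≠ 0) (hm : m ≠ 0) (h₁ : IsSphereMeasure n σ₁) (h₂ : IsSphereMeasure m σ₂) :
    Set.range (symPoly n m) = MSet n m 1 1 σ₁ σ₂ := by
  ext f
  constructor
  · rintro ⟨A, rfl⟩
    refine ⟨tensorPoly_mem_biform _, ?_⟩
    rw [bavg_eq_trace h₁ h₂ (beval_symPoly A), symEntry_trace, zero_div, zero_div]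
  · rintro ⟨hf, hf0⟩
    obtain ⟨A, hA⟩ := exists_beval_eq_of_biform_two hf
    obtain ⟨B, hB1, hB2, hB⟩ := exists_symm_biquad_eq A
    have hfB : ∀ x y, beval f x y = biquad B x y := fun x y => (hA x y).trans (hB x y).symm
    rw [bavg_eq_trace h₁ h₂ hfB, div_div, div_eq_zero_iff] at hf0
    have hnm : (n : ℝ) * m ≠ 0 := by positivity
    refine ⟨⟨WithLp.toLp 2 fun p => B p.1 p.2.1 p.2.2.1 p.2.2.2, fun i j k l => hB1 i j k l,
      fun i j k l => hB2 i j k l, hf0.resolve_right hnm⟩, eq_of_beval_eq fun x y => ?_⟩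
    rw [beval_symPoly, hfB]
    rfl

theorem symPoly_add_qpoly_mem_posSet {n m : ℕ} (A : symTensor (Fin n) (Fin m)) :
    symPoly n m A + qpoly n m 1 1 ∈ PosSet n m 1 1 ↔ A ∈ posTensor (Fin n) (Fin m) := by
  refine ⟨fun h x y => ?_, fun h => ⟨?_, fun x y => ?_⟩⟩
  · rw [← beval_symPoly_add_qpoly]
    exact h.2 x y
  · have : symPoly n m A + qpoly n m 1 1 =
        tensorPoly (idTensor (Fin n) (Fin m) + symEntry A) :=
      eq_of_beval_eq fun x y => by rw [beval_symPoly_add_qpoly, beval_tensorPoly]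
    rw [this]
    exact tensorPoly_mem_biform _
  · rw [beval_symPoly_add_qpoly]
    exact h x y

theorem symPoly_add_qpoly_mem_sqSet {n m : ℕ} (A : symTensor (Fin n) (Fin m)) :
    symPoly n m A + qpoly n m 1 1 ∈ SqSet n m 1 1 ↔ A ∈ sqTensor (Fin n) (Fin m) := by
  have key : ∀ {α : Type} [Fintype α] (b : α → Fin n × Fin m → ℝ) (z : Fin n × Fin m → ℝ),
      ∑ p, ∑ q, (∑ a, b a p * b a q) * (z p * z q) = ∑ a, (∑ p, b a p * z p) ^ 2 := by
    intro α _ b z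
    calc _ = ∑ p, ∑ q, ∑ a, (b a p * z p) * (b a q * z q) :=
          Finset.sum_congr rfl fun p _ => Finset.sum_congr rfl fun q _ => by
            rw [Finset.sum_mul]
            exact Finset.sum_congr rfl fun a _ => by ring
      _ = ∑ p, ∑ a, ∑ q, (b a p * z p) * (b a q * z q) :=
          Finset.sum_congr rfl fun p _ => Finset.sum_comm
      _ = ∑ a, ∑ p, ∑ q, (b a p * z p) * (b a q * z q) := Finset.sum_comm
      _ = _ := Finset.sum_congr rfl fun a _ => by rw [sq, Finset.sum_mul_sum]
  constructor
  · rintro ⟨N, g, hg, h⟩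
    choose b hb using fun i => exists_beval_eq_of_biform_one (hg i)
    refine ⟨fun p q => ∑ a, b a p * b a q, fun p q => Finset.sum_congr rfl fun a _ => mul_comm _ _,
      fun z => ?_, fun x y => ?_⟩
    · rw [key]
      positivity
    · rw [key b fun p => x p.1 * y p.2, ← beval_symPoly_add_qpoly, h, beval_sum]
      refine Finset.sum_congr rfl fun a _ => ?_
      rw [← hb]
      simp [beval]
  · rintro ⟨M, hM1, hM2, hM⟩
    obtain ⟨B, rfl⟩ := exists_eq_mul_transpose M hM1 hM2
    let e := Fintype.equivFin (Fin n × Fin m)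
    refine ⟨_, fun r => ∑ p, C (B p (e.symm r)) * (X (Sum.inl p.1) * X (Sum.inr p.2)),
      fun r => matrixPoly_mem_biform _, eq_of_beval_eq fun x y => ?_⟩
    rw [beval_symPoly_add_qpoly, hM, beval_sum]
    have := key (fun a p => B p a) fun p => x p.1 * y p.2
    simp only [Matrix.mul_apply, Matrix.transpose_apply]
    rw [this, ← Equiv.sum_comp e.symm]
    refine Finset.sum_congr rfl fun r _ => ?_
    simp [beval]

theorem exists_haar_measure_eq {n m D : ℕ} {σ₁ : Measure (Fin n → ℝ)} {σ₂ : Measure (Fin m → ℝ)}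
    (hn : n ≠ 0) (hm : m ≠ 0) (h₁ : IsSphereMeasure n σ₁) (h₂ : IsSphereMeasure m σ₂)
    {ψ : (Fin D → ℝ) →ₗ[ℝ] MvPolynomial (Fin n ⊕ Fin m) ℝ}
    (hψ : IsUnitaryParam n m D σ₁ σ₂ (MSet n m 1 1 σ₁ σ₂) ψ) :
    ∃ ν : Measure (symTensor (Fin n) (Fin m)), ν.IsAddHaarMeasure ∧
      Module.finrank ℝ (symTensor (Fin n) (Fin m)) = D ∧
      volume (ψ ⁻¹' tilde n m 1 1 σ₁ σ₂ (SqSet n m 1 1)) = ν (sqTensor (Fin n) (Fin m)) ∧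
      volume (ψ ⁻¹' tilde n m 1 1 σ₁ σ₂ (PosSet n m 1 1)) = ν (posTensor (Fin n) (Fin m)) := by
  have hr : LinearMap.range ψ = LinearMap.range (symPoly n m) := by
    apply SetLike.coe_injective
    rw [LinearMap.coe_range, LinearMap.coe_range, hψ.range, range_symPoly hn hm h₁ h₂]
  let e : (Fin D → ℝ) ≃ₗ[ℝ] symTensor (Fin n) (Fin m) := (LinearEquiv.ofInjective ψ hψ.inj).trans
    ((LinearEquiv.ofEq _ _ hr).trans (LinearEquiv.ofInjective _ (symPoly_injective n m)).symm)
  have he : ∀ a, symPoly n m (e a) = ψ a := fun a =>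
    congrArg Subtype.val ((LinearEquiv.ofInjective _ (symPoly_injective n m)).apply_symm_apply
      (LinearEquiv.ofEq _ _ hr (LinearEquiv.ofInjective ψ hψ.inj a)))
  have hM : ∀ a, ψ a ∈ MSet n m 1 1 σ₁ σ₂ := fun a => hψ.range ▸ Set.mem_range_self a
  refine ⟨volume.map e.toContinuousLinearEquiv,
    e.toContinuousLinearEquiv.isAddHaarMeasure_map volume, ?_, ?_, ?_⟩
  · rw [← e.finrank_eq, Module.finrank_fin_fun]
  · have := e.toContinuousLinearEquiv.toHomeomorph.toMeasurableEquiv.map_apply (μ := volume)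
      (sqTensor (Fin n) (Fin m))
    refine Eq.trans (congrArg _ ?_) this.symm
    ext a
    refine Iff.trans ?_ (symPoly_add_qpoly_mem_sqSet (e a))
    rw [he]
    exact and_iff_right (hM a)
  · have := e.toContinuousLinearEquiv.toHomeomorph.toMeasurableEquiv.map_apply (μ := volume)
      (posTensor (Fin n) (Fin m))
    refine Eq.trans (congrArg _ ?_) this.symm
    ext a
    refine Iff.trans ?_ (symPoly_add_qpoly_mem_posSet (e a))
    rw [he]
    exact and_iff_right (hM a)

theorem four_mul_pow_mul_lt {V : ENNReal} (hV0 : V ≠ 0) (hV : V ≠ ⊤) {D : ℕ} (hD : 35 ≤ D)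
    {x y : ℝ} (hx : 0 < x) (hxy : 1.05 * x ≤ y) :
    4 * (ENNReal.ofReal x ^ D * V) < ENNReal.ofReal y ^ D * V := by
  have h1 : (4 : ℝ) < 1.05 ^ D :=
    lt_of_lt_of_le (by norm_num) (pow_le_pow_right₀ (by norm_num) hD)
  have h2 : 4 * x ^ D < y ^ D := calc
    4 * x ^ D < 1.05 ^ D * x ^ D := by gcongr
    _ = (1.05 * x) ^ D := (mul_pow _ _ _).symm
    _ ≤ y ^ D := by gcongr
  rw [← mul_assoc]
  refine ENNReal.mul_lt_mul_left hV0 hV ?_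
  have hy : 0 < y := lt_of_lt_of_le (by positivity) hxy
  rw [← ENNReal.ofReal_pow hx.le, ← ENNReal.ofReal_pow hy.le,
    show (4 : ENNReal) = ENNReal.ofReal 4 by simp, ← ENNReal.ofReal_mul (by norm_num)]
  exact (ENNReal.ofReal_lt_ofReal_iff (by positivity)).2 h2

theorem div_lt_ofReal_pow {a b V : ENNReal} (hV0 : V ≠ 0) (hV : V ≠ ⊤) {D : ℕ} (hD : 35 ≤ D)
    {p q c : ℝ} (hp : 0 < p) (hq : 0 < q) (hc : 0 < c) (h : 1.05 * p ≤ c * q)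
    (ha : a ≤ 2 * (ENNReal.ofReal p ^ D * V)) (hb : ENNReal.ofReal q ^ D * V ≤ 2 * b) :
    a / b < ENNReal.ofReal c ^ D := by
  have hb0 : b ≠ 0 := by
    rintro rfl
    have : ENNReal.ofReal q ^ D * V ≠ 0 :=
      mul_ne_zero (pow_ne_zero _ (ENNReal.ofReal_pos.2 hq).ne') hV0
    exact this (by simpa using hb)
  have hc0 : ENNReal.ofReal c ^ D ≠ 0 := pow_ne_zero _ (ENNReal.ofReal_pos.2 hc).ne'
  have hat : a ≠ ⊤ := ne_top_of_le_ne_top (by finiteness) ha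
  rw [ENNReal.div_lt_iff (Or.inl hb0) (Or.inr hat)]
  have h1 := four_mul_pow_mul_lt hV0 hV hD hp h
  rw [ENNReal.ofReal_mul hc.le, mul_pow, mul_assoc] at h1
  by_contra! h2
  refine absurd h1 (not_lt.2 ?_)
  calc _ ≤ ENNReal.ofReal c ^ D * (2 * b) := by gcongr
    _ = 2 * (ENNReal.ofReal c ^ D * b) := by ring
    _ ≤ 2 * (2 * (ENNReal.ofReal p ^ D * V)) := mul_le_mul_right (h2.trans ha) _
    _ = _ := by ring

theorem ofReal_pow_lt_div {a b V : ENNReal} (hV0 : V ≠ 0) (hV : V ≠ ⊤) {D : ℕ} (hD : 35 ≤ D)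
    {p q c : ℝ} (hp : 0 < p) (hc : 0 < c) (h : 1.05 * (c * p) ≤ q)
    (ha : ENNReal.ofReal q ^ D * V ≤ 2 * a) (hb : b ≤ 2 * (ENNReal.ofReal p ^ D * V)) :
    ENNReal.ofReal c ^ D < a / b := by
  have hbt : b ≠ ⊤ := ne_top_of_le_ne_top (by finiteness) hb
  rw [ENNReal.lt_div_iff_mul_lt (Or.inr (by finiteness)) (Or.inl hbt)]
  have h1 := four_mul_pow_mul_lt hV0 hV hD (mul_pos hc hp) h
  rw [ENNReal.ofReal_mul hc.le, mul_pow, mul_assoc] at h1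
  by_contra! h2
  refine absurd h1 (not_lt.2 ?_)
  calc _ ≤ 2 * a := ha
    _ ≤ 2 * (ENNReal.ofReal c ^ D * b) := by gcongr
    _ ≤ 2 * (ENNReal.ofReal c ^ D * (2 * (ENNReal.ofReal p ^ D * V))) := by gcongr
    _ = _ := by ring

theorem four_mul_pow_le_exp {k : ℕ} (hk : 3 ≤ k) : 4 * (81 : ℝ) ^ k ≤ Real.exp (5 * k) := by
  have h1 : (148 : ℝ) ≤ Real.exp 5 := by
    have : Real.exp 5 = Real.exp 1 ^ 5 := by rw [← Real.exp_nat_mul]; norm_num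
    rw [this]
    refine le_trans ?_ (pow_le_pow_left₀ (by norm_num) (Real.exp_one_gt_d9.le) 5)
    norm_num
  have h2 : 4 * (81 : ℝ) ^ k ≤ 148 ^ k := by
    induction k, hk using Nat.le_induction with
    | base => norm_num
    | succ k _ ih =>
      rw [pow_succ, pow_succ]
      nlinarith [pow_pos (show (0 : ℝ) < 81 by norm_num) k]
  refine h2.trans ?_
  rw [mul_comm, Real.exp_nat_mul]
  gcongr

theorem four_mul_sq_mul_pow_le_exp {a b : ℕ} (hab : a ≤ b) (hb : 3 ≤ b) :
    4 * ((a : ℝ) ^ 2 * 81 ^ b) ≤ Real.exp (6 * b) := by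
  have h1 : (324 : ℝ) ≤ Real.exp 6 := by
    have : Real.exp 6 = Real.exp 1 ^ 6 := by rw [← Real.exp_nat_mul]; norm_num
    rw [this]
    refine le_trans ?_ (pow_le_pow_left₀ (by norm_num) (Real.exp_one_gt_d9.le) 6)
    norm_num
  have h2 : 4 * b ^ 2 ≤ 4 ^ b := by
    clear hab
    induction b, hb using Nat.le_induction with
    | base => norm_num
    | succ k hk ih =>
      rw [pow_succ 4]
      nlinarith
  have h3 : (a : ℝ) ≤ b := by exact_mod_cast hab
  calc 4 * ((a : ℝ) ^ 2 * 81 ^ b) ≤ 4 * ((b : ℝ) ^ 2 * 81 ^ b) := by gcongr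
    _ = (4 * (b : ℝ) ^ 2) * 81 ^ b := by ring
    _ ≤ 4 ^ b * 81 ^ b := by gcongr; exact_mod_cast h2
    _ = 324 ^ b := by rw [← mul_pow]; norm_num
    _ ≤ Real.exp 6 ^ b := by gcongr
    _ = _ := by rw [mul_comm, Real.exp_nat_mul]

theorem two_pow_mul_ofReal_pow_le {k D : ℕ} (hk : k ≤ 4 * D) {x y : ℝ} (hxy : 16 * x ≤ y)
    (V : ENNReal) :
    2 * 2 ^ k * (ENNReal.ofReal x ^ D * V) ≤ 2 * (ENNReal.ofReal y ^ D * V) := by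
  have h1 : (2 : ENNReal) ^ k ≤ 16 ^ D := by
    refine (pow_le_pow_right₀ (by norm_num) hk).trans_eq ?_
    rw [pow_mul]
    norm_num
  calc 2 * 2 ^ k * (ENNReal.ofReal x ^ D * V) ≤ 2 * 16 ^ D * (ENNReal.ofReal x ^ D * V) := by
        gcongr
    _ = 2 * ((16 * ENNReal.ofReal x) ^ D * V) := by ring
    _ = 2 * (ENNReal.ofReal (16 * x) ^ D * V) := by
        rw [ENNReal.ofReal_mul (by norm_num)]
        simp
    _ ≤ _ := by gcongr

theorem measure_sqTensor_le_sqrt {n m : ℕ} (hn : 3 ≤ n) (hm : 3 ≤ m)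
    (ν : Measure (symTensor (Fin n) (Fin m))) [ν.IsAddHaarMeasure]
    (hD : (n * m) ^ 2 ≤ 4 * Module.finrank ℝ (symTensor (Fin n) (Fin m))) :
    ν (sqTensor (Fin n) (Fin m)) ≤
    2 * (ENNReal.ofReal (360 * √(n * m)) ^ Module.finrank ℝ (symTensor (Fin n) (Fin m)) *
      ν (Metric.closedBall 0 1)) := by
  have hN : (0 : ℝ) < n * m := by positivity
  have hN3 : 3 ≤ n * m := by nlinarith
  have hs : √((n : ℝ) * m) ^ 2 = n * m := Real.sq_sqrt hN.le
  have hs0 : 0 < √((n : ℝ) * m) := Real.sqrt_pos.2 hN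
  refine (measure_sqTensor_le ν (t := √10 / √(n * m)) (by positivity) ?_ ?_).trans ?_
  · simp only [Fintype.card_fin]
    positivity
  · simp only [Fintype.card_fin]
    refine (four_mul_pow_le_exp hN3).trans_eq ?_
    rw [div_pow, hs, Real.sq_sqrt (by norm_num)]
    push_cast
    congr 1
    field_simp
    norm_num
  · simp only [Fintype.card_fin]
    refine two_pow_mul_ofReal_pow_le hD ?_ _
    have h10 : √10 ≤ 3.1625 := Real.sqrt_le_left (by norm_num) |>.2 (by norm_num)
    have : 16 * (64 / 9 * ((n : ℝ) * m) * (√10 / √(n * m))) = 1024 / 9 * √10 * √(n * m) := by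
      field_simp
      rw [hs]
      ring
    rw [this]
    gcongr
    linarith

theorem measure_sqTensor_ge_sqrt {n m : ℕ} (hn : 3 ≤ n) (hm : 3 ≤ m)
    (ν : Measure (symTensor (Fin n) (Fin m))) [ν.IsAddHaarMeasure]
    (hD : (n * m) ^ 2 ≤ 4 * Module.finrank ℝ (symTensor (Fin n) (Fin m))) :
    ENNReal.ofReal (√(n * m) / 11.25) ^ Module.finrank ℝ (symTensor (Fin n) (Fin m)) *
      ν (Metric.closedBall 0 1) ≤ 2 * ν (sqTensor (Fin n) (Fin m)) := by
  have hN : (0 : ℝ) < n * m := by positivity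
  have hN3 : 3 ≤ n * m := by nlinarith
  have hs : √((n : ℝ) * m) ^ 2 = n * m := Real.sq_sqrt hN.le
  have hs0 : 0 < √((n : ℝ) * m) := Real.sqrt_pos.2 hN
  refine le_trans ?_ (measure_sqTensor_ge ν (t := √40 / √(n * m)) (by positivity) ?_)
  · gcongr ENNReal.ofReal ?_ ^ _ * _
    have h40 : √40 ≤ 6.325 := Real.sqrt_le_left (by norm_num) |>.2 (by norm_num)
    rw [div_le_div_iff₀ (by norm_num) (by positivity)]
    field_simp
    linarith
  · simp only [Fintype.card_fin]
    refine (four_mul_pow_le_exp hN3).trans (Real.exp_le_exp.2 ?_)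
    rw [div_pow, hs, Real.sq_sqrt (by norm_num)]
    have h4 : ((n : ℝ) * m) ^ 2 ≤ 4 * Module.finrank ℝ (symTensor (Fin n) (Fin m)) := by
      exact_mod_cast hD
    push_cast
    rw [le_div_iff₀ (by norm_num), mul_div_assoc', le_div_iff₀ hN]
    nlinarith

theorem measure_posTensor_ge_sqrt {n m : ℕ} (hn : 3 ≤ n) (hm : 3 ≤ m)
    (ν : Measure (symTensor (Fin n) (Fin m))) [ν.IsAddHaarMeasure]
    (hD : (n * m) ^ 2 ≤ 4 * Module.finrank ℝ (symTensor (Fin n) (Fin m))) :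
    ENNReal.ofReal (n * m / (20 * √(n + m))) ^ Module.finrank ℝ (symTensor (Fin n) (Fin m)) *
      ν (Metric.closedBall 0 1) ≤ 2 * ν (posTensor (Fin n) (Fin m)) := by
  have hN : (0 : ℝ) < n * m := by positivity
  have hS : (0 : ℝ) < n + m := by positivity
  have hs : √((n : ℝ) + m) ^ 2 = n + m := Real.sq_sqrt hS.le
  have hs0 : 0 < √((n : ℝ) + m) := Real.sqrt_pos.2 hS
  refine le_trans ?_ (measure_posTensor_ge ν (t := √40 * √(n + m) / (n * m)) (by positivity) ?_)
  · gcongr ENNReal.ofReal ?_ ^ _ * _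
    have h40 : √40 ≤ 6.325 := Real.sqrt_le_left (by norm_num) |>.2 (by norm_num)
    rw [div_le_div_iff₀ (by positivity) (by positivity)]
    field_simp
    linarith
  · simp only [Fintype.card_fin]
    refine (four_mul_pow_le_exp (k := n + m) (by omega)).trans (Real.exp_le_exp.2 ?_)
    rw [div_pow, mul_pow, hs, Real.sq_sqrt (by norm_num)]
    have h4 : ((n : ℝ) * m) ^ 2 ≤ 4 * Module.finrank ℝ (symTensor (Fin n) (Fin m)) := by
      exact_mod_cast hD
    push_cast
    rw [le_div_iff₀ (by norm_num), mul_div_assoc', le_div_iff₀ (by positivity)]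
    nlinarith

theorem measure_posTensor_le_sqrt {n m : ℕ} (hn : 3 ≤ n) (hm : 3 ≤ m)
    (ν : Measure (symTensor (Fin n) (Fin m))) [ν.IsAddHaarMeasure]
    (hD : (n * m) ^ 2 ≤ 4 * Module.finrank ℝ (symTensor (Fin n) (Fin m))) :
    ν (posTensor (Fin n) (Fin m)) ≤
    2 * (ENNReal.ofReal (400 * ((min n m : ℕ) * √((max n m : ℕ)))) ^
      Module.finrank ℝ (symTensor (Fin n) (Fin m)) * ν (Metric.closedBall 0 1)) := by
  have key : ∀ a b : ℕ, a ≤ b → 3 ≤ a → 3 ≤ b →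
      4 * ((a : ℝ) ^ 2 * 81 ^ b) ≤
        Real.exp ((a : ℝ) ^ 2 * (b : ℝ) ^ 2 * (√12 / (a * √b)) ^ 2 / 2) ∧
      16 * (64 / 9 * ((a : ℝ) ^ 2 * b) * (√12 / (a * √b))) ≤ 400 * (a * √b) := by
    intro a b hab ha hb
    have ha0 : (0 : ℝ) < a := by positivity
    have hb0 : (0 : ℝ) < b := by positivity
    have hs : √(b : ℝ) ^ 2 = b := Real.sq_sqrt hb0.le
    have hs0 : 0 < √(b : ℝ) := Real.sqrt_pos.2 hb0
    constructor
    · refine (four_mul_sq_mul_pow_le_exp hab hb).trans_eq ?_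
      rw [div_pow, mul_pow, hs, Real.sq_sqrt (by norm_num)]
      congr 1
      field_simp
      norm_num
    · have h12 : √12 ≤ 3.4642 := Real.sqrt_le_left (by norm_num) |>.2 (by norm_num)
      have : 16 * (64 / 9 * ((a : ℝ) ^ 2 * b) * (√12 / (a * √b))) =
          1024 / 9 * √12 * (a * √b) := by
        field_simp
        rw [hs]
        ring
      rw [this]
      gcongr
      linarith
  rcases le_total n m with h | h
  · rw [min_eq_left h, max_eq_right h]
    obtain ⟨h1, h2⟩ := key n m h hn hm
    refine (measure_posTensor_le_left ν (t := √12 / (n * √m)) (by positivity) ?_ ?_ ?_).trans ?_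
    · simp only [Fintype.card_fin]; omega
    · simp only [Fintype.card_fin]; omega
    · simpa only [Fintype.card_fin] using h1
    · simp only [Fintype.card_fin]
      exact two_pow_mul_ofReal_pow_le (by rwa [← mul_pow]) h2 _
  · rw [min_eq_right h, max_eq_left h]
    obtain ⟨h1, h2⟩ := key m n h hm hn
    refine (measure_posTensor_le_right ν (t := √12 / (m * √n)) (by positivity) ?_ ?_ ?_).trans ?_
    · simp only [Fintype.card_fin]; omega
    · simp only [Fintype.card_fin]; omega
    · simpa only [Fintype.card_fin] using h1
    · simp only [Fintype.card_fin]
      exact two_pow_mul_ofReal_pow_le (by rwa [← mul_pow, mul_comm m n]) h2 _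

theorem dim_bounds {n m D : ℕ} (hn : 3 ≤ n) (hm : 3 ≤ m)
    (hD : D = Nat.choose (n + 1) 2 * Nat.choose (m + 1) 2 - 1) :
    35 ≤ D ∧ (n * m) ^ 2 ≤ 4 * D ∧ max n m ≤ D := by
  have h2 : ∀ k, 2 * Nat.choose (k + 1) 2 = (k + 1) * k := by
    intro k
    rw [Nat.choose_two_right, Nat.add_sub_cancel]
    exact Nat.mul_div_cancel' (by simpa [mul_comm] using (Nat.even_mul_succ_self k).two_dvd)
  have hn2 := h2 n
  have hm2 := h2 m
  set a := Nat.choose (n + 1) 2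
  set b := Nat.choose (m + 1) 2
  have ha : 2 * n ≤ a := by nlinarith
  have hb : 2 * m ≤ b := by nlinarith
  have hab : D + 1 = a * b := by
    have : 0 < a * b := Nat.mul_pos (by omega) (by omega)
    omega
  have h4 : 4 * (D + 1) = ((n + 1) * n) * ((m + 1) * m) := by rw [hab, ← hn2, ← hm2]; ring
  refine ⟨?_, ?_, max_le ?_ ?_⟩
  · nlinarith [Nat.mul_le_mul (show 6 ≤ a by omega) (show 6 ≤ b by omega)]
  · have h9 : 9 ≤ n * m := by nlinarith
    nlinarith
  · nlinarith
  · nlinarith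

theorem upper_ratio_le {k M K : ℝ} (hk : 3 ≤ k) (hkM : k ≤ M) (hK : 334800 ≤ K) :
    1.05 * (360 * √(k * M)) ≤ K / (3 ^ 3 * √(k + 1)) * (k * M / (20 * √(k + M))) := by
  have hM : 3 ≤ M := hk.trans hkM
  have h1 : √(k + 1) * √(k + M) ≤ 1.64 * √(k * M) := by
    rw [← Real.sqrt_mul (by positivity)]
    refine Real.sqrt_le_iff.2 ⟨by positivity, ?_⟩
    rw [mul_pow, Real.sq_sqrt (by positivity)]
    nlinarith [mul_nonneg (sub_nonneg.2 hk) (sub_nonneg.2 hM)]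
  have h2 : √(k * M) ^ 2 = k * M := Real.sq_sqrt (by positivity)
  have h3 : 0 < √(k + 1) := Real.sqrt_pos.2 (by positivity)
  have h4 : 0 < √(k + M) := Real.sqrt_pos.2 (by positivity)
  have h5 : 0 < √(k * M) := Real.sqrt_pos.2 (by positivity)
  rw [div_mul_div_comm, le_div_iff₀ (by positivity)]
  calc 1.05 * (360 * √(k * M)) * (3 ^ 3 * √(k + 1) * (20 * √(k + M)))
      = 204120 * √(k * M) * (√(k + 1) * √(k + M)) := by ring
    _ ≤ 204120 * √(k * M) * (1.64 * √(k * M)) := by gcongr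
    _ = 334756.8 * √(k * M) ^ 2 := by ring
    _ ≤ K * √(k * M) ^ 2 := by gcongr; linarith
    _ = K * (k * M) := by rw [h2]

theorem lower_ratio_le {k M : ℝ} (hk : 3 ≤ k) :
    1.05 * (3 * √3 / (2 ^ 10 * 7 ^ 2 * √k) * (400 * (k * √M))) ≤ √(k * M) / 11.25 := by
  have h0 : 0 < k := by positivity
  have h1 : √k ^ 2 = k := Real.sq_sqrt h0.le
  have h2 : 0 < √k := Real.sqrt_pos.2 h0
  have h3 : √3 ≤ 2 := Real.sqrt_le_left (by norm_num) |>.2 (by norm_num)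
  rw [Real.sqrt_mul h0.le]
  calc 1.05 * (3 * √3 / (2 ^ 10 * 7 ^ 2 * √k) * (400 * (k * √M)))
      = 1260 / 50176 * √3 * (√k * √M) := by
        field_simp
        rw [h1]
        ring
    _ ≤ 1260 / 50176 * 2 * (√k * √M) := by gcongr
    _ ≤ 1 / 11.25 * (√k * √M) := by gcongr; norm_num
    _ = _ := by ring

theorem upper_const_ge :
    334800 ≤ (2 : ℝ) ^ (12 : ℕ) * (5 : ℝ) ^ 2 * (6 : ℝ) ^ ((1 : ℝ) / 2) *
      (10 : ℝ) ^ ((2 : ℝ) / 9) := by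
  have h6 : (2.4 : ℝ) ≤ 6 ^ ((1 : ℝ) / 2) := by
    rw [← Real.sqrt_eq_rpow]
    exact Real.le_sqrt_of_sq_le (by norm_num)
  have h10 : (1.6 : ℝ) ≤ 10 ^ ((2 : ℝ) / 9) := by
    rw [show (1.6 : ℝ) = (1.6 ^ (9 / 2 : ℝ)) ^ ((2 : ℝ) / 9) by
      rw [← Real.rpow_mul (by norm_num)]; norm_num]
    refine Real.rpow_le_rpow (by positivity) ?_ (by norm_num)
    rw [show (9 / 2 : ℝ) = 9 * (1 / 2) by norm_num, Real.rpow_mul (by norm_num),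
      ← Real.sqrt_eq_rpow]
    refine Real.sqrt_le_iff.2 ⟨by norm_num, ?_⟩
    norm_num
  calc (334800 : ℝ) ≤ 2 ^ (12 : ℕ) * 5 ^ 2 * 2.4 * 1.6 := by norm_num
    _ ≤ _ := by gcongr

theorem upper_const_sq : ((2 : ℝ) ^ (12 : ℕ) * (5 : ℝ) ^ 2 * (6 : ℝ) ^ ((1 : ℝ) / 2) *
      (10 : ℝ) ^ ((2 : ℝ) / 9) / 3 ^ 3) ^ 2 =
    (2 : ℝ) ^ (25 : ℕ) * (5 : ℝ) ^ 4 * (10 : ℝ) ^ ((4 : ℝ) / 9) / (3 : ℝ) ^ 5 := by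
  have h6 : ((6 : ℝ) ^ ((1 : ℝ) / 2)) ^ 2 = 6 := by
    rw [← Real.rpow_mul_natCast (by norm_num)]
    norm_num
  have h10 : ((10 : ℝ) ^ ((2 : ℝ) / 9)) ^ 2 = 10 ^ ((4 : ℝ) / 9) := by
    rw [← Real.rpow_mul_natCast (by norm_num)]
    norm_num
  rw [div_pow, mul_pow, mul_pow, h6, h10]
  ring

theorem probability_bounds {n m : ℕ} (hn : 3 ≤ n) (hm : 3 ≤ m) {D : ℕ}
    (hD : D = Nat.choose (n + 1) 2 * Nat.choose (m + 1) 2 - 1)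
    {σ₁ : Measure (Fin n → ℝ)} {σ₂ : Measure (Fin m → ℝ)}
    (h₁ : IsSphereMeasure n σ₁) (h₂ : IsSphereMeasure m σ₂)
    {ψ : (Fin D → ℝ) →ₗ[ℝ] MvPolynomial (Fin n ⊕ Fin m) ℝ}
    (hψ : IsUnitaryParam n m D σ₁ σ₂ (MSet n m 1 1 σ₁ σ₂) ψ) :
    ENNReal.ofReal (3 * √3 / ((2 : ℝ) ^ (10 : ℕ) * (7 : ℝ) ^ 2 * √((min n m : ℕ) : ℝ))) ^ D <
        volume (⇑ψ ⁻¹' tilde n m 1 1 σ₁ σ₂ (SqSet n m 1 1)) /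
          volume (⇑ψ ⁻¹' tilde n m 1 1 σ₁ σ₂ (PosSet n m 1 1)) ∧
      volume (⇑ψ ⁻¹' tilde n m 1 1 σ₁ σ₂ (SqSet n m 1 1)) /
          volume (⇑ψ ⁻¹' tilde n m 1 1 σ₁ σ₂ (PosSet n m 1 1)) <
        ENNReal.ofReal ((2 : ℝ) ^ (12 : ℕ) * (5 : ℝ) ^ 2 * (6 : ℝ) ^ ((1 : ℝ) / 2) *
            (10 : ℝ) ^ ((2 : ℝ) / 9) / ((3 : ℝ) ^ 3 * √(((min n m : ℕ) : ℝ) + 1))) ^ D := by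
  obtain ⟨ν, hν, hfin, hsq, hpos⟩ := exists_haar_measure_eq (by omega) (by omega) h₁ h₂ hψ
  obtain ⟨hD35, hD4, -⟩ := dim_bounds hn hm hD
  rw [← hfin] at hD35 hD4
  rw [hsq, hpos]
  have hV0 : ν (Metric.closedBall 0 1) ≠ 0 := (Metric.measure_closedBall_pos ν _ one_pos).ne'
  have hV : ν (Metric.closedBall 0 1) ≠ ⊤ := measure_closedBall_lt_top.ne
  have hk : (3 : ℝ) ≤ (min n m : ℕ) := by exact_mod_cast le_min hn hm
  have hkM : ((min n m : ℕ) : ℝ) ≤ (max n m : ℕ) := by exact_mod_cast min_le_max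
  have hmul : (n : ℝ) * m = (min n m : ℕ) * (max n m : ℕ) := by
    exact_mod_cast (min_mul_max n m).symm
  have hadd : (n : ℝ) + m = (min n m : ℕ) + (max n m : ℕ) := by
    exact_mod_cast (min_add_max n m).symm
  have hk0 : (0 : ℝ) < (min n m : ℕ) := by linarith
  have hM0 : (0 : ℝ) < (max n m : ℕ) := by linarith
  have b1 := measure_sqTensor_le_sqrt hn hm ν hD4
  have b2 := measure_sqTensor_ge_sqrt hn hm ν hD4
  have b3 := measure_posTensor_le_sqrt hn hm ν hD4
  have b4 := measure_posTensor_ge_sqrt hn hm ν hD4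
  rw [hmul] at b1 b2 b4
  rw [hadd] at b4
  rw [hfin] at b1 b2 b3 b4 hD35
  exact ⟨ofReal_pow_lt_div hV0 hV hD35 (by positivity) (by positivity)
      (lower_ratio_le hk) b2 b3,
    div_lt_ofReal_pow hV0 hV hD35 (by positivity) (by positivity) (by positivity)
      (upper_ratio_le hk hkM upper_const_ge) b1 b4⟩

end

open BiformPaper in
/-- **Corollary (probability that a positive map `Φ : 𝕊_n → 𝕊_m` is completely positive).**
The probability `p_{n,m} = Vol S̃q / Vol P̃os` satisfies, for `n, m ≥ 3`,
`(3√3/(2^{10}·7²·√(min(n,m))))^{D_𝓜} < p_{n,m} < (2^{12}·5²·6^{1/2}·10^{2/9}/(3³·√(min(n,m)+1)))^{D_𝓜}`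
with `D_𝓜 = C(n+1,2)·C(m+1,2) − 1`; moreover, if `min(n,m) ≥ 2^{25}·5⁴·10^{4/9}/3⁵`
then `p_{n,m} → 0` as `max(n,m) → ∞`. -/
theorem statement5 :
    (∀ n m : ℕ, 3 ≤ n → 3 ≤ m → ∀ D : ℕ,
      D = Nat.choose (n + 1) 2 * Nat.choose (m + 1) 2 - 1 →
      ∀ (σ₁ : Measure (Fin n → ℝ)) (σ₂ : Measure (Fin m → ℝ)),
        IsSphereMeasure n σ₁ → IsSphereMeasure m σ₂ →
      ∀ ψ : (Fin D → ℝ) →ₗ[ℝ] MvPolynomial (Fin n ⊕ Fin m) ℝ,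
        IsUnitaryParam n m D σ₁ σ₂ (MSet n m 1 1 σ₁ σ₂) ψ →
      ENNReal.ofReal (3 * Real.sqrt 3 /
            ((2 : ℝ) ^ (10 : ℕ) * (7 : ℝ) ^ 2 * Real.sqrt ((min n m : ℕ) : ℝ))) ^ D <
        volume (⇑ψ ⁻¹' tilde n m 1 1 σ₁ σ₂ (SqSet n m 1 1)) /
          volume (⇑ψ ⁻¹' tilde n m 1 1 σ₁ σ₂ (PosSet n m 1 1)) ∧
      volume (⇑ψ ⁻¹' tilde n m 1 1 σ₁ σ₂ (SqSet n m 1 1)) /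
          volume (⇑ψ ⁻¹' tilde n m 1 1 σ₁ σ₂ (PosSet n m 1 1)) <
        ENNReal.ofReal ((2 : ℝ) ^ (12 : ℕ) * (5 : ℝ) ^ 2 * (6 : ℝ) ^ ((1 : ℝ) / 2) *
            (10 : ℝ) ^ ((2 : ℝ) / 9) /
          ((3 : ℝ) ^ 3 * Real.sqrt (((min n m : ℕ) : ℝ) + 1))) ^ D) ∧
    -- in particular, `p_{n,m} → 0` as `max(n,m) → ∞` whenever
    -- `min(n,m) ≥ 2^{25}·5⁴·10^{4/9}/3⁵`:
    (∀ ε : ℝ, 0 < ε → ∃ N : ℕ, ∀ n m : ℕ, 3 ≤ n → 3 ≤ m →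
      (2 : ℝ) ^ (25 : ℕ) * (5 : ℝ) ^ 4 * (10 : ℝ) ^ ((4 : ℝ) / 9) / (3 : ℝ) ^ 5 ≤
        ((min n m : ℕ) : ℝ) →
      N ≤ max n m →
      ∀ D : ℕ, D = Nat.choose (n + 1) 2 * Nat.choose (m + 1) 2 - 1 →
      ∀ (σ₁ : Measure (Fin n → ℝ)) (σ₂ : Measure (Fin m → ℝ)),
        IsSphereMeasure n σ₁ → IsSphereMeasure m σ₂ →
      ∀ ψ : (Fin D → ℝ) →ₗ[ℝ] MvPolynomial (Fin n ⊕ Fin m) ℝ,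
        IsUnitaryParam n m D σ₁ σ₂ (MSet n m 1 1 σ₁ σ₂) ψ →
      volume (⇑ψ ⁻¹' tilde n m 1 1 σ₁ σ₂ (SqSet n m 1 1)) /
          volume (⇑ψ ⁻¹' tilde n m 1 1 σ₁ σ₂ (PosSet n m 1 1)) < ENNReal.ofReal ε) := by
  refine ⟨fun n m hn hm D hD σ₁ σ₂ h₁ h₂ ψ hψ => probability_bounds hn hm hD h₁ h₂ hψ,
    fun ε hε => ?_⟩
  set C : ℝ := (2 : ℝ) ^ (25 : ℕ) * (5 : ℝ) ^ 4 * (10 : ℝ) ^ ((4 : ℝ) / 9) / (3 : ℝ) ^ 5 with hC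
  have hC0 : 0 < C := by positivity
  have hr : √(C / (C + 1)) < 1 := by
    rw [Real.sqrt_lt' one_pos, div_lt_iff₀ (by positivity)]
    linarith
  obtain ⟨N, hN⟩ := exists_pow_lt_of_lt_one hε hr
  refine ⟨N, fun n m hn hm hmin hmax D hD σ₁ σ₂ h₁ h₂ ψ hψ =>
    (probability_bounds hn hm hD h₁ h₂ hψ).2.trans_le ?_⟩
  have hND : N ≤ D := hmax.trans (dim_bounds hn hm hD).2.2
  rw [← ENNReal.ofReal_pow (by positivity)]
  refine ENNReal.ofReal_le_ofReal (le_trans ?_ hN.le)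
  refine le_trans (pow_le_pow_left₀ (by positivity) ?_ D)
    (pow_le_pow_of_le_one (Real.sqrt_nonneg _) hr.le hND)
  refine Real.le_sqrt_of_sq_le ?_
  rw [← div_div, div_pow, upper_const_sq, ← hC, Real.sq_sqrt (by positivity)]
  gcongr
end
end

section
/- For 𝔽 ∈ {ℝ, ℂ} and integers n, m ≥ 2: (Vol S̃q_{𝒞_𝔽} / Vol B_{𝓜_{𝒞_𝔽}})^{1/D_{𝓜_{𝒞_𝔽}}} ≤ 2^{10+(3−dim_ℝ𝔽)/2}·√3·(nm−1)^{−1/2}, where dim_ℝ𝔽 = 1 for 𝔽 = ℝ and dim_ℝ𝔽 = 2 for 𝔽 = ℂ. -/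
open MeasureTheory MvPolynomial

noncomputable section

namespace BiformPaper

/-! ### The complex/real multiform setting

Complex variables `z_j = x_j + i·x_{n+j}` (`1 ≤ j ≤ n`) and `w_k = y_k + i·y_{m+k}`
(`1 ≤ k ≤ m`) inside polynomials in the real variables `x = (x₁,…,x_{2n})`,
`y = (y₁,…,y_{2m})`. -/

/-- The real part `x_j` of the complex variable `z_j`. -/
def zRe (n m : ℕ) (i : Fin n) : MvPolynomial (Fin (2 * n) ⊕ Fin (2 * m)) ℂ :=
  X (Sum.inl ⟨i.1, by have := i.2; omega⟩)

/-- The imaginary part `x_{n+j}` of the complex variable `z_j`. -/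
def zIm (n m : ℕ) (i : Fin n) : MvPolynomial (Fin (2 * n) ⊕ Fin (2 * m)) ℂ :=
  X (Sum.inl ⟨n + i.1, by have := i.2; omega⟩)

/-- The real part `y_k` of the complex variable `w_k`. -/
def wRe (n m : ℕ) (k : Fin m) : MvPolynomial (Fin (2 * n) ⊕ Fin (2 * m)) ℂ :=
  X (Sum.inr ⟨k.1, by have := k.2; omega⟩)

/-- The imaginary part `y_{m+k}` of the complex variable `w_k`. -/
def wIm (n m : ℕ) (k : Fin m) : MvPolynomial (Fin (2 * n) ⊕ Fin (2 * m)) ℂ :=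
  X (Sum.inr ⟨m + k.1, by have := k.2; omega⟩)

/-- The complex variable `z_j = x_j + i·x_{n+j}` as a complex polynomial. -/
def Zv (n m : ℕ) (i : Fin n) : MvPolynomial (Fin (2 * n) ⊕ Fin (2 * m)) ℂ :=
  zRe n m i + C Complex.I * zIm n m i

/-- The conjugate variable `z̄_j = x_j − i·x_{n+j}`. -/
def Zc (n m : ℕ) (i : Fin n) : MvPolynomial (Fin (2 * n) ⊕ Fin (2 * m)) ℂ :=
  zRe n m i - C Complex.I * zIm n m i

/-- The complex variable `w_k = y_k + i·y_{m+k}`. -/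
def Wv (n m : ℕ) (k : Fin m) : MvPolynomial (Fin (2 * n) ⊕ Fin (2 * m)) ℂ :=
  wRe n m k + C Complex.I * wIm n m k

/-- The conjugate variable `w̄_k = y_k − i·y_{m+k}`. -/
def Wc (n m : ℕ) (k : Fin m) : MvPolynomial (Fin (2 * n) ⊕ Fin (2 * m)) ℂ :=
  wRe n m k - C Complex.I * wIm n m k

/-- The multiform `∑ a_{ijkl}·z̄ᵢ·zⱼ·w̄ₖ·w_l` determined by coefficients `a`. -/
def herm (n m : ℕ) (a : Fin n → Fin n → Fin m → Fin m → ℂ) :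
    MvPolynomial (Fin (2 * n) ⊕ Fin (2 * m)) ℂ :=
  ∑ i, ∑ j, ∑ k, ∑ l, C (a i j k l) * Zc n m i * Zv n m j * Wc n m k * Wv n m l

/-- The subspace `𝒞_𝔽 ⊆ ℝ[x,y]_{2,2}`: the image under the substitution
`z_j = x_j + i·x_{n+j}`, `w_k = y_k + i·y_{m+k}` of the real vector space
`Symm𝔽[z,z̄,w,w̄]_{1,1,1,1}` of symmetric multiforms of multidegree `(1,1,1,1)`
(`𝔽 = ℝ` corresponds to `isR = true`, `𝔽 = ℂ` to `isR = false`). -/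
def CF (n m : ℕ) (isR : Bool) : Set (MvPolynomial (Fin (2 * n) ⊕ Fin (2 * m)) ℝ) :=
  {f | ∃ a : Fin n → Fin n → Fin m → Fin m → ℂ,
    (∀ i j k l, a i j k l = (starRingEnd ℂ) (a j i l k)) ∧
    (isR = true → ∀ i j k l, (a i j k l).im = 0) ∧
    MvPolynomial.map (algebraMap ℝ ℂ) f = herm n m a}

/-- The cone `Pos_{𝒞_𝔽}` of nonnegative multiforms. -/
def PosCF (n m : ℕ) (isR : Bool) : Set (MvPolynomial (Fin (2 * n) ⊕ Fin (2 * m)) ℝ) :=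
  {f | f ∈ CF n m isR ∧ ∀ x y, 0 ≤ beval f x y}

/-- The cone `Sq_{𝒞_𝔽}`: images of finite sums `∑ f_r*·f_r` of hermitian squares with
`f_r ∈ 𝔽[z,w]_{1,1}` bilinear in `z` and `w`. -/
def SqCF (n m : ℕ) (isR : Bool) : Set (MvPolynomial (Fin (2 * n) ⊕ Fin (2 * m)) ℝ) :=
  {f | ∃ (N : ℕ) (b : Fin N → Fin n → Fin m → ℂ),
    (isR = true → ∀ r i j, (b r i j).im = 0) ∧
    MvPolynomial.map (algebraMap ℝ ℂ) f =
      ∑ r, (∑ i, ∑ j, C ((starRingEnd ℂ) (b r i j)) * Zc n m i * Wc n m j) *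
           (∑ i, ∑ j, C (b r i j) * Zv n m i * Wv n m j)}

/-- The cone `𝒫_{𝒞_ℝ}` of multiforms (for `𝔽 = ℝ`) that are nonnegative on the real
points `z ∈ ℝⁿ`, `w ∈ ℝᵐ`. -/
def PRSet (n m : ℕ) : Set (MvPolynomial (Fin (2 * n) ⊕ Fin (2 * m)) ℝ) :=
  {f | f ∈ CF n m true ∧ ∀ (z : Fin n → ℝ) (w : Fin m → ℝ),
    0 ≤ beval f (fun i => if h : (i : ℕ) < n then z ⟨i, h⟩ else 0)
                (fun j => if h : (j : ℕ) < m then w ⟨j, h⟩ else 0)}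

/-- The hyperplane `𝓜_{𝒞_𝔽}` of elements of `𝒞_𝔽` with average `0` on
`T = S^{2n−1} × S^{2m−1}`. -/
def MCF (n m : ℕ) (isR : Bool) (σ₁ : Measure (Fin (2 * n) → ℝ))
    (σ₂ : Measure (Fin (2 * m) → ℝ)) : Set (MvPolynomial (Fin (2 * n) ⊕ Fin (2 * m)) ℝ) :=
  {f | f ∈ CF n m isR ∧ bavg σ₁ σ₂ f = 0}

/-- The translated section `K̃ = {f ∈ 𝓜_{𝒞_𝔽} : f + q ∈ K}` where
`q = (x₁²+⋯+x_{2n}²)(y₁²+⋯+y_{2m}²)`. -/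
def tildeCF (n m : ℕ) (isR : Bool) (σ₁ : Measure (Fin (2 * n) → ℝ))
    (σ₂ : Measure (Fin (2 * m) → ℝ)) (K : Set (MvPolynomial (Fin (2 * n) ⊕ Fin (2 * m)) ℝ)) :
    Set (MvPolynomial (Fin (2 * n) ⊕ Fin (2 * m)) ℝ) :=
  {f | f ∈ MCF n m isR σ₁ σ₂ ∧ f + qpoly (2 * n) (2 * m) 1 1 ∈ K}

/-- The unit ball `B_{𝓜_{𝒞_𝔽}}` of `𝓜_{𝒞_𝔽}` in the `L²(σ)` norm. -/
def ballCF (n m : ℕ) (isR : Bool) (σ₁ : Measure (Fin (2 * n) → ℝ))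
    (σ₂ : Measure (Fin (2 * m) → ℝ)) : Set (MvPolynomial (Fin (2 * n) ⊕ Fin (2 * m)) ℝ) :=
  {f | f ∈ MCF n m isR σ₁ σ₂ ∧ bip σ₁ σ₂ f f ≤ 1}

/-- `D_{𝓜_{𝒞_𝔽}}`. -/
def DCF (n m : ℕ) (isR : Bool) : ℕ :=
  if isR then n * m * (n * m + 1) / 2 - 1 else n ^ 2 * m ^ 2 - 1

end BiformPaper

namespace BiformPaper

open Matrix

theorem isCompact_unitSphere (n : ℕ) : IsCompact (unitSphere n) := by
  refine (isCompact_Icc (a := fun _ : Fin n => (-1 : ℝ)) (b := fun _ => 1)).of_isClosed_subset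
    (isClosed_eq (by fun_prop) continuous_const) fun x hx => ?_
  have key : ∀ i, x i ^ 2 ≤ 1 := fun i => by
    have hx' : ∑ i, x i ^ 2 = 1 := hx
    rw [← hx']
    exact Finset.single_le_sum (f := fun i => x i ^ 2) (fun _ _ => sq_nonneg _) (Finset.mem_univ i)
  exact ⟨fun i => (abs_le.1 ((sq_le_one_iff_abs_le_one _).1 (key i))).1,
    fun i => (abs_le.1 ((sq_le_one_iff_abs_le_one _).1 (key i))).2⟩

namespace IsSphereMeasure

variable {n m : ℕ} {σ : Measure (Fin n → ℝ)} {σ₁ : Measure (Fin n → ℝ)} {σ₂ : Measure (Fin m → ℝ)}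

theorem ae_mem (h : IsSphereMeasure n σ) : ∀ᵐ x ∂σ, x ∈ unitSphere n := h.onSphere

theorem integrable (h : IsSphereMeasure n σ) {g : (Fin n → ℝ) → ℝ} (hg : Continuous g) :
    Integrable g σ := by
  have := h.prob
  rw [← Measure.restrict_eq_self_of_ae_mem h.ae_mem]
  exact hg.continuousOn.integrableOn_compact (isCompact_unitSphere n)

theorem integrable_prod (h₁ : IsSphereMeasure n σ₁) (h₂ : IsSphereMeasure m σ₂)
    {g : (Fin n → ℝ) × (Fin m → ℝ) → ℝ} (hg : Continuous g) : Integrable g (σ₁.prod σ₂) := by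
  have := h₁.prob
  have := h₂.prob
  have hae : ∀ᵐ p ∂σ₁.prod σ₂, p ∈ unitSphere n ×ˢ unitSphere m := by
    filter_upwards [Measure.quasiMeasurePreserving_fst.ae h₁.ae_mem,
      Measure.quasiMeasurePreserving_snd.ae h₂.ae_mem] with p hp hq using ⟨hp, hq⟩
  rw [← Measure.restrict_eq_self_of_ae_mem hae]
  exact hg.continuousOn.integrableOn_compact
    ((isCompact_unitSphere n).prod (isCompact_unitSphere m))

theorem integral_dotProduct_pow_eq (h : IsSphereMeasure n σ) (k : ℕ) {c c' : Fin n → ℝ}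
    (hc : c ⬝ᵥ c = c' ⬝ᵥ c') : ∫ x, (c ⬝ᵥ x) ^ k ∂σ = ∫ x, (c' ⬝ᵥ x) ^ k ∂σ := by
  by_cases hcc : c = c'
  · rw [hcc]
  set v := c - c' with hv
  have hv0 : v ⬝ᵥ v ≠ 0 := by
    rw [Ne, dotProduct_self_eq_zero]
    exact sub_ne_zero.2 hcc
  have hvc : v ⬝ᵥ c = (v ⬝ᵥ v) / 2 := by
    simp only [hv, sub_dotProduct, dotProduct_sub]
    rw [dotProduct_comm c' c]
    linarith
  set s : ℝ := 2 / (v ⬝ᵥ v) with hs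
  set Q : Matrix (Fin n) (Fin n) ℝ := 1 - s • vecMulVec v v with hQ
  have hQt : Q.transpose = Q := by
    simp [hQ, transpose_sub, transpose_smul, transpose_vecMulVec]
  have hQQ : Q * Q.transpose = 1 := by
    rw [hQt, hQ]
    have hvv : vecMulVec v v * vecMulVec v v = (v ⬝ᵥ v) • vecMulVec v v := by
      rw [vecMulVec_mul_vecMulVec]
      ext i j
      simp [vecMulVec_apply]
      ring
    rw [sub_mul, mul_sub, mul_sub, one_mul, one_mul, mul_one, smul_mul_smul_comm, hvv, smul_smul]
    have : s * s * (v ⬝ᵥ v) = 2 * s := by rw [hs]; field_simp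
    rw [this, two_mul, add_smul]
    abel
  have hQc : Q *ᵥ c = c' := by
    rw [hQ, sub_mulVec, one_mulVec, smul_mulVec, vecMulVec_mulVec, hvc]
    ext i
    have hsv : s * ((v ⬝ᵥ v) / 2) = 1 := by rw [hs]; field_simp
    have hvi : v i = c i - c' i := rfl
    simp only [Pi.sub_apply, Pi.smul_apply, smul_eq_mul, op_smul_eq_smul, hvi]
    linear_combination (-(c i - c' i)) * hsv
  have hinv := h.invariant Q hQQ
  have hmeas : Measurable Q.mulVec := (Continuous.matrix_mulVec continuous_const continuous_id).measurable
  have hcont : Continuous fun x : Fin n → ℝ => (c ⬝ᵥ x) ^ k := by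
    simp only [dotProduct]; fun_prop
  conv_lhs => rw [← hinv]
  rw [integral_map hmeas.aemeasurable hcont.aestronglyMeasurable]
  refine integral_congr_ae (Filter.Eventually.of_forall fun x => ?_)
  simp only
  rw [dotProduct_mulVec, ← mulVec_transpose, hQt, hQc]

theorem exists_integral_dotProduct_pow (h : IsSphereMeasure n σ) (k : ℕ) (hn : 0 < n) :
    ∃ κ : ℝ, ∀ c, ∫ x, (c ⬝ᵥ x) ^ (2 * k) ∂σ = κ * (c ⬝ᵥ c) ^ k := by
  refine ⟨∫ x, (Pi.single (⟨0, hn⟩ : Fin n) (1 : ℝ) ⬝ᵥ x) ^ (2 * k) ∂σ, fun c => ?_⟩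
  have h0 : 0 ≤ c ⬝ᵥ c := Finset.sum_nonneg fun i _ => mul_self_nonneg _
  rw [h.integral_dotProduct_pow_eq (c' := √(c ⬝ᵥ c) • Pi.single (⟨0, hn⟩ : Fin n) (1 : ℝ))
    (2 * k) (by simp [Real.mul_self_sqrt h0]), ← integral_mul_const]
  refine integral_congr_ae (Filter.Eventually.of_forall fun x => ?_)
  simp only [smul_dotProduct, smul_eq_mul, mul_pow]
  rw [pow_mul (√(c ⬝ᵥ c)), Real.sq_sqrt h0]
  ring

theorem integral_dotProduct_sq (h : IsSphereMeasure n σ) (hn : 0 < n) (c : Fin n → ℝ) :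
    ∫ x, (c ⬝ᵥ x) ^ 2 ∂σ = (c ⬝ᵥ c) / n := by
  have := h.prob
  obtain ⟨κ, hκ⟩ := h.exists_integral_dotProduct_pow 1 hn
  simp only [mul_one, pow_one] at hκ
  have h1 : ∀ i : Fin n, ∫ x, x i ^ 2 ∂σ = κ := fun i => by
    simpa using hκ (Pi.single i 1)
  have h2 : ∑ i : Fin n, ∫ x, x i ^ 2 ∂σ = 1 := by
    rw [← integral_finsetSum _ fun i _ => h.integrable (by fun_prop)]
    rw [integral_congr_ae (g := fun _ => 1) (h.ae_mem.mono fun x hx => hx)]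
    simp
  have hn' : (n : ℝ) ≠ 0 := by positivity
  simp only [h1, Finset.sum_const, Finset.card_univ, Fintype.card_fin, nsmul_eq_mul] at h2
  rw [hκ, eq_div_iff hn']
  linear_combination (c ⬝ᵥ c) * h2

theorem exists_fourth_moment (h : IsSphereMeasure n σ) (hn : 0 < n) :
    ∃ κ : ℝ, 0 ≤ κ ∧ κ ≤ 3 / (n : ℝ) ^ 2 ∧
      (∀ c, ∫ x, (c ⬝ᵥ x) ^ 4 ∂σ = κ * (c ⬝ᵥ c) ^ 2) ∧
      ∀ a b, ∫ x, (a ⬝ᵥ x) ^ 2 * (b ⬝ᵥ x) ^ 2 ∂σ ≤ κ * ((a ⬝ᵥ a) * (b ⬝ᵥ b)) := by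
  have := h.prob
  obtain ⟨κ, hκ⟩ := h.exists_integral_dotProduct_pow 2 hn
  norm_num only at hκ
  have hκ0 : 0 ≤ κ := by
    have := hκ (Pi.single (⟨0, hn⟩ : Fin n) 1)
    simp at this
    rw [← this]
    positivity
  have hcont : ∀ c : Fin n → ℝ, Continuous fun x : Fin n → ℝ => c ⬝ᵥ x := fun c => by
    simp only [dotProduct]; fun_prop
  have hmix : ∀ a b, 12 * ∫ x, (a ⬝ᵥ x) ^ 2 * (b ⬝ᵥ x) ^ 2 ∂σ =
      κ * (4 * ((a ⬝ᵥ a) * (b ⬝ᵥ b)) + 8 * (a ⬝ᵥ b) ^ 2) := fun a b => by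
    have e : ∫ x, ((a + b) ⬝ᵥ x) ^ 4 ∂σ + ∫ x, ((a - b) ⬝ᵥ x) ^ 4 ∂σ =
        2 * ∫ x, (a ⬝ᵥ x) ^ 4 ∂σ + 2 * ∫ x, (b ⬝ᵥ x) ^ 4 ∂σ +
          12 * ∫ x, (a ⬝ᵥ x) ^ 2 * (b ⬝ᵥ x) ^ 2 ∂σ := by
      simp only [← integral_const_mul]
      have ha := hcont a
      have hb := hcont b
      have hab := hcont (a + b)
      have hab' := hcont (a - b)
      rw [← integral_add (h.integrable (by fun_prop)) (h.integrable (by fun_prop)),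
        ← integral_add (h.integrable (by fun_prop)) (h.integrable (by fun_prop)),
        ← integral_add (h.integrable (by fun_prop)) (h.integrable (by fun_prop))]
      refine integral_congr_ae (Filter.Eventually.of_forall fun x => ?_)
      simp only [add_dotProduct, sub_dotProduct]
      ring
    simp only [hκ] at e
    simp only [add_dotProduct, sub_dotProduct, dotProduct_add, dotProduct_sub] at e
    rw [dotProduct_comm b a] at e
    linear_combination -e
  have hd : ∀ i j : Fin n, κ / 3 ≤ ∫ x, x i ^ 2 * x j ^ 2 ∂σ := fun i j => by
    have := hmix (Pi.single i 1) (Pi.single j 1)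
    simp only [single_one_dotProduct, Pi.single_eq_same, mul_one] at this
    nlinarith [mul_nonneg hκ0 (sq_nonneg ((Pi.single j 1 : Fin n → ℝ) i))]
  have htot : ∑ i : Fin n, ∑ j : Fin n, ∫ x, x i ^ 2 * x j ^ 2 ∂σ = 1 := by
    have : ∀ i : Fin n, ∑ j : Fin n, ∫ x, x i ^ 2 * x j ^ 2 ∂σ = ∫ x, x i ^ 2 ∂σ := fun i => by
      rw [← integral_finsetSum _ fun j _ => h.integrable (by fun_prop)]
      refine integral_congr_ae (h.ae_mem.mono fun x hx => ?_)
      have hx' : ∑ i, x i ^ 2 = 1 := hx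
      simp only
      rw [← Finset.mul_sum, hx', mul_one]
    simp only [this]
    rw [← integral_finsetSum _ fun i _ => h.integrable (by fun_prop),
      integral_congr_ae (g := fun _ => 1) (h.ae_mem.mono fun x hx => hx)]
    simp
  refine ⟨κ, hκ0, ?_, hκ, fun a b => ?_⟩
  · have h3 : ∑ i : Fin n, ∑ j : Fin n, κ / 3 ≤ 1 :=
      htot ▸ Finset.sum_le_sum fun i _ => Finset.sum_le_sum fun j _ => hd i j
    simp only [Finset.sum_const, Finset.card_univ, Fintype.card_fin, nsmul_eq_mul] at h3
    rw [le_div_iff₀ (by positivity)]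
    linarith
  · have hcs : (a ⬝ᵥ b) ^ 2 ≤ (a ⬝ᵥ a) * (b ⬝ᵥ b) := by
      have := Finset.sum_mul_sq_le_sq_mul_sq Finset.univ a b
      simpa only [dotProduct, sq] using this
    nlinarith [hmix a b, mul_le_mul_of_nonneg_left hcs hκ0]

end IsSphereMeasure

end BiformPaper

namespace BiformPaper

open scoped Pointwise

/-- Integer vectors of squared Euclidean norm at most four times the dimension. -/
def latticeBall (ι : Type*) [Fintype ι] [DecidableEq ι] : Finset (ι → ℤ) :=
  (Fintype.piFinset fun _ => Finset.Icc (-(4 * Fintype.card ι : ℤ)) (4 * Fintype.card ι)).filter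
    fun u => ∑ i, u i ^ 2 ≤ 4 * Fintype.card ι

theorem mem_latticeBall {ι : Type*} [Fintype ι] [DecidableEq ι] {u : ι → ℤ} :
    u ∈ latticeBall ι ↔ ∑ i, u i ^ 2 ≤ 4 * Fintype.card ι := by
  rw [latticeBall, Finset.mem_filter, and_iff_right_iff_imp]
  intro h
  rw [Fintype.mem_piFinset]
  intro i
  have h1 : u i ^ 2 ≤ ∑ i, u i ^ 2 :=
    Finset.single_le_sum (f := fun i => u i ^ 2) (fun _ _ => sq_nonneg _) (Finset.mem_univ i)
  rw [Finset.mem_Icc, ← abs_le]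
  have h2 : |u i| ≤ u i ^ 2 := by
    rw [← sq_abs]; exact Int.le_self_sq _
  linarith

theorem sum_half_pow_natAbs_le (B : ℕ) :
    ∑ j ∈ Finset.Icc (-(B : ℤ)) B, (1 / 2 : ℝ) ^ j.natAbs ≤ 3 - 2 * (1 / 2 : ℝ) ^ B := by
  induction B with
  | zero => norm_num
  | succ B ih =>
    have : Finset.Icc (-((B + 1 : ℕ) : ℤ)) (B + 1 : ℕ) =
        insert (-((B + 1 : ℕ) : ℤ)) (insert ((B + 1 : ℕ) : ℤ) (Finset.Icc (-(B : ℤ)) B)) := by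
      ext j; simp only [Finset.mem_Icc, Finset.mem_insert]; omega
    rw [this, Finset.sum_insert (by simp only [Finset.mem_Icc, Finset.mem_insert]; omega),
      Finset.sum_insert (by simp only [Finset.mem_Icc]; omega), Int.natAbs_neg, Int.natAbs_natCast,
      pow_succ]
    linarith

theorem card_latticeBall_le (ι : Type*) [Fintype ι] [DecidableEq ι] :
    (latticeBall ι).card ≤ 12 ^ Fintype.card ι := by
  set d := Fintype.card ι with hd
  have h1 : ∀ u ∈ latticeBall ι, (1 / 4 : ℝ) ^ d ≤ ∏ i, (1 / 2 : ℝ) ^ (u i).natAbs := by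
    intro u hu
    rw [mem_latticeBall] at hu
    rw [Finset.prod_pow_eq_pow_sum, show (1 / 4 : ℝ) = (1 / 2) ^ 2 by norm_num, ← pow_mul]
    refine pow_le_pow_of_le_one (by norm_num) (by norm_num) ?_
    have h2 : ∀ i, 4 * (u i).natAbs ≤ ((u i).natAbs) ^ 2 + 4 := fun i => by
      zify
      nlinarith [sq_nonneg (|u i| - 2)]
    have h3 := Finset.sum_le_sum fun i (_ : i ∈ Finset.univ) => h2 i
    rw [← Finset.mul_sum, Finset.sum_add_distrib] at h3
    have h4 : ((∑ i, (u i).natAbs ^ 2 : ℕ) : ℤ) = ∑ i, u i ^ 2 := by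
      push_cast
      exact Finset.sum_congr rfl fun i _ => sq_abs _
    simp only [Finset.sum_const, Finset.card_univ, smul_eq_mul, ← hd] at h3
    zify at h3 ⊢
    push_cast at h4
    linarith
  have h2 : ∑ u ∈ latticeBall ι, ∏ i, (1 / 2 : ℝ) ^ (u i).natAbs ≤ 3 ^ d := by
    refine (Finset.sum_le_sum_of_subset_of_nonneg (Finset.filter_subset _ _)
      fun _ _ _ => Finset.prod_nonneg fun _ _ => by positivity).trans ?_
    rw [← Finset.prod_univ_sum (fun _ => Finset.Icc (-(4 * d : ℤ)) (4 * d))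
      (fun _ j => (1 / 2 : ℝ) ^ j.natAbs), Finset.prod_const, Finset.card_univ]
    refine pow_le_pow_left₀ (Finset.sum_nonneg fun _ _ => by positivity) ?_ _
    have := sum_half_pow_natAbs_le (4 * d)
    push_cast at this
    exact this.trans (by linarith [show (0 : ℝ) < (1 / 2) ^ (4 * d) by positivity])
  have h3 := (Finset.card_nsmul_le_sum _ _ _ h1).trans h2
  rw [nsmul_eq_mul, one_div, inv_pow, ← div_eq_mul_inv, div_le_iff₀ (by positivity), ← mul_pow] at h3
  norm_num at h3
  exact_mod_cast h3

theorem mem_convexHull_latticeBall {ι : Type*} [Fintype ι] [DecidableEq ι] (x : ι → ℝ)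
    (hx : ∑ i, x i ^ 2 ≤ Fintype.card ι) :
    x ∈ convexHull ℝ ((fun (u : ι → ℤ) i => (u i : ℝ)) '' (latticeBall ι : Set (ι → ℤ))) := by
  have h1 : x ∈ convexHull ℝ (Set.univ.pi fun i => {(⌊x i⌋ : ℝ), (⌊x i⌋ : ℝ) + 1}) := by
    rw [convexHull_pi]
    intro i _
    beta_reduce
    rw [convexHull_pair, segment_eq_Icc (by linarith)]
    exact ⟨Int.floor_le _, (Int.lt_floor_add_one _).le⟩
  refine convexHull_mono ?_ h1
  intro v hv
  have h2 : ∀ i, ∃ u : ℤ, (u : ℝ) = v i ∧ (v i) ^ 2 ≤ 2 * x i ^ 2 + 2 := fun i => by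
    have a := Int.floor_le (x i)
    have b := Int.lt_floor_add_one (x i)
    rcases hv i trivial with h | h
    · exact ⟨⌊x i⌋, h.symm, by rw [h]; nlinarith [sq_nonneg (2 * x i - ⌊x i⌋)]⟩
    · refine ⟨⌊x i⌋ + 1, by push_cast; exact h.symm, ?_⟩
      rw [h]; nlinarith [sq_nonneg (2 * x i - (⌊x i⌋ + 1))]
  choose u hu hu2 using h2
  refine ⟨u, ?_, funext hu⟩
  rw [Finset.mem_coe, mem_latticeBall]
  have h3 := Finset.sum_le_sum fun i (_ : i ∈ Finset.univ) => hu2 i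
  rw [Finset.sum_add_distrib, ← Finset.mul_sum, Finset.sum_const, Finset.card_univ,
    nsmul_eq_mul] at h3
  have h4 : ((∑ i, u i ^ 2 : ℤ) : ℝ) ≤ ((4 * Fintype.card ι : ℤ) : ℝ) := by
    push_cast
    simp only [hu]
    linarith
  exact_mod_cast h4

section Maurey

variable {V : Type*} [AddCommGroup V] [Module ℝ V]

/-- An affine function which is nonpositive at a point of a convex hull is nonpositive at some
point of the generating set. -/
theorem exists_le_of_mem_convexHull {S : Set V} {x : V} (hx : x ∈ convexHull ℝ S)
    (l : V →ₗ[ℝ] ℝ) : ∃ s ∈ S, l s ≤ l x :=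
  (l.concaveOn convex_univ).exists_le_of_mem_convexHull (Set.subset_univ _) hx

/-- Maurey's empirical approximation lemma. -/
theorem exists_sum_sub_le (B : V →ₗ[ℝ] V →ₗ[ℝ] ℝ) (hsymm : ∀ x y, B x y = B y x)
    (hpos : ∀ x, 0 ≤ B x x) {S : Set V} {ρ : ℝ} (hS : ∀ s ∈ S, B s s ≤ ρ) {x : V}
    (hx : x ∈ convexHull ℝ S) (k : ℕ) : ∃ s : Fin k → V, (∀ j, s j ∈ S) ∧
      B (∑ j, s j - (k : ℝ) • x) (∑ j, s j - (k : ℝ) • x) ≤ k * ρ := by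
  induction k with
  | zero => exact ⟨Fin.elim0, fun j => j.elim0, by simp⟩
  | succ k ih =>
    obtain ⟨s, hs, hB⟩ := ih
    set e := ∑ j, s j - (k : ℝ) • x with he
    obtain ⟨t, ht, hl⟩ := exists_le_of_mem_convexHull hx (B (e - x))
    refine ⟨Fin.snoc s t, fun j => ?_, ?_⟩
    · refine Fin.lastCases ?_ (fun j => ?_) j
      · simpa using ht
      · simpa using hs j
    · have : ∑ j, (Fin.snoc s t : Fin (k + 1) → V) j - ((k + 1 : ℕ) : ℝ) • x = e + (t - x) := by
        rw [Fin.sum_univ_castSucc]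
        simp only [Fin.snoc_castSucc, Fin.snoc_last, he]
        push_cast
        rw [add_smul, one_smul]
        abel
      rw [this]
      simp only [map_add, map_sub, LinearMap.add_apply, LinearMap.sub_apply] at hl ⊢
      push_cast
      linarith [hS t ht, hpos x, hsymm x t, hsymm x e, hsymm t e]

theorem le_of_mem_convexHull (B : V →ₗ[ℝ] V →ₗ[ℝ] ℝ) (hsymm : ∀ x y, B x y = B y x)
    (hpos : ∀ x, 0 ≤ B x x) {S : Set V} {ρ : ℝ} (hS : ∀ s ∈ S, B s s ≤ ρ) {x : V}
    (hx : x ∈ convexHull ℝ S) : B x x ≤ ρ := by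
  obtain ⟨t, ht, hl⟩ := exists_le_of_mem_convexHull hx (-B x)
  have := hpos (x - t)
  simp only [map_sub, LinearMap.sub_apply, LinearMap.neg_apply] at this hl
  linarith [hS t ht, hsymm x t]

theorem apply_sub_le_of_apply_sub_le (B : V →ₗ[ℝ] V →ₗ[ℝ] ℝ)
    (hpos : ∀ x, 0 ≤ B x x) {x y c : V} {ρ : ℝ} (hx : B (c - x) (c - x) ≤ ρ)
    (hy : B (c - y) (c - y) ≤ ρ) : B (x - y) (x - y) ≤ 4 * ρ := by
  have := hpos ((c - x) + (c - y))
  have e : x - y = (c - y) - (c - x) := by abel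
  rw [e]
  generalize c - x = p at *
  generalize c - y = q at *
  simp only [map_sub, LinearMap.sub_apply, map_add, LinearMap.add_apply] at this ⊢
  linarith

end Maurey

/-- A bilinear map sends a pair of convex hulls into the convex hull of the image. -/
theorem map_mem_convexHull {W V : Type*} [AddCommGroup W] [Module ℝ W] [AddCommGroup V]
    [Module ℝ V] (Φ : W →ₗ[ℝ] W →ₗ[ℝ] V) {A : Set W} {S : Set V}
    (h : ∀ a ∈ A, ∀ b ∈ A, Φ a b ∈ S) {x y : W} (hx : x ∈ convexHull ℝ A)
    (hy : y ∈ convexHull ℝ A) : Φ x y ∈ convexHull ℝ S := by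
  have h1 : ∀ a ∈ A, Φ a y ∈ convexHull ℝ S := fun a ha =>
    convexHull_min (t := (Φ a) ⁻¹' convexHull ℝ S) (fun b hb => subset_convexHull ℝ S (h a ha b hb))
      ((convex_convexHull ℝ S).linear_preimage (Φ a)) hy
  exact convexHull_min (t := (Φ.flip y) ⁻¹' convexHull ℝ S) (fun a ha => h1 a ha)
    ((convex_convexHull ℝ S).linear_preimage (Φ.flip y)) hx

/-- A set covered by finitely many pieces of Euclidean diameter at most `r` has volume at most
the number of pieces times `r ^ D` times the volume of the unit ball. -/
theorem volume_le_of_cover {D : ℕ} {K : Set (Fin D → ℝ)} {T : Type*} (τ : Finset T) (r : ℝ)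
    (hr : 0 < r) (c : T → Set (Fin D → ℝ)) (hK : ∀ a ∈ K, ∃ t ∈ τ, a ∈ c t)
    (hc : ∀ t ∈ τ, ∀ a ∈ c t, ∀ b ∈ c t, ∑ i, (a i - b i) ^ 2 ≤ r ^ 2) :
    volume K ≤ ENNReal.ofReal (τ.card * r ^ D) * volume {a : Fin D → ℝ | ∑ i, a i ^ 2 ≤ 1} := by
  have h1 : ∀ t ∈ τ, volume (c t) ≤
      ENNReal.ofReal (r ^ D) * volume {a : Fin D → ℝ | ∑ i, a i ^ 2 ≤ 1} := by
    intro t ht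
    rcases (c t).eq_empty_or_nonempty with he | ⟨b, hb⟩
    · simp [he]
    have hsub : c t ⊆ (fun a => (-b) + a) ⁻¹' (r • {a : Fin D → ℝ | ∑ i, a i ^ 2 ≤ 1}) := by
      intro a ha
      rw [Set.mem_preimage, Set.mem_smul_set_iff_inv_smul_mem₀ hr.ne', Set.mem_ofPred_eq]
      have h2 := hc t ht a ha b hb
      have : ∑ i, ((r⁻¹ • (-b + a)) i) ^ 2 = (r⁻¹) ^ 2 * ∑ i, (a i - b i) ^ 2 := by
        rw [Finset.mul_sum]
        refine Finset.sum_congr rfl fun i _ => ?_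
        simp only [Pi.smul_apply, Pi.add_apply, Pi.neg_apply, smul_eq_mul]
        ring
      rw [this, inv_pow, inv_mul_le_iff₀ (by positivity), mul_one]
      exact h2
    refine (measure_mono hsub).trans ?_
    rw [measure_preimage_add, Measure.addHaar_smul, Module.finrank_fin_fun,
      abs_of_nonneg (by positivity)]
  have hsub : K ⊆ ⋃ t ∈ τ, c t := fun a ha => by
    obtain ⟨t, ht, h⟩ := hK a ha
    exact Set.mem_biUnion ht h
  refine (measure_mono hsub).trans ((measure_biUnion_finset_le _ _).trans ?_)
  refine (Finset.sum_le_sum h1).trans ?_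
  rw [Finset.sum_const, nsmul_eq_mul, ← mul_assoc, ENNReal.ofReal_mul (by positivity),
    ENNReal.ofReal_natCast]

end BiformPaper

namespace BiformPaper

open Matrix

variable {n m : ℕ}

/-- The biform `∑ R_{pq} x_p y_q` of bidegree `(1, 1)` with coefficients `R`. -/
def bilin (n m : ℕ) : (Fin n × Fin m → ℝ) →ₗ[ℝ] MvPolynomial (Fin n ⊕ Fin m) ℝ :=
  Fintype.linearCombination ℝ fun p => X (Sum.inl p.1) * X (Sum.inr p.2)

theorem beval_add (f g : MvPolynomial (Fin n ⊕ Fin m) ℝ) (x y) :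
    beval (f + g) x y = beval f x y + beval g x y := map_add _ _ _

theorem beval_mul (f g : MvPolynomial (Fin n ⊕ Fin m) ℝ) (x y) :
    beval (f * g) x y = beval f x y * beval g x y := map_mul _ _ _

theorem beval_smul (c : ℝ) (f : MvPolynomial (Fin n ⊕ Fin m) ℝ) (x y) :
    beval (c • f) x y = c * beval f x y := by simp [beval]

theorem beval_bilin (R : Fin n × Fin m → ℝ) (x y) :
    beval (bilin n m R) x y = ∑ p, ∑ q, R (p, q) * (x p * y q) := by
  rw [← Fintype.sum_prod_type' (f := fun p q => R (p, q) * (x p * y q))]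
  simp [beval, bilin, Fintype.linearCombination_apply, smul_eval]

theorem beval_bilin_eq_dotProduct (R : Fin n × Fin m → ℝ) (x y) :
    beval (bilin n m R) x y = (fun q => (fun p => R (p, q)) ⬝ᵥ x) ⬝ᵥ y := by
  rw [beval_bilin, Finset.sum_comm]
  simp only [dotProduct, Finset.sum_mul, mul_assoc]

@[fun_prop]
theorem continuous_beval (f : MvPolynomial (Fin n ⊕ Fin m) ℝ) :
    Continuous fun p : (Fin n → ℝ) × (Fin m → ℝ) => beval f p.1 p.2 := by
  refine (MvPolynomial.continuous_eval f).comp (continuous_pi ?_)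
  rintro (i | j)
  · exact (continuous_apply i).comp continuous_fst
  · exact (continuous_apply j).comp continuous_snd

variable {σ₁ : Measure (Fin n → ℝ)} {σ₂ : Measure (Fin m → ℝ)}

theorem integral_integral_eq (h₁ : IsSphereMeasure n σ₁) (h₂ : IsSphereMeasure m σ₂)
    {g : (Fin n → ℝ) × (Fin m → ℝ) → ℝ} (hg : Continuous g) :
    ∫ x, ∫ y, g (x, y) ∂σ₂ ∂σ₁ = ∫ p, g p ∂σ₁.prod σ₂ := by
  have := h₁.prob
  have := h₂.prob
  exact (integral_prod g (h₁.integrable_prod h₂ hg)).symm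

theorem bavg_eq (h₁ : IsSphereMeasure n σ₁) (h₂ : IsSphereMeasure m σ₂)
    (f : MvPolynomial (Fin n ⊕ Fin m) ℝ) :
    bavg σ₁ σ₂ f = ∫ p, beval f p.1 p.2 ∂σ₁.prod σ₂ :=
  integral_integral_eq h₁ h₂ (continuous_beval f)

theorem bavg_add (h₁ : IsSphereMeasure n σ₁) (h₂ : IsSphereMeasure m σ₂)
    (f g : MvPolynomial (Fin n ⊕ Fin m) ℝ) :
    bavg σ₁ σ₂ (f + g) = bavg σ₁ σ₂ f + bavg σ₁ σ₂ g := by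
  simp only [bavg_eq h₁ h₂, beval_add]
  exact integral_add (h₁.integrable_prod h₂ (by fun_prop)) (h₁.integrable_prod h₂ (by fun_prop))

theorem bip_eq (h₁ : IsSphereMeasure n σ₁) (h₂ : IsSphereMeasure m σ₂)
    (f g : MvPolynomial (Fin n ⊕ Fin m) ℝ) :
    bip σ₁ σ₂ f g = ∫ p, beval f p.1 p.2 * beval g p.1 p.2 ∂σ₁.prod σ₂ :=
  integral_integral_eq h₁ h₂ (g := fun p => beval f p.1 p.2 * beval g p.1 p.2) (by fun_prop)

theorem exists_bilinForm_eq_bip (h₁ : IsSphereMeasure n σ₁) (h₂ : IsSphereMeasure m σ₂) :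
    ∃ B : MvPolynomial (Fin n ⊕ Fin m) ℝ →ₗ[ℝ] MvPolynomial (Fin n ⊕ Fin m) ℝ →ₗ[ℝ] ℝ,
      ∀ f g, B f g = bip σ₁ σ₂ f g := by
  refine ⟨LinearMap.mk₂ ℝ (bip σ₁ σ₂) ?_ ?_ ?_ ?_, fun f g => rfl⟩
  · intro f f' g
    simp only [bip_eq h₁ h₂, beval_add, add_mul]
    exact integral_add (h₁.integrable_prod h₂ (by fun_prop)) (h₁.integrable_prod h₂ (by fun_prop))
  · intro c f g
    simp only [bip_eq h₁ h₂, beval_smul, mul_assoc, integral_const_mul, smul_eq_mul]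
  · intro f g g'
    simp only [bip_eq h₁ h₂, beval_add, mul_add]
    exact integral_add (h₁.integrable_prod h₂ (by fun_prop)) (h₁.integrable_prod h₂ (by fun_prop))
  · intro c f g
    simp only [bip_eq h₁ h₂, beval_smul, mul_left_comm, integral_const_mul, smul_eq_mul]

theorem sum_dotProduct_columns (R : Fin n × Fin m → ℝ) :
    ∑ q, (fun p => R (p, q)) ⬝ᵥ (fun p => R (p, q)) = ∑ p, R p ^ 2 := by
  rw [Fintype.sum_prod_type, Finset.sum_comm]
  simp only [dotProduct, sq]

theorem integral_beval_bilin_sq (h₁ : IsSphereMeasure n σ₁) (h₂ : IsSphereMeasure m σ₂)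
    (hn : 0 < n) (hm : 0 < m) (R : Fin n × Fin m → ℝ) :
    ∫ p, beval (bilin n m R) p.1 p.2 ^ 2 ∂σ₁.prod σ₂ = (∑ p, R p ^ 2) / (n * m) := by
  rw [← integral_integral_eq h₁ h₂ (by fun_prop)]
  simp only [beval_bilin_eq_dotProduct, h₂.integral_dotProduct_sq hm]
  rw [integral_div]
  conv_lhs => enter [1, 2, x]; rw [dotProduct]
  rw [integral_finsetSum _ fun q _ => h₁.integrable (by simp only [dotProduct]; fun_prop)]
  simp only [← sq, h₁.integral_dotProduct_sq hn]
  rw [← Finset.sum_div, sum_dotProduct_columns, div_div]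

theorem integral_beval_bilin_pow_four_le (h₁ : IsSphereMeasure n σ₁) (h₂ : IsSphereMeasure m σ₂)
    (hn : 0 < n) (hm : 0 < m) (R : Fin n × Fin m → ℝ) :
    ∫ p, beval (bilin n m R) p.1 p.2 ^ 4 ∂σ₁.prod σ₂ ≤
      9 * ((∑ p, R p ^ 2) / (n * m)) ^ 2 := by
  obtain ⟨κ₁, h10, h1le, -, h1⟩ := h₁.exists_fourth_moment hn
  obtain ⟨κ₂, h20, h2le, h2, -⟩ := h₂.exists_fourth_moment hm
  rw [← integral_integral_eq h₁ h₂ (by fun_prop)]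
  simp only [beval_bilin_eq_dotProduct, h2]
  rw [integral_const_mul]
  have hI : ∫ x, ((fun q => (fun p => R (p, q)) ⬝ᵥ x) ⬝ᵥ
      (fun q => (fun p => R (p, q)) ⬝ᵥ x)) ^ 2 ∂σ₁ ≤ κ₁ * (∑ p, R p ^ 2) ^ 2 := by
    have e : ∀ x : Fin n → ℝ, ((fun q => (fun p => R (p, q)) ⬝ᵥ x) ⬝ᵥ
        (fun q => (fun p => R (p, q)) ⬝ᵥ x)) ^ 2 =
        ∑ q, ∑ q', ((fun p => R (p, q)) ⬝ᵥ x) ^ 2 * ((fun p => R (p, q')) ⬝ᵥ x) ^ 2 := fun x => by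
      rw [sq, dotProduct, Finset.sum_mul_sum]
      simp only [sq]
    simp only [e]
    rw [integral_finsetSum _ fun q _ => h₁.integrable (by simp only [dotProduct]; fun_prop)]
    rw [← sum_dotProduct_columns, sq, Finset.sum_mul_sum, Finset.mul_sum]
    refine Finset.sum_le_sum fun q _ => ?_
    rw [integral_finsetSum _ fun q _ => h₁.integrable (by simp only [dotProduct]; fun_prop),
      Finset.mul_sum]
    exact Finset.sum_le_sum fun q' _ => h1 _ _
  calc _ ≤ κ₂ * (κ₁ * (∑ p, R p ^ 2) ^ 2) := mul_le_mul_of_nonneg_left hI h20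
    _ ≤ (3 / (m : ℝ) ^ 2) * ((3 / (n : ℝ) ^ 2) * (∑ p, R p ^ 2) ^ 2) := by gcongr
    _ = _ := by field_simp; ring

theorem bip_bilin_mul_self_le (h₁ : IsSphereMeasure n σ₁) (h₂ : IsSphereMeasure m σ₂)
    (hn : 0 < n) (hm : 0 < m) {R R' : Fin n × Fin m → ℝ} {t : ℝ}
    (hR : ∑ p, R p ^ 2 ≤ t * (n * m)) (hR' : ∑ p, R' p ^ 2 ≤ t * (n * m)) :
    bip σ₁ σ₂ (bilin n m R * bilin n m R') (bilin n m R * bilin n m R') ≤ 9 * t ^ 2 := by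
  have key : ∀ S : Fin n × Fin m → ℝ, ∑ p, S p ^ 2 ≤ t * (n * m) →
      ∫ p, beval (bilin n m S) p.1 p.2 ^ 4 ∂σ₁.prod σ₂ ≤ 9 * t ^ 2 := fun S hS => by
    refine (integral_beval_bilin_pow_four_le h₁ h₂ hn hm S).trans ?_
    have h0 : 0 ≤ ∑ p, S p ^ 2 := Finset.sum_nonneg fun _ _ => sq_nonneg _
    have : (∑ p, S p ^ 2) / (n * m) ≤ t := (div_le_iff₀ (by positivity)).2 hS
    gcongr
  have hle : bip σ₁ σ₂ (bilin n m R * bilin n m R') (bilin n m R * bilin n m R') ≤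
      ∫ p, (1 / 2 * beval (bilin n m R) p.1 p.2 ^ 4 +
        1 / 2 * beval (bilin n m R') p.1 p.2 ^ 4) ∂σ₁.prod σ₂ := by
    rw [bip_eq h₁ h₂]
    refine integral_mono (h₁.integrable_prod h₂ (by fun_prop))
      (h₁.integrable_prod h₂ (by fun_prop)) fun p => ?_
    simp only [beval_mul]
    nlinarith [sq_nonneg (beval (bilin n m R) p.1 p.2 ^ 2 - beval (bilin n m R') p.1 p.2 ^ 2)]
  rw [integral_add (h₁.integrable_prod h₂ (by fun_prop)) (h₁.integrable_prod h₂ (by fun_prop)),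
    integral_const_mul, integral_const_mul] at hle
  linarith [key R hR, key R' hR']

theorem bavg_qpoly (h₁ : IsSphereMeasure n σ₁) (h₂ : IsSphereMeasure m σ₂) :
    bavg σ₁ σ₂ (qpoly n m 1 1) = 1 := by
  have := h₁.prob
  have := h₂.prob
  have e : ∀ x y, beval (qpoly n m 1 1) x y = (∑ i, x i ^ 2) * ∑ j, y j ^ 2 := fun x y => by
    simp [beval, qpoly]
  simp only [bavg, e]
  rw [integral_congr_ae (g := fun _ => 1) (h₁.ae_mem.mono fun x hx => ?_)]
  · simp
  · have hx' : ∑ i, x i ^ 2 = 1 := hx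
    simp only [hx', one_mul]
    rw [integral_congr_ae (g := fun _ => 1) (h₂.ae_mem.mono fun y hy => hy)]
    simp

/-- The finite set of products of two biforms of bidegree `(1, 1)` with coefficients in the
lattice ball. -/
def latticeProducts (n m : ℕ) : Set (MvPolynomial (Fin n ⊕ Fin m) ℝ) :=
  {f | ∃ u ∈ latticeBall (Fin n × Fin m), ∃ v ∈ latticeBall (Fin n × Fin m),
    f = bilin n m (fun p => (u p : ℝ)) * bilin n m (fun p => (v p : ℝ))}

theorem bip_self_le_of_mem_latticeProducts (h₁ : IsSphereMeasure n σ₁)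
    (h₂ : IsSphereMeasure m σ₂) (hn : 0 < n) (hm : 0 < m) :
    ∀ f ∈ latticeProducts n m, bip σ₁ σ₂ f f ≤ 144 := by
  rintro f ⟨u, hu, v, hv, rfl⟩
  have key : ∀ u ∈ latticeBall (Fin n × Fin m), ∑ p, (u p : ℝ) ^ 2 ≤ 4 * (n * m) := fun u hu => by
    rw [mem_latticeBall] at hu
    simp only [Fintype.card_prod, Fintype.card_fin] at hu
    exact_mod_cast hu
  exact (bip_bilin_mul_self_le h₁ h₂ hn hm (key u hu) (key v hv)).trans (by norm_num)

theorem sum_sq_bilin_mem_convexHull (h₁ : IsSphereMeasure n σ₁) (h₂ : IsSphereMeasure m σ₂)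
    (hn : 0 < n) (hm : 0 < m) {ι : Type*} [Fintype ι] (R : ι → Fin n × Fin m → ℝ)
    (h : bavg σ₁ σ₂ (∑ s, bilin n m (R s) ^ 2) = 1) :
    ∑ s, bilin n m (R s) ^ 2 ∈ convexHull ℝ (latticeProducts n m) := by
  have hd : (0 : ℝ) < n * m := by positivity
  set w : ι → ℝ := fun s => (∑ p, R s p ^ 2) / (n * m) with hw
  have hw0 : ∀ s, 0 ≤ w s := fun s =>
    div_nonneg (Finset.sum_nonneg fun _ _ => sq_nonneg _) hd.le
  have hw1 : ∑ s, w s = 1 := by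
    rw [← h, bavg_eq h₁ h₂]
    have : ∀ x y, beval (∑ s, bilin n m (R s) ^ 2) x y = ∑ s, beval (bilin n m (R s)) x y ^ 2 :=
      fun x y => by simp [beval]
    simp only [this]
    rw [integral_finsetSum _ fun s _ => h₁.integrable_prod h₂ (by fun_prop)]
    exact Finset.sum_congr rfl fun s _ => (integral_beval_bilin_sq h₁ h₂ hn hm (R s)).symm
  set S : ι → Fin n × Fin m → ℝ := fun s => (√(w s))⁻¹ • R s with hS
  have hterm : ∀ s, bilin n m (R s) ^ 2 = w s • (bilin n m (S s) * bilin n m (S s)) := fun s => by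
    rcases (hw0 s).eq_or_lt with h0 | h0
    · have hz : ∑ p, R s p ^ 2 = 0 := by
        rcases div_eq_zero_iff.1 h0.symm with h | h
        · exact h
        · exact absurd h hd.ne'
      have hR0 : R s = 0 := by
        rw [Finset.sum_eq_zero_iff_of_nonneg fun _ _ => sq_nonneg _] at hz
        exact funext fun p => pow_eq_zero_iff two_ne_zero |>.1 (hz p (Finset.mem_univ p))
      simp [hS, hR0]
    · simp only [hS, map_smul, smul_mul_smul_comm, smul_smul]
      rw [← mul_inv, Real.mul_self_sqrt h0.le, mul_inv_cancel₀ h0.ne', one_smul, sq]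
  have hnorm : ∀ s, ∑ p, S s p ^ 2 ≤ Fintype.card (Fin n × Fin m) := fun s => by
    simp only [hS, Pi.smul_apply, smul_eq_mul, mul_pow, inv_pow, Real.sq_sqrt (hw0 s)]
    rw [← Finset.mul_sum]
    have e : ∑ p, R s p ^ 2 = w s * (n * m) := by rw [hw]; field_simp
    rw [e, ← mul_assoc, Fintype.card_prod, Fintype.card_fin, Fintype.card_fin, Nat.cast_mul]
    exact mul_le_of_le_one_left hd.le (inv_mul_le_one)
  simp only [hterm]
  refine (convex_convexHull ℝ _).sum_mem (fun s _ => hw0 s) hw1 fun s _ => ?_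
  refine map_mem_convexHull ((LinearMap.mul ℝ _).compl₁₂ (bilin n m) (bilin n m)) ?_
    (mem_convexHull_latticeBall _ (hnorm s)) (mem_convexHull_latticeBall _ (hnorm s))
  rintro _ ⟨u, hu, rfl⟩ _ ⟨v, hv, rfl⟩
  exact ⟨u, hu, v, hv, rfl⟩

/-- Entropy bound for sets of polynomials of the form (sum of squares of biforms of bidegree
`(1, 1)` with average one) minus a fixed polynomial. -/
theorem volume_le_of_sum_sq (h₁ : IsSphereMeasure n σ₁) (h₂ : IsSphereMeasure m σ₂)
    (hn : 0 < n) (hm : 0 < m) {D : ℕ} (ψ : (Fin D → ℝ) →ₗ[ℝ] MvPolynomial (Fin n ⊕ Fin m) ℝ)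
    (hψ : ∀ a b : Fin D → ℝ, bip σ₁ σ₂ (ψ a) (ψ b) = ∑ i, a i * b i)
    (g : MvPolynomial (Fin n ⊕ Fin m) ℝ) {K : Set (Fin D → ℝ)}
    (hK : ∀ a ∈ K, ψ a + g ∈ convexHull ℝ (latticeProducts n m)) (k : ℕ) (hk : 0 < k) :
    volume K ≤ ENNReal.ofReal (12 ^ (2 * (n * m) * k) * (24 / √k) ^ D) *
      volume {a : Fin D → ℝ | ∑ i, a i ^ 2 ≤ 1} := by
  obtain ⟨B, hB⟩ := exists_bilinForm_eq_bip h₁ h₂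
  have hsymm : ∀ f g, B f g = B g f := fun f g => by simp only [hB, bip, mul_comm]
  have hpos : ∀ f, 0 ≤ B f f := fun f => by
    rw [hB, bip]
    exact integral_nonneg fun x => integral_nonneg fun y => mul_self_nonneg _
  have hS : ∀ f ∈ latticeProducts n m, B f f ≤ 144 := fun f hf => by
    rw [hB]; exact bip_self_le_of_mem_latticeProducts h₁ h₂ hn hm f hf
  let U := latticeBall (Fin n × Fin m)
  let τ : Finset (Fin k → (Fin n × Fin m → ℤ) × (Fin n × Fin m → ℤ)) :=
    Fintype.piFinset fun _ => U ×ˢ U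
  let ctr : (Fin k → (Fin n × Fin m → ℤ) × (Fin n × Fin m → ℤ)) →
      MvPolynomial (Fin n ⊕ Fin m) ℝ := fun t =>
    ∑ j, bilin n m (fun p => ((t j).1 p : ℝ)) * bilin n m (fun p => ((t j).2 p : ℝ))
  have hk' : (0 : ℝ) < k := by exact_mod_cast hk
  have hcover := volume_le_of_cover (K := K) τ (24 / √k) (by positivity)
    (fun t => {a | B (ctr t - (k : ℝ) • (ψ a + g)) (ctr t - (k : ℝ) • (ψ a + g)) ≤ k * 144})
    (fun a ha => ?_) fun t _ a ha b hb => ?_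
  · refine hcover.trans (mul_le_mul_left (ENNReal.ofReal_le_ofReal ?_) _)
    refine mul_le_mul_of_nonneg_right ?_ (by positivity)
    have hU : U.card ≤ 12 ^ (n * m) := by
      simpa using card_latticeBall_le (Fin n × Fin m)
    have : τ.card ≤ 12 ^ (2 * (n * m) * k) := by
      simp only [τ, Fintype.card_piFinset, Finset.card_product, Finset.prod_const,
        Finset.card_univ, Fintype.card_fin]
      calc (U.card * U.card) ^ k ≤ (12 ^ (n * m) * 12 ^ (n * m)) ^ k := by gcongr
        _ = _ := by rw [← pow_add, ← pow_mul, two_mul]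
    exact_mod_cast this
  · obtain ⟨s, hs, hle⟩ := exists_sum_sub_le B hsymm hpos hS (hK a ha) k
    choose u hu v hv huv using hs
    refine ⟨fun j => (u j, v j), ?_, ?_⟩
    · simp only [τ, Fintype.mem_piFinset, Finset.mem_product]
      exact fun j => ⟨hu j, hv j⟩
    · simp only [Set.mem_ofPred_eq, ctr, ← huv]
      exact hle
  · have h1 := apply_sub_le_of_apply_sub_le B hpos ha hb
    rw [← smul_sub, add_sub_add_right_eq_sub, ← map_sub] at h1
    simp only [map_smul, LinearMap.smul_apply, smul_eq_mul, hB, hψ, ← sq, Pi.sub_apply] at h1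
    rw [div_pow, Real.sq_sqrt hk'.le, le_div_iff₀ hk']
    nlinarith

theorem volume_le_of_sum_sq' (h₁ : IsSphereMeasure n σ₁) (h₂ : IsSphereMeasure m σ₂)
    (hn : 0 < n) (hm : 0 < m) {D : ℕ} (ψ : (Fin D → ℝ) →ₗ[ℝ] MvPolynomial (Fin n ⊕ Fin m) ℝ)
    (hψ : ∀ a b : Fin D → ℝ, bip σ₁ σ₂ (ψ a) (ψ b) = ∑ i, a i * b i)
    (g : MvPolynomial (Fin n ⊕ Fin m) ℝ) {K : Set (Fin D → ℝ)}
    (hK : ∀ a ∈ K, ψ a + g ∈ convexHull ℝ (latticeProducts n m)) :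
    volume K ≤ ENNReal.ofReal (24 ^ D) * volume {a : Fin D → ℝ | ∑ i, a i ^ 2 ≤ 1} := by
  obtain ⟨B, hB⟩ := exists_bilinForm_eq_bip h₁ h₂
  have hsymm : ∀ f g, B f g = B g f := fun f g => by simp only [hB, bip, mul_comm]
  have hpos : ∀ f, 0 ≤ B f f := fun f => by
    rw [hB, bip]
    exact integral_nonneg fun x => integral_nonneg fun y => mul_self_nonneg _
  have hS : ∀ f ∈ latticeProducts n m, B f f ≤ 144 := fun f hf => by
    rw [hB]; exact bip_self_le_of_mem_latticeProducts h₁ h₂ hn hm f hf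
  have hcover := volume_le_of_cover (K := K) {()} 24 (by norm_num) (fun _ => K)
    (fun a ha => ⟨(), by simp, ha⟩) fun _ _ a ha b hb => ?_
  · simpa using hcover
  · have h1 := apply_sub_le_of_apply_sub_le B hpos (c := 0) (ρ := 144) (x := ψ a + g) (y := ψ b + g)
      (by simpa only [zero_sub, map_neg, LinearMap.neg_apply, neg_neg] using
        le_of_mem_convexHull B hsymm hpos hS (hK a ha))
      (by simpa only [zero_sub, map_neg, LinearMap.neg_apply, neg_neg] using
        le_of_mem_convexHull B hsymm hpos hS (hK b hb))
    rw [add_sub_add_right_eq_sub, ← map_sub] at h1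
    simp only [hB, hψ, ← sq, Pi.sub_apply] at h1
    linarith

end BiformPaper

namespace BiformPaper

variable {n m : ℕ}

theorem eval_map_algebraMap {s : Type*} (f : MvPolynomial s ℝ) (v : s → ℝ) :
    eval (fun i => (v i : ℂ)) (MvPolynomial.map (algebraMap ℝ ℂ) f) = ((eval v f : ℝ) : ℂ) := by
  rw [eval_map]
  exact (eval₂_comp_left (algebraMap ℝ ℂ) (RingHom.id ℝ) v f).symm

theorem beval_bilin_single (p : Fin n) (q : Fin m) (x y) :
    beval (bilin n m (Pi.single (p, q) 1)) x y = x p * y q := by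
  simp [bilin, Fintype.linearCombination_apply_single, beval]

theorem exists_bilin_eq_re (b : Fin n → Fin m → ℂ) :
    ∃ R : Fin (2 * n) × Fin (2 * m) → ℝ, ∀ x y, beval (bilin (2 * n) (2 * m) R) x y =
      (eval (fun i => ((Sum.elim x y i : ℝ) : ℂ))
        (∑ i, ∑ j, C (b i j) * Zv n m i * Wv n m j)).re := by
  refine ⟨∑ i : Fin n, ∑ j : Fin m,
    ((b i j).re • (Pi.single (⟨i.1, by omega⟩, ⟨j.1, by omega⟩) 1 -
        Pi.single (⟨n + i.1, by omega⟩, ⟨m + j.1, by omega⟩) 1) -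
      (b i j).im • (Pi.single (⟨i.1, by omega⟩, ⟨m + j.1, by omega⟩) 1 +
        Pi.single (⟨n + i.1, by omega⟩, ⟨j.1, by omega⟩) 1)), fun x y => ?_⟩
  have hb := fun p q => beval_bilin_single (n := 2 * n) (m := 2 * m) p q x y
  simp only [beval] at hb
  simp only [map_sum, Complex.re_sum, beval, map_sub, map_add, map_smul, smul_eval, hb]
  refine Finset.sum_congr rfl fun i _ => Finset.sum_congr rfl fun j _ => ?_
  simp [Zv, Wv, zRe, zIm, wRe, wIm]
  ring

theorem exists_bilin_eq_im (b : Fin n → Fin m → ℂ) :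
    ∃ R : Fin (2 * n) × Fin (2 * m) → ℝ, ∀ x y, beval (bilin (2 * n) (2 * m) R) x y =
      (eval (fun i => ((Sum.elim x y i : ℝ) : ℂ))
        (∑ i, ∑ j, C (b i j) * Zv n m i * Wv n m j)).im := by
  obtain ⟨R, hR⟩ := exists_bilin_eq_re fun i j => -Complex.I * b i j
  refine ⟨R, fun x y => ?_⟩
  rw [hR]
  have : ∑ i, ∑ j, C (-Complex.I * b i j) * Zv n m i * Wv n m j =
      C (-Complex.I) * ∑ i, ∑ j, C (b i j) * Zv n m i * Wv n m j := by
    simp only [Finset.mul_sum, map_mul, mul_assoc]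
  rw [this, map_mul, eval_C]
  simp

theorem exists_sum_sq_of_mem_SqCF {isR : Bool} {f : MvPolynomial (Fin (2 * n) ⊕ Fin (2 * m)) ℝ}
    (hf : f ∈ SqCF n m isR) :
    ∃ (N : ℕ) (R : Fin N ⊕ Fin N → Fin (2 * n) × Fin (2 * m) → ℝ),
      f = ∑ s, bilin (2 * n) (2 * m) (R s) ^ 2 := by
  obtain ⟨N, b, -, hb⟩ := hf
  choose R hR using fun r => exists_bilin_eq_re (b r)
  choose I hI using fun r => exists_bilin_eq_im (b r)
  refine ⟨N, Sum.elim R I, MvPolynomial.funext fun v => ?_⟩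
  obtain ⟨x, y, rfl⟩ : ∃ x y, v = Sum.elim x y := ⟨_, _, (Sum.elim_comp_inl_inr v).symm⟩
  have h := congrArg (eval fun i => ((Sum.elim x y i : ℝ) : ℂ)) hb
  have hconj : ∀ r, eval (fun i => ((Sum.elim x y i : ℝ) : ℂ))
      (∑ i, ∑ j, C ((starRingEnd ℂ) (b r i j)) * Zc n m i * Wc n m j) =
      (starRingEnd ℂ) (eval (fun i => ((Sum.elim x y i : ℝ) : ℂ))
        (∑ i, ∑ j, C (b r i j) * Zv n m i * Wv n m j)) := fun r => by
    simp only [map_sum, map_mul, eval_C]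
    simp [Zc, Wc, Zv, Wv, zRe, zIm, wRe, wIm, sub_eq_add_neg]
  rw [eval_map_algebraMap, map_sum] at h
  simp only [map_mul, hconj] at h
  simp only [← Complex.normSq_eq_conj_mul_self] at h
  rw [← Complex.ofReal_sum] at h
  rw [Complex.ofReal_injective h, map_sum, Fintype.sum_sum_type, ← Finset.sum_add_distrib]
  refine Finset.sum_congr rfl fun r _ => ?_
  have h1 := hR r x y
  have h2 := hI r x y
  simp only [beval] at h1 h2
  simp only [Sum.elim_inl, Sum.elim_inr, map_pow, h1, h2, Complex.normSq_apply]
  ring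

theorem sq_le_two_mul_DCF (isR : Bool) (n m : ℕ) (h : 2 ≤ n * m) :
    (n * m) ^ 2 ≤ 2 * DCF n m isR := by
  cases isR
  · simp only [DCF, Bool.false_eq_true, if_false, ← mul_pow]
    generalize n * m = N at *
    have : 2 * 2 ≤ N ^ 2 := by nlinarith
    omega
  · simp only [DCF, if_true]
    generalize n * m = N at *
    obtain ⟨t, ht⟩ := (Nat.even_mul_succ_self N).two_dvd
    have : N * (N + 1) = N ^ 2 + N := by ring
    rw [show N * (N + 1) / 2 = t by omega]
    omega

theorem le_two_rpow_mul (isR : Bool) {c N : ℝ} (hN : 1 < N)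
    (hc : c ^ 2 * N ≤ 3 * 2 ^ 20) :
    c ≤ (2 : ℝ) ^ ((10 : ℝ) + (3 - (if isR then (1 : ℝ) else 2)) / 2) *
        Real.sqrt 3 * (N - 1) ^ (-(1 : ℝ) / 2) := by
  have h1 : (2 : ℝ) ^ 10 ≤ (2 : ℝ) ^ ((10 : ℝ) + (3 - (if isR then (1 : ℝ) else 2)) / 2) := by
    rw [← Real.rpow_natCast]
    refine Real.rpow_le_rpow_of_exponent_le (by norm_num) ?_
    cases isR <;> norm_num
  have h2 : (N - 1) ^ (-(1 : ℝ) / 2) = (√(N - 1))⁻¹ := by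
    rw [neg_div, Real.rpow_neg (by linarith), Real.sqrt_eq_rpow]
  have h3 : 0 < √(N - 1) := Real.sqrt_pos.2 (by linarith)
  rw [h2]
  refine le_trans ?_ (mul_le_mul_of_nonneg_right
    (mul_le_mul_of_nonneg_right h1 (Real.sqrt_nonneg 3)) (inv_nonneg.2 h3.le))
  rw [← div_eq_mul_inv, le_div_iff₀ h3]
  refine abs_le_of_sq_le_sq' ?_ (by positivity) |>.2
  rw [mul_pow, mul_pow, Real.sq_sqrt (by linarith), Real.sq_sqrt (by norm_num)]
  nlinarith [sq_nonneg c]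

theorem ratio_rpow_le {V W : ENNReal} {D : ℕ} (hD : 0 < D) {c t : ℝ} (hc : 0 ≤ c)
    (h : V ≤ ENNReal.ofReal t * W) (ht : t ≤ c ^ D) :
    (V / W) ^ ((1 : ℝ) / (D : ℝ)) ≤ ENNReal.ofReal c := by
  have h1 : V / W ≤ ENNReal.ofReal (c ^ D) :=
    (ENNReal.div_le_of_le_mul h).trans (ENNReal.ofReal_le_ofReal ht)
  refine (ENNReal.rpow_le_rpow h1 (by positivity)).trans_eq ?_
  rw [ENNReal.ofReal_rpow_of_nonneg (by positivity) (by positivity), one_div,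
    Real.pow_rpow_inv_natCast hc hD.ne']

end BiformPaper

open BiformPaper in
/-- **Theorem (upper bound for the volume of the section `S̃q_{𝒞_𝔽}`).**  For
`𝔽 ∈ {ℝ, ℂ}` (`isR = true` for `𝔽 = ℝ`, `isR = false` for `𝔽 = ℂ`) and integers
`n, m ≥ 2`:
`(Vol S̃q_{𝒞_𝔽} / Vol B_{𝓜_{𝒞_𝔽}})^{1/D} ≤ 2^{10+(3−dim_ℝ𝔽)/2}·√3·(nm−1)^{−1/2}`. -/
theorem statement7 (isR : Bool) (n m : ℕ) (hn : 2 ≤ n) (hm : 2 ≤ m)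
    (D : ℕ) (hD : D = DCF n m isR)
    (σ₁ : Measure (Fin (2 * n) → ℝ)) (σ₂ : Measure (Fin (2 * m) → ℝ))
    (hσ₁ : IsSphereMeasure (2 * n) σ₁) (hσ₂ : IsSphereMeasure (2 * m) σ₂)
    (ψ : (Fin D → ℝ) →ₗ[ℝ] MvPolynomial (Fin (2 * n) ⊕ Fin (2 * m)) ℝ)
    (hψ : IsUnitaryParam (2 * n) (2 * m) D σ₁ σ₂ (MCF n m isR σ₁ σ₂) ψ) :
    (volume (⇑ψ ⁻¹' tildeCF n m isR σ₁ σ₂ (SqCF n m isR)) /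
        volume (⇑ψ ⁻¹' ballCF n m isR σ₁ σ₂)) ^ ((1 : ℝ) / (D : ℝ)) ≤
      ENNReal.ofReal ((2 : ℝ) ^ ((10 : ℝ) + (3 - (if isR then (1 : ℝ) else 2)) / 2) *
        Real.sqrt 3 * ((n : ℝ) * (m : ℝ) - 1) ^ (-(1 : ℝ) / 2)) := by
  have hn2 : 0 < 2 * n := by omega
  have hm2 : 0 < 2 * m := by omega
  have hN4 : 4 ≤ n * m := Nat.mul_le_mul hn hm
  have hDN : (n * m) ^ 2 ≤ 2 * D := hD ▸ sq_le_two_mul_DCF isR n m (by omega)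
  have hD0 : 0 < D := by nlinarith
  have hNR : (1 : ℝ) < (n : ℝ) * m := by exact_mod_cast (by omega : 1 < n * m)
  have hball : ψ ⁻¹' ballCF n m isR σ₁ σ₂ = {a | ∑ i, a i ^ 2 ≤ 1} := by
    ext a
    have hmem : ψ a ∈ MCF n m isR σ₁ σ₂ := hψ.range ▸ Set.mem_range_self a
    simp only [Set.mem_preimage, ballCF, Set.mem_ofPred_eq, hmem, true_and, hψ.ip, sq]
  have hK : ∀ a ∈ ψ ⁻¹' tildeCF n m isR σ₁ σ₂ (SqCF n m isR),
      ψ a + qpoly (2 * n) (2 * m) 1 1 ∈ convexHull ℝ (latticeProducts (2 * n) (2 * m)) := by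
    rintro a ⟨⟨-, ha⟩, hsq⟩
    obtain ⟨N, R, hR⟩ := exists_sum_sq_of_mem_SqCF hsq
    rw [hR]
    refine sum_sq_bilin_mem_convexHull hσ₁ hσ₂ hn2 hm2 R ?_
    rw [← hR, bavg_add hσ₁ hσ₂, ha, bavg_qpoly hσ₁ hσ₂, zero_add]
  rw [hball]
  rcases lt_or_ge (n * m) 16 with hlt | hge
  · refine (ratio_rpow_le hD0 (by norm_num)
      (volume_le_of_sum_sq' hσ₁ hσ₂ hn2 hm2 ψ hψ.ip _ hK) le_rfl).trans
      (ENNReal.ofReal_le_ofReal (le_two_rpow_mul isR hNR ?_))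
    have : (n : ℝ) * m < 16 := by exact_mod_cast hlt
    linarith
  · obtain ⟨k, hk⟩ : ∃ k, k = n * m / 16 := ⟨_, rfl⟩
    have hk0 : 0 < k := by omega
    have hkR : (0 : ℝ) < k := by exact_mod_cast hk0
    refine (ratio_rpow_le (c := 12 * (24 / √k)) hD0 (by positivity)
      (volume_le_of_sum_sq hσ₁ hσ₂ hn2 hm2 ψ hψ.ip _ hK k hk0) ?_).trans
      (ENNReal.ofReal_le_ofReal (le_two_rpow_mul isR hNR ?_))
    · rw [mul_pow]
      refine mul_le_mul_of_nonneg_right (pow_le_pow_right₀ (by norm_num) ?_) (by positivity)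
      have h1 : 16 * k ≤ n * m := by omega
      have h2 := Nat.mul_le_mul_left (n * m) h1
      nlinarith
    · have h1 : (n : ℝ) * m ≤ 32 * k := by exact_mod_cast (by omega : n * m ≤ 32 * k)
      rw [mul_pow, div_pow, Real.sq_sqrt hkR.le, ← mul_div_assoc, div_mul_eq_mul_div,
        div_le_iff₀ hkR]
      nlinarith
end
end
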